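/- Fix n ≥ 2. Let F ∈ ℤ[Y,X₁,…,Xₙ] be monic in Y with deg_Y F ≥ 2, and suppose F is an n-genuine polynomial that is not a strongly n-genuine polynomial. Then there exists an integer e(n) ≥ 1 depending only on n, and a constant C depending only on n and deg F, such that N(F,B) ≤ C · (log(‖F‖+2))^{e(n)} · B^{n−1} · (log(B+2))^{2e(n)} for all real B ≥ 1. -/

import Mathlib

open Polynomial

noncomputable section

/-- The rational function field `ℚ(X₁,…,Xₙ)`. -/
abbrev RF (n : ℕ) := FractionRing (MvPolynomial (Fin n) ℚ)

/-- Base change a polynomial `F ∈ ℤ[Y,X₁,…,Xₙ]` (written as a polynomial in `Y`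
with coefficients in `ℤ[X₁,…,Xₙ]`) to `ℚ[Y,X₁,…,Xₙ]`. -/
def toQ {n : ℕ} (F : Polynomial (MvPolynomial (Fin n) ℤ)) :
    Polynomial (MvPolynomial (Fin n) ℚ) :=
  F.map (MvPolynomial.map (Int.castRingHom ℚ))

/-- View a polynomial in `ℚ[X][Y]` as a polynomial in `ℚ(X)[Y]`. -/
def toFracQ {n : ℕ} (F : Polynomial (MvPolynomial (Fin n) ℚ)) : Polynomial (RF n) :=
  F.map (algebraMap (MvPolynomial (Fin n) ℚ) (RF n))

/-- View a polynomial in `ℤ[X][Y]` as a polynomial in `ℚ(X)[Y]`. -/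
def toFrac {n : ℕ} (F : Polynomial (MvPolynomial (Fin n) ℤ)) : Polynomial (RF n) :=
  toFracQ (toQ F)

/-- The degree of `F(Y,X)` in the variable `Xᵢ`. -/
def degX {n : ℕ} {R : Type*} [CommSemiring R]
    (F : Polynomial (MvPolynomial (Fin n) R)) (i : Fin n) : ℕ :=
  F.support.sup fun k => (F.coeff k).degreeOf i

/-- The total degree of `F(Y,X₁,…,Xₙ)` as a polynomial in `n+1` variables. -/
def totalDeg {n : ℕ} {R : Type*} [CommSemiring R]
    (F : Polynomial (MvPolynomial (Fin n) R)) : ℕ :=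
  F.support.sup fun k => k + (F.coeff k).totalDegree

/-- `‖g‖`: the maximum absolute value of a coefficient of `g ∈ ℤ[X₁,…,Xₙ]`. -/
def mvNorm {n : ℕ} (g : MvPolynomial (Fin n) ℤ) : ℕ :=
  g.support.sup fun m => (g.coeff m).natAbs

/-- `‖F‖`: the maximum absolute value of a coefficient of `F ∈ ℤ[Y,X₁,…,Xₙ]`. -/
def polyNorm {n : ℕ} (F : Polynomial (MvPolynomial (Fin n) ℤ)) : ℕ :=
  F.support.sup fun k => mvNorm (F.coeff k)

/-- The counting function
`N(F,B) = #{x ∈ ℤⁿ ∩ [−B,B]ⁿ : ∃ y ∈ ℤ, F(y,x) = 0}`. -/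
def NFB {n : ℕ} (F : Polynomial (MvPolynomial (Fin n) ℤ)) (B : ℝ) : ℕ :=
  Set.ncard {x : Fin n → ℤ | (∀ i, |(x i : ℝ)| ≤ B) ∧
    ∃ y : ℤ, Polynomial.eval y (F.map (MvPolynomial.eval x)) = 0}

/-- `F ∈ ℤ[Y,X₁,…,Xₙ]` is absolutely irreducible: irreducible over `ℚ̄`. -/
def AbsIrred {n : ℕ} (F : Polynomial (MvPolynomial (Fin n) ℤ)) : Prop :=
  Irreducible (F.map (MvPolynomial.map (Int.castRingHom (AlgebraicClosure ℚ))))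

/-- `G` has positive degree in `Y` and in each variable `Xᵢ`. -/
def AllPosDeg {n : ℕ} (G : Polynomial (MvPolynomial (Fin n) ℤ)) : Prop :=
  0 < G.natDegree ∧ ∀ i : Fin n, 0 < degX G i

/-- A field extension `M` of `ℚ(X₁,…,Xₙ)` is an `n`-genuine extension: every
`G ∈ ℤ[Y,X₁,…,Xₙ]` irreducible over `ℚ(X)` with `M ≅ ℚ(X)[Y]/(G)` has positive
degree in each of `Y, X₁, …, Xₙ`. -/
def IsGenuineExt (n : ℕ) (M : Type*) [Field M] [Algebra (RF n) M] : Prop :=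
  ∀ G : Polynomial (MvPolynomial (Fin n) ℤ), Irreducible (toFrac G) →
    Nonempty (AdjoinRoot (toFrac G) ≃ₐ[RF n] M) → AllPosDeg G

/-- A field extension `M` of `ℚ(X₁,…,Xₙ)` is strongly `n`-genuine: every
intermediate field strictly containing `ℚ(X)` is `n`-genuine. -/
def IsStronglyGenuineExt (n : ℕ) (M : Type*) [Field M] [Algebra (RF n) M] : Prop :=
  ∀ M' : IntermediateField (RF n) M, M' ≠ ⊥ → IsGenuineExt n M'

/-- The extension `ℚ(X)[Y]/(Fq)` presented by `Fq ∈ ℚ[X][Y]` is `n`-genuine. -/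
def GenuineExtOfQ {n : ℕ} (Fq : Polynomial (MvPolynomial (Fin n) ℚ)) : Prop :=
  ∀ G : Polynomial (MvPolynomial (Fin n) ℤ), Irreducible (toFrac G) →
    Nonempty (AdjoinRoot (toFrac G) ≃ₐ[RF n] AdjoinRoot (toFracQ Fq)) → AllPosDeg G

/-- The extension `ℚ(X)[Y]/(Fq)` presented by `Fq ∈ ℚ[X][Y]` is strongly
`n`-genuine: for any field `M` isomorphic over `ℚ(X)` to `ℚ(X)[Y]/(Fq)`, every
intermediate field strictly containing `ℚ(X)` is `n`-genuine. -/
def StronglyGenuineExtOfQ {n : ℕ} (Fq : Polynomial (MvPolynomial (Fin n) ℚ)) : Prop :=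
  ∀ (M : Type) [Field M] [Algebra (RF n) M],
    Nonempty (AdjoinRoot (toFracQ Fq) ≃ₐ[RF n] M) → IsStronglyGenuineExt n M

/-- An absolutely irreducible `F ∈ ℤ[Y,X₁,…,Xₙ]` is an `n`-genuine polynomial. -/
def IsGenuinePoly {n : ℕ} (F : Polynomial (MvPolynomial (Fin n) ℤ)) : Prop :=
  AbsIrred F ∧ GenuineExtOfQ (toQ F)

/-- An absolutely irreducible `F ∈ ℤ[Y,X₁,…,Xₙ]` is a strongly `n`-genuine polynomial. -/
def IsStronglyGenuinePoly {n : ℕ} (F : Polynomial (MvPolynomial (Fin n) ℤ)) : Prop :=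
  AbsIrred F ∧ StronglyGenuineExtOfQ (toQ F)

/-- The ring map `ℚ[X₁,…,Xₙ] → ℚ[X₁,…,Xₙ]` induced by the linear substitution
`Xᵢ ↦ Σⱼ σᵢⱼ Xⱼ`. -/
def lsubMv {n : ℕ} (σ : Matrix (Fin n) (Fin n) ℚ) :
    MvPolynomial (Fin n) ℚ →+* MvPolynomial (Fin n) ℚ :=
  (MvPolynomial.aeval (R := ℚ)
    fun i => ∑ j, MvPolynomial.C (σ i j) * MvPolynomial.X j).toRingHom

/-- `F_σ(Y,X) := F(Y,σ(X))` for a linear change of variables `σ`. -/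
def applyGL {n : ℕ} (σ : Matrix (Fin n) (Fin n) ℚ)
    (Fq : Polynomial (MvPolynomial (Fin n) ℚ)) : Polynomial (MvPolynomial (Fin n) ℚ) :=
  Fq.map (lsubMv σ)

/-- `F` is `(1,n)`-allowable: absolutely irreducible, monic in `Y`, and
`ℚ(X)[Y]/(F_σ)` is an `n`-genuine extension for every `σ ∈ GLₙ(ℚ)`. -/
def IsAllowable {n : ℕ} (F : Polynomial (MvPolynomial (Fin n) ℤ)) : Prop :=
  AbsIrred F ∧ F.Monic ∧
    ∀ σ : Matrix (Fin n) (Fin n) ℚ, IsUnit σ.det → GenuineExtOfQ (applyGL σ (toQ F))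

/-- `F` is strongly `(1,n)`-allowable: absolutely irreducible, monic in `Y`, and
`ℚ(X)[Y]/(F_σ)` is a strongly `n`-genuine extension for every `σ ∈ GLₙ(ℚ)`. -/
def IsStronglyAllowable {n : ℕ} (F : Polynomial (MvPolynomial (Fin n) ℤ)) : Prop :=
  AbsIrred F ∧ F.Monic ∧
    ∀ σ : Matrix (Fin n) (Fin n) ℚ, IsUnit σ.det → StronglyGenuineExtOfQ (applyGL σ (toQ F))

/-- `F` has the form (1.2) with parameter `m`:
`F = Y^{md} + f₁(X) Y^{m(d-1)} + ⋯ + f_{d-1}(X) Y^m + f_d(X)` with `f_d ≠ 0`. -/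
def HasForm (n m : ℕ) (F : Polynomial (MvPolynomial (Fin n) ℤ)) : Prop :=
  ∃ (d : ℕ) (f : ℕ → MvPolynomial (Fin n) ℤ), 1 ≤ d ∧ f d ≠ 0 ∧
    F = Polynomial.X ^ (m * d) +
      ∑ j ∈ Finset.Icc 1 d, Polynomial.C (f j) * Polynomial.X ^ (m * (d - j))

/-- `P` has a linear factor in `Y`: `P = (Y − Q(X))·H̃(Y,X)`. -/
def HasLinearFactorY {n : ℕ} {R : Type*} [CommRing R]
    (P : Polynomial (MvPolynomial (Fin n) R)) : Prop :=
  ∃ (Q : MvPolynomial (Fin n) R) (H : Polynomial (MvPolynomial (Fin n) R)),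
    P = (Polynomial.X - Polynomial.C Q) * H

/-- The canonical map `ℚ[X₁,…,Xₙ] → ℚ(X)[Y]/(F)`. -/
def structMap {n : ℕ} (F : Polynomial (MvPolynomial (Fin n) ℤ)) :
    MvPolynomial (Fin n) ℚ →+* AdjoinRoot (toFrac F) :=
  (algebraMap (RF n) (AdjoinRoot (toFrac F))).comp
    (algebraMap (MvPolynomial (Fin n) ℚ) (RF n))

/-- `z ∈ ℚ(X)[Y]/(F)` lies in the subfield `ℚ((Xᵢ)_{i≠j})`: it can be written
as a quotient of two polynomials not involving `Xⱼ`. -/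
def CoordMem {n : ℕ} (j : Fin n) (F : Polynomial (MvPolynomial (Fin n) ℤ))
    (z : AdjoinRoot (toFrac F)) : Prop :=
  ∃ a b : MvPolynomial (Fin n) ℚ,
    MvPolynomial.degreeOf j a = 0 ∧ MvPolynomial.degreeOf j b = 0 ∧
    structMap F b ≠ 0 ∧ z * structMap F b = structMap F a

/-- `z ∈ ℚ(X)[Y]/(F)` is algebraic over the subfield `ℚ((Xᵢ)_{i≠j})`. -/
def AlgOverCoord {n : ℕ} (j : Fin n) (F : Polynomial (MvPolynomial (Fin n) ℤ))
    (z : AdjoinRoot (toFrac F)) : Prop :=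
  ∃ P : Polynomial (AdjoinRoot (toFrac F)), P ≠ 0 ∧ (∀ k, CoordMem j F (P.coeff k)) ∧
    Polynomial.eval z P = 0

/-- Substitute `Xᵢ = xᵢ` for `i ∈ I` into `F`, over `ℚ̄`. -/
def substSome {n : ℕ} (I : Finset (Fin n)) (x : Fin n → ℚ)
    (F : Polynomial (MvPolynomial (Fin n) ℤ)) :
    Polynomial (MvPolynomial (Fin n) (AlgebraicClosure ℚ)) :=
  (toQ F).map
    ((MvPolynomial.aeval (R := ℚ) fun i =>
      if i ∈ I then MvPolynomial.C (algebraMap ℚ (AlgebraicClosure ℚ) (x i))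
      else MvPolynomial.X i).toRingHom)

/-- Substitute `Xᵢ = xᵢ` for all `i ≠ i₀` into `F`, over `ℚ̄`. -/
def substKeepFirst {n : ℕ} (i0 : Fin n) (x : {i : Fin n // i ≠ i0} → ℤ)
    (F : Polynomial (MvPolynomial (Fin n) ℤ)) :
    Polynomial (MvPolynomial (Fin n) (AlgebraicClosure ℚ)) :=
  F.map
    ((MvPolynomial.aeval (R := ℤ) fun i =>
      if h : i = i0 then (MvPolynomial.X i : MvPolynomial (Fin n) (AlgebraicClosure ℚ))
      else MvPolynomial.C ((x ⟨i, h⟩ : ℤ) : AlgebraicClosure ℚ)).toRingHom)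

/-- `‖L‖`: maximum absolute value of an entry of an integer matrix. -/
def matNorm {n : ℕ} (L : Matrix (Fin n) (Fin n) ℤ) : ℕ :=
  Finset.univ.sup fun p : Fin n × Fin n => (L p.1 p.2).natAbs

/-- The standard additive character `e_p(a) = exp(2πi a/p)` on `ZMod p`. -/
def eZp (p : ℕ) (a : ZMod p) : ℂ :=
  Complex.exp (2 * Real.pi * Complex.I * (a.val : ℂ) / (p : ℂ))

/-!
Let `F` be genuine but not strongly genuine. Some intermediate field of `ℚ(X)[Y]/(F)` has a
generator whose polynomial does not involve one of the variables, say `Xᵢ`, and a coefficient of a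
factor of `F` provides an integral generator of bounded height. By Euler's trace formula an integer
root of `F(·, x)` forces an integer value of this generator unless the discriminant of `F` vanishes
at `x`. Specialising `Xᵢ`, one gets a monic `E(T, x')` in the coordinates `x'` other than `xᵢ`,
without polynomial roots, such that `E(·, x')` has an integer root for the projections `x'` of all
those `x`. In a box of size `N` in `m + 1` variables there are `O(N ^ (m - 1/2) log²)` such `x'`.
Above a generic `x'` the restriction of `F` to the line in direction `Xᵢ` has no polynomial root,
because `F` is genuine, so this line carries `O(√N log²)` of the points `x`. The exceptional points
are zeros of a nonzero polynomial of bounded degree, hence `O(N ^ m)` in number.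

Both counts rest on the case of one variable: a monic `f(x, Y)` without polynomial roots and with
nonzero discriminant has an integer root for only `O(√N log²)` integers `|x| ≤ N`. Take a prime `p`
of size about `√N` modulo which the discriminant does not vanish identically. In a residue class
modulo `p` where it is nonzero, the roots agree with a single Hensel branch modulo a high power of
`p`, and the pigeonhole principle yields a relation `A₀(x) + A₁(x) y = 0` of low degree between `x`
and the root `y`; it has few solutions because `-A₀ / A₁` is not a root of `f`. The bound in several
variables follows by induction, slicing the box into parallel lines.
-/

/-! ### Growth of integer polynomials -/

/-- The polynomial ring `ℤ[X₁,…,Xₙ]`, the integral counterpart of `RF n`. -/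
abbrev ZX (n : ℕ) := MvPolynomial (Fin n) ℤ

/-- The weight `∏ⱼ (1 + |xⱼ|)` of an integer point, against which the size of the values of a
polynomial is measured: it is multiplicative in the coordinates, so its powers control the degrees
in all the variables separately. -/
def coordWeight {n : ℕ} (x : Fin n → ℤ) : ℝ := ∏ j, (1 + |(x j : ℝ)|)

/-- `p` takes values of size at most `A (∏ⱼ (1 + |xⱼ|)) ^ a` at all integer points `x`. -/
def HasGrowth {n : ℕ} (p : ZX n) (A : ℝ) (a : ℕ) : Prop :=
  ∀ x, |((MvPolynomial.eval x p : ℤ) : ℝ)| ≤ A * coordWeight x ^ a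

section coordWeight

variable {m n : ℕ}

lemma one_le_coordWeight (x : Fin n → ℤ) : 1 ≤ coordWeight x :=
  Finset.one_le_prod fun j _ => le_add_of_nonneg_right (abs_nonneg (x j : ℝ))

lemma coordWeight_insertNth (i : Fin (m + 1)) (s : ℤ) (x : Fin m → ℤ) :
    coordWeight (i.insertNth s x : Fin (m + 1) → ℤ) = (1 + |(s : ℝ)|) * coordWeight x := by
  simp [coordWeight, Fin.prod_univ_succAbove _ i]

lemma coordWeight_eq_mul_removeNth (i : Fin (m + 1)) (x : Fin (m + 1) → ℤ) :
    coordWeight x = (1 + |(x i : ℝ)|) * coordWeight (i.removeNth x) := by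
  rw [← coordWeight_insertNth, Fin.insertNth_self_removeNth]

lemma coordWeight_removeNth_le (i : Fin (m + 1)) (x : Fin (m + 1) → ℤ) :
    coordWeight (i.removeNth x) ≤ coordWeight x := by
  rw [coordWeight_eq_mul_removeNth i]
  exact le_mul_of_one_le_left (zero_le_one.trans (one_le_coordWeight _))
    (le_add_of_nonneg_right (abs_nonneg _))

lemma coordWeight_le_pow {x : Fin n → ℤ} {N : ℝ} (h : ∀ j, |(x j : ℝ)| ≤ N) :
    coordWeight x ≤ (1 + N) ^ n := by
  calc coordWeight x ≤ ∏ _j : Fin n, (1 + N) :=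
        Finset.prod_le_prod (fun j _ => by positivity) fun j _ => by linarith [h j]
    _ = (1 + N) ^ n := by simp

lemma coordWeight_update_le (x : Fin n → ℤ) (j : Fin n) (s : ℤ) :
    coordWeight (Function.update x j s) ≤ coordWeight x * (1 + |(s : ℝ)|) := by
  obtain _ | m := n
  · exact j.elim0
  rw [← Fin.insertNth_removeNth, coordWeight_insertNth, mul_comm]
  gcongr
  exact coordWeight_removeNth_le j x

lemma HasGrowth.nonneg {p : ZX n} {A : ℝ} {a : ℕ} (h : HasGrowth p A a) :
    0 ≤ A :=
  nonneg_of_mul_nonneg_left ((abs_nonneg _).trans (h 0))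
    (pow_pos (zero_lt_one.trans_le (one_le_coordWeight 0)) a)

end coordWeight

lemma natDegree_le_of_abs_eval_le {g : ℤ[X]} {A : ℝ} {a : ℕ}
    (h : ∀ s : ℤ, |((g.eval s : ℤ) : ℝ)| ≤ A * (1 + |(s : ℝ)|) ^ a) : g.natDegree ≤ a := by
  by_contra! hlt
  have hg0 : g ≠ 0 := ne_zero_of_natDegree_gt hlt
  set G : ℝ[X] := g.map (Int.castRingHom ℝ)
  set Q : ℝ[X] := (X + C 1) ^ a
  have hQ0 : Q ≠ 0 := pow_ne_zero _ (X_add_C_ne_zero 1)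
  have hdeg : Q.degree < G.degree := by
    rw [degree_pow, degree_X_add_C, nsmul_one,
      degree_map_eq_of_injective (RingHom.injective_int _), degree_eq_natDegree hg0]
    exact_mod_cast hlt
  have hunbounded := (G.abs_div_tendsto_atTop_atTop_of_degree_gt Q hdeg hQ0).comp
    tendsto_natCast_atTop_atTop
  obtain ⟨k, hk⟩ := (hunbounded.eventually (Filter.eventually_gt_atTop A)).exists
  have hG : G.eval (k : ℝ) = ((g.eval (k : ℤ) : ℤ) : ℝ) := by
    simpa only [Int.cast_natCast, eq_intCast] using
      Polynomial.eval_intCast_map (Int.castRingHom ℝ) g (k : ℤ)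
  have hQ : Q.eval (k : ℝ) = (1 + |((k : ℤ) : ℝ)|) ^ a := by simp [Q, add_comm]
  rw [Function.comp_apply, hG, hQ, abs_div, abs_of_pos (a := _ ^ a) (by positivity),
    lt_div_iff₀ (by positivity)] at hk
  exact hk.not_ge (h k)

lemma exists_natDegree_eq_degreeOf {σ R : Type*} [DecidableEq σ] [CommRing R] [IsDomain R]
    [Infinite R] (p : MvPolynomial σ R) (j : σ) :
    ∃ (g : R[X]) (x : σ → R), g.natDegree = p.degreeOf j ∧
      ∀ s, g.eval s = MvPolynomial.eval (Function.update x j s) p := by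
  classical
  rw [MvPolynomial.degreeOf_eq_natDegree]
  set P := MvPolynomial.optionEquivLeft R {b // b ≠ j}
    (MvPolynomial.rename (Equiv.optionSubtypeNe j).symm p) with hP
  obtain hP0 | hP0 := eq_or_ne P 0
  · have hp : p = 0 := by
      simpa [hP, MvPolynomial.rename_eq_zero_iff_of_injective, Equiv.injective] using hP0
    exact ⟨0, 0, by simp [hP0], by simp [hp]⟩
  obtain ⟨x, hx⟩ : ∃ x, MvPolynomial.eval x P.leadingCoeff ≠ 0 := by
    by_contra! hzero
    exact leadingCoeff_ne_zero.mpr hP0 (MvPolynomial.funext fun x => by simpa using hzero x)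
  refine ⟨P.map (MvPolynomial.eval x), fun b => if h : b = j then 0 else x ⟨b, h⟩,
    natDegree_map_of_leadingCoeff_ne_zero _ hx, fun s => ?_⟩
  rw [← MvPolynomial.optionEquivLeft_elim_eval, MvPolynomial.eval_rename]
  congr 2
  ext b
  obtain rfl | hb := eq_or_ne b j
  · simp
  · simp [hb]

lemma HasGrowth.degreeOf_le {n : ℕ} {p : ZX n} {A : ℝ} {a : ℕ}
    (h : HasGrowth p A a) (j : Fin n) : p.degreeOf j ≤ a := by
  obtain ⟨g, x, hdeg, hg⟩ := exists_natDegree_eq_degreeOf p j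
  rw [← hdeg]
  refine natDegree_le_of_abs_eval_le (A := A * coordWeight x ^ a) fun s => ?_
  rw [hg, mul_assoc, ← mul_pow]
  refine (h _).trans ?_
  have hA := h.nonneg
  have hw := one_le_coordWeight (Function.update x j s)
  gcongr
  exact coordWeight_update_le x j s

/-! ### Integer points in boxes -/

/-- The integer points of the cube `[-N, N]ⁿ`. -/
def intBox (n N : ℕ) : Finset (Fin n → ℤ) := Fintype.piFinset fun _ => Finset.Icc (-(N : ℤ)) N

section intBox

variable {n N : ℕ}

lemma mem_intBox {x : Fin n → ℤ} : x ∈ intBox n N ↔ ∀ j, |x j| ≤ (N : ℤ) := by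
  simp [intBox, abs_le]

lemma coordWeight_le_of_mem_intBox {x : Fin n → ℤ} (h : x ∈ intBox n N) :
    coordWeight x ≤ (1 + (N : ℝ)) ^ n :=
  coordWeight_le_pow fun j => by exact_mod_cast mem_intBox.mp h j

lemma card_Icc_neg_self (N : ℕ) : (Finset.Icc (-(N : ℤ)) N).card = 2 * N + 1 := by
  rw [Int.card_Icc]
  omega

lemma card_intBox (n N : ℕ) : (intBox n N).card = (2 * N + 1) ^ n := by
  simp [intBox, -Int.card_Icc, card_Icc_neg_self]

lemma card_zeros_mul_le {a : ℕ} {p : ZX n} (hp : p ≠ 0)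
    (hdeg : ∀ j, p.degreeOf j ≤ a) (hN : 1 ≤ N) {S : Finset (Fin n → ℤ)} (hS : S ⊆ intBox n N)
    (hzero : ∀ x ∈ S, MvPolynomial.eval x p = 0) :
    (S.card : ℝ) * N ≤ 3 ^ n * (n * a) * N ^ n := by
  classical
  have hN' : (1 : ℝ) ≤ N := by exact_mod_cast hN
  set Z := {x ∈ intBox n N | MvPolynomial.eval x p = 0}
  have hSZ : S ⊆ Z := fun x hx => Finset.mem_filter.mpr ⟨hS hx, hzero x hx⟩
  have hprob : (Z.card : ℝ) / (2 * N + 1) ^ n ≤ ∑ j, (p.degreeOf j : ℝ) / (2 * N + 1) := by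
    have h := MvPolynomial.schwartz_zippel_sum_degreeOf hp fun _ => Finset.Icc (-(N : ℤ)) N
    replace h := (NNRat.cast_le (K := ℝ)).mpr h
    simp only [card_Icc_neg_self, Finset.prod_const, Finset.card_univ, Fintype.card_fin] at h
    push_cast at h
    exact h
  have hsum : ∑ j, (p.degreeOf j : ℝ) / (2 * N + 1) ≤ n * a / N := by
    calc ∑ j, (p.degreeOf j : ℝ) / (2 * N + 1) ≤ ∑ _j : Fin n, (a : ℝ) / N := by
          gcongr with j
          · exact hdeg j
          · linarith
      _ = n * a / N := by simp [mul_div_assoc]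
  have hmul : (Z.card : ℝ) * N ≤ n * a * (2 * N + 1) ^ n :=
    (div_le_div_iff₀ (by positivity) (by positivity)).mp (hprob.trans hsum)
  calc (S.card : ℝ) * N ≤ Z.card * N := by gcongr
    _ ≤ n * a * (2 * N + 1) ^ n := hmul
    _ ≤ n * a * (3 * N) ^ n := by gcongr; linarith
    _ = 3 ^ n * (n * a) * N ^ n := by ring

lemma card_le_add_card_filter_eval_ne_zero {m a : ℕ} {p : ZX (m + 1)} (hp : p ≠ 0)
    (hdeg : ∀ j, p.degreeOf j ≤ a) (hN : 1 ≤ N) {S : Finset (Fin (m + 1) → ℤ)}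
    (hS : S ⊆ intBox (m + 1) N) :
    (S.card : ℝ) ≤ 3 ^ (m + 1) * ((m + 1 : ℕ) * a) * N ^ m +
      {x ∈ S | MvPolynomial.eval x p ≠ 0}.card := by
  rw [← Finset.card_filter_add_card_filter_not (s := S) (MvPolynomial.eval · p = 0), Nat.cast_add]
  refine add_le_add_left ?_ _
  have h := card_zeros_mul_le hp hdeg hN ((Finset.filter_subset _ _).trans hS)
    fun x hx => (Finset.mem_filter.mp hx).2
  rw [pow_succ (N : ℝ), ← mul_assoc] at h
  exact le_of_mul_le_mul_right h (by exact_mod_cast hN)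

end intBox

/-! ### Specialising all variables but one, or just one variable -/

section specialization

variable {R : Type*} [CommRing R] {m : ℕ}

/-- The restriction of a polynomial to the line through `x` parallel to the `i`-th axis: all
variables other than the `i`-th one are specialised. -/
def lineEval (i : Fin (m + 1)) (x : Fin m → R) : MvPolynomial (Fin (m + 1)) R →ₐ[R] R[X] :=
  MvPolynomial.aeval (i.insertNth X fun j => C (x j))

/-- The specialisation of the `i`-th variable to the constant `a`, the remaining variables being
renumbered. -/
def substCoord (i : Fin (m + 1)) (a : R) :
    MvPolynomial (Fin (m + 1)) R →ₐ[R] MvPolynomial (Fin m) R :=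
  MvPolynomial.aeval (i.insertNth (MvPolynomial.C a) MvPolynomial.X)

lemma eval_lineEval (i : Fin (m + 1)) (x : Fin m → R) (s : R) (p : MvPolynomial (Fin (m + 1)) R) :
    (lineEval i x p).eval s = MvPolynomial.eval (i.insertNth s x) p := by
  suffices (Polynomial.aeval s).comp (lineEval i x) = MvPolynomial.aeval (i.insertNth s x) from
    DFunLike.congr_fun this p
  ext j
  refine i.succAboveCases ?_ (fun k => ?_) j <;> simp [lineEval]

lemma eval_substCoord (i : Fin (m + 1)) (a : R) (x : Fin m → R)
    (p : MvPolynomial (Fin (m + 1)) R) :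
    MvPolynomial.eval x (substCoord i a p) = MvPolynomial.eval (i.insertNth a x) p := by
  suffices (MvPolynomial.aeval x).comp (substCoord i a) = MvPolynomial.aeval (i.insertNth a x) from
    DFunLike.congr_fun this p
  ext j
  refine i.succAboveCases ?_ (fun k => ?_) j <;> simp [substCoord]

lemma lineEval_rename (i : Fin (m + 1)) (x : Fin m → R) (p : MvPolynomial (Fin m) R) :
    lineEval i x (MvPolynomial.rename i.succAbove p) = C (MvPolynomial.eval x p) := by
  suffices (lineEval i x).comp (MvPolynomial.rename i.succAbove) =
      (Algebra.ofId R R[X]).comp (MvPolynomial.aeval x) from DFunLike.congr_fun this p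
  ext j
  simp [lineEval, Algebra.ofId_apply]

lemma lineEval_aeval_X (i : Fin (m + 1)) (x : Fin m → R) (g : R[X]) :
    lineEval i x (aeval (MvPolynomial.X i) g) = g := by
  simp [lineEval, ← Polynomial.aeval_algHom_apply]

lemma natDegree_lineEval_le (i : Fin (m + 1)) (x : Fin m → R)
    (p : MvPolynomial (Fin (m + 1)) R) : (lineEval i x p).natDegree ≤ p.degreeOf i := by
  rw [lineEval, MvPolynomial.aeval_eq_eval₂Hom, MvPolynomial.coe_eval₂Hom,
    MvPolynomial.eval₂_eq']
  refine natDegree_sum_le_of_forall_le _ _ fun d hd => ?_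
  simp only [Fin.prod_univ_succAbove _ i, Fin.insertNth_apply_same, Fin.insertNth_apply_succAbove,
    ← C_pow, ← map_prod, algebraMap_eq]
  calc _ ≤ (X ^ d i * C _ : R[X]).natDegree := natDegree_C_mul_le _ _
    _ ≤ (X ^ d i : R[X]).natDegree := natDegree_mul_C_le _ _
    _ ≤ d i := natDegree_X_pow_le _
    _ ≤ p.degreeOf i := MvPolynomial.degreeOf_le_iff.mp le_rfl d hd

end specialization

lemma HasGrowth.abs_eval_lineEval_le {m : ℕ} {p : ZX (m + 1)} {A : ℝ} {a : ℕ}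
    (h : HasGrowth p A a) (i : Fin (m + 1)) (x : Fin m → ℤ) (s : ℤ) :
    |(((lineEval i x p).eval s : ℤ) : ℝ)| ≤ A * coordWeight x ^ a * (1 + |(s : ℝ)|) ^ a := by
  rw [eval_lineEval]
  refine (h _).trans_eq ?_
  rw [coordWeight_insertNth, mul_pow]
  ring

lemma HasGrowth.substCoord {m : ℕ} {p : ZX (m + 1)} {A : ℝ} {a : ℕ}
    (h : HasGrowth p A a) (i : Fin (m + 1)) (c : ℤ) :
    HasGrowth (substCoord i c p) (A * (1 + |(c : ℝ)|) ^ a) a := by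
  intro x
  rw [eval_substCoord]
  refine (h _).trans_eq ?_
  rw [coordWeight_insertNth, mul_pow]
  ring

/-! ### Resultant of a polynomial and its derivative -/

section derivResultant

variable {R S : Type*} [CommRing R] [CommRing S]

/-- The resultant of `f` and `f'`. For monic `f` it is the discriminant up to sign, and it commutes
with ring homomorphisms, the Sylvester matrix having size `2 deg f - 1` independently of the actual
degree of `f'`. -/
def derivResultant (f : R[X]) : R :=
  resultant f (derivative f) f.natDegree (f.natDegree - 1)

lemma derivResultant_map [Nontrivial S] (φ : R →+* S) {f : R[X]} (hf : f.Monic) :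
    derivResultant (f.map φ) = φ (derivResultant f) := by
  rw [derivResultant, hf.natDegree_map, derivative_map, resultant_map_map, derivResultant]

lemma exists_mul_add_derivative_mul_eq_C_derivResultant {f : R[X]} (hf : f.natDegree ≠ 0) :
    ∃ u v : R[X], f * u + derivative f * v = C (derivResultant f) := by
  obtain ⟨u, v, -, -, h⟩ := exists_mul_add_mul_eq_C_resultant (m := f.natDegree)
    (n := f.natDegree - 1) f (derivative f) le_rfl (natDegree_derivative_le f) (Or.inl hf)
  exact ⟨u, v, h⟩

lemma derivResultant_ne_zero_of_irreducible_map {K : Type*} [Field K] [CharZero K] (φ : R →+* K)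
    {f : R[X]} (hf : f.Monic) (hirr : Irreducible (f.map φ)) : derivResultant f ≠ 0 := by
  intro h0
  have hres := resultant_ne_zero _ _ hirr.separable
  rw [natDegree_derivative] at hres
  exact hres ((derivResultant_map φ hf).trans (by rw [h0, map_zero]))

end derivResultant

lemma abs_coeff_derivative_le {f : ℤ[X]} {d : ℕ} (hd : f.natDegree ≤ d) {M : ℝ}
    (hM : ∀ k, |((f.coeff k : ℤ) : ℝ)| ≤ M) (k : ℕ) :
    |(((derivative f).coeff k : ℤ) : ℝ)| ≤ d * M := by
  have hM0 : 0 ≤ M := (abs_nonneg _).trans (hM 0)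
  rw [coeff_derivative]
  obtain hk | hk := le_or_gt (k + 1) f.natDegree
  · have hkd : (k : ℝ) + 1 ≤ d := by exact_mod_cast hk.trans hd
    push_cast
    rw [abs_mul, mul_comm, abs_of_nonneg (by positivity : (0 : ℝ) ≤ k + 1)]
    gcongr
    exact hM _
  · rw [coeff_eq_zero_of_natDegree_lt hk]
    simpa using by positivity

lemma abs_sylvester_le {f g : ℤ[X]} {M : ℝ} (hf : ∀ k, |((f.coeff k : ℤ) : ℝ)| ≤ M)
    (hg : ∀ k, |((g.coeff k : ℤ) : ℝ)| ≤ M) (m n : ℕ) (i j : Fin (m + n)) :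
    |((sylvester f g m n i j : ℤ) : ℝ)| ≤ M := by
  have hM : 0 ≤ M := (abs_nonneg _).trans (hf 0)
  rw [sylvester, Matrix.of_apply]
  induction j using Fin.addCases with
  | left j =>
    rw [Fin.addCases_left]
    split_ifs
    · exact hg _
    · simpa using hM
  | right j =>
    rw [Fin.addCases_right]
    split_ifs
    · exact hf _
    · simpa using hM

lemma abs_derivResultant_le {f : ℤ[X]} {d : ℕ} (hd : f.natDegree ≤ d) {M : ℝ} (hM : 1 ≤ M)
    (h : ∀ k, |((f.coeff k : ℤ) : ℝ)| ≤ M) :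
    |((derivResultant f : ℤ) : ℝ)| ≤ (2 * d).factorial * ((d + 1) * M) ^ (2 * d) := by
  have hdM : M ≤ (d + 1) * M := le_mul_of_one_le_left (by linarith) (by simp)
  have hentry := abs_sylvester_le (fun k => (h k).trans hdM) (M := (d + 1) * M)
    (fun k => (abs_coeff_derivative_le hd h k).trans (by gcongr; simp))
    f.natDegree (f.natDegree - 1)
  have hcast : ((derivResultant f : ℤ) : ℝ) =
      ((sylvester f (derivative f) f.natDegree (f.natDegree - 1)).map (Int.castRingHom ℝ)).det :=
    RingHom.map_det (Int.castRingHom ℝ) _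
  have hdet := Matrix.det_le (abv := AbsoluteValue.abs)
    (A := (sylvester f (derivative f) f.natDegree (f.natDegree - 1)).map (Int.castRingHom ℝ)) hentry
  rw [← hcast, Fintype.card_fin, nsmul_eq_mul] at hdet
  have hsize : f.natDegree + (f.natDegree - 1) ≤ 2 * d := by omega
  refine hdet.trans ?_
  gcongr
  exact hM.trans hdM

lemma HasGrowth.derivResultant {n d : ℕ} {E : (ZX n)[X]} (hE : E.Monic)
    (hd : E.natDegree ≤ d) {H : ℝ} (hH : 1 ≤ H) (h : ∀ k, HasGrowth (E.coeff k) H d) :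
    HasGrowth (derivResultant E) ((2 * d).factorial * ((d + 1) * H) ^ (2 * d)) (d * (2 * d)) := by
  intro x
  have hw : 1 ≤ coordWeight x ^ d := one_le_pow₀ (one_le_coordWeight x)
  rw [← derivResultant_map (MvPolynomial.eval x) hE]
  refine (abs_derivResultant_le (natDegree_map_le.trans hd)
    (one_le_mul_of_one_le_of_one_le hH hw) fun k => ?_).trans_eq ?_
  · rw [coeff_map]
    exact h k x
  · rw [pow_mul (coordWeight x), mul_assoc _ (_ ^ _), ← mul_pow, mul_assoc]

/-! ### Primes not dividing a given integer -/

lemma half_le_theta {x : ℝ} (hx : 50 ^ 4 ≤ x) : x / 2 ≤ Chebyshev.theta x := by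
  obtain ⟨u, hu, rfl⟩ : ∃ u : ℝ, 0 ≤ u ∧ u ^ 4 = x :=
    ⟨√(√x), by positivity, by
      rw [show 4 = 2 * 2 from rfl, pow_mul, Real.sq_sqrt (by positivity),
        Real.sq_sqrt (by linarith)]⟩
  have hu50 : 50 ≤ u := le_of_pow_le_pow_left₀ (by norm_num) hu hx
  have hlog : Real.log (u ^ 4) ≤ 4 * u := by
    rw [Real.log_pow]
    push_cast
    linarith [Real.log_le_self hu]
  have hlog' : Real.log (u ^ 4 + 2) ≤ 4 * u + 2 := by
    have h := Real.log_le_log (by linarith) (by linarith : u ^ 4 + 2 ≤ u ^ 4 * 3)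
    rw [Real.log_mul (by linarith) (by norm_num)] at h
    linarith [Real.log_le_sub_one_of_pos (show (0 : ℝ) < 3 by norm_num)]
  have hsqrt : √(u ^ 4) = u ^ 2 := by
    rw [show u ^ 4 = (u ^ 2) ^ 2 by ring, Real.sqrt_sq (by positivity)]
  have hmain := Chebyshev.theta_ge' (by linarith : 1 ≤ u ^ 4)
  rw [hsqrt] at hmain
  have hlog2 : (u ^ 4 - 1) * 0.69 ≤ (u ^ 4 - 1) * Real.log 2 :=
    mul_le_mul_of_nonneg_left (by linarith [Real.log_two_gt_d9]) (by linarith)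
  have hquad : 2 * u ^ 2 * Real.log (u ^ 4) ≤ 2 * u ^ 2 * (4 * u) := by gcongr
  have hcube : 8 * u ^ 3 ≤ 0.16 * u ^ 4 := by
    have : 0 ≤ u ^ 3 * (u - 50) := mul_nonneg (by positivity) (by linarith)
    nlinarith
  have hlin : 50 ^ 3 * u ≤ u ^ 4 := by
    have : (50 : ℝ) ^ 3 ≤ u ^ 3 := by gcongr
    nlinarith
  linarith

lemma sum_log_primes_le {c : ℤ} (hc : c ≠ 0) {s : Finset ℕ} (hprime : ∀ p ∈ s, p.Prime)
    (hdvd : ∀ p ∈ s, (p : ℤ) ∣ c) : ∑ p ∈ s, Real.log p ≤ Real.log |(c : ℝ)| := by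
  have hprod : ∏ p ∈ s, p ∣ c.natAbs :=
    Finset.prod_primes_dvd _ (fun p hp => (hprime p hp).prime) fun p hp =>
      Int.natCast_dvd.mp (hdvd p hp)
  have hle : ((∏ p ∈ s, p : ℕ) : ℝ) ≤ |(c : ℝ)| := by
    rw [← Int.cast_abs, ← Nat.cast_natAbs]
    exact_mod_cast Nat.le_of_dvd (Int.natAbs_pos.mpr hc) hprod
  rw [← Real.log_prod fun p hp => Nat.cast_ne_zero.mpr (hprime p hp).ne_zero, ← Nat.cast_prod]
  exact Real.log_le_log (by exact_mod_cast Finset.prod_pos fun p hp => (hprime p hp).pos) hle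

lemma exists_prime_not_dvd {P : ℝ} (hP : 1 ≤ P) {c : ℤ} (hc : c ≠ 0) :
    ∃ p : ℕ, p.Prime ∧ P ≤ p ∧ p ≤ 50 ^ 4 * (P + Real.log |(c : ℝ)|) ∧ ¬ (p : ℤ) ∣ c := by
  by_contra! hcon
  have hlog : 0 ≤ Real.log |(c : ℝ)| :=
    Real.log_nonneg (by exact_mod_cast Int.one_le_abs hc)
  set Z := 50 ^ 4 * (P + Real.log |(c : ℝ)|) with hZ
  have hPZ : ⌊P⌋₊ ≤ ⌊Z⌋₊ := Nat.floor_le_floor (by linarith)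
  have hsplit : Chebyshev.theta Z =
      Chebyshev.theta P + ∑ p ∈ Finset.Ioc ⌊P⌋₊ ⌊Z⌋₊ with p.Prime, Real.log p := by
    simp only [Chebyshev.theta, Finset.sum_filter]
    exact (Finset.sum_Ioc_consecutive _ (Nat.zero_le _) hPZ).symm
  have hsum : ∑ p ∈ Finset.Ioc ⌊P⌋₊ ⌊Z⌋₊ with p.Prime, Real.log p ≤ Real.log |(c : ℝ)| := by
    refine sum_log_primes_le hc (fun p hp => (Finset.mem_filter.mp hp).2) fun p hp => ?_
    simp only [Finset.mem_filter, Finset.mem_Ioc] at hp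
    exact hcon p hp.2 (Nat.lt_of_floor_lt hp.1.1).le
      ((Nat.le_floor_iff (by linarith)).mp hp.1.2)
  have hZ2 := half_le_theta (x := Z) (by linarith)
  have hthetaP := Chebyshev.theta_le_log4_mul_x (x := P) (by linarith)
  have hlog4 : Real.log 4 * P ≤ 3 * P := by
    gcongr
    linarith [Real.log_le_sub_one_of_pos (show (0 : ℝ) < 4 by norm_num)]
  linarith [hZ]

/-! ### Roots of monic polynomials -/

lemma norm_root_le {K : Type*} [NormedField K] {g : K[X]} (hg : g.Monic) {M : ℝ} (hM : 1 ≤ M)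
    (h : ∀ k, ‖g.coeff k‖ ≤ M) {y : K} (hy : g.IsRoot y) : ‖y‖ ≤ 2 * M := by
  have hbound : cauchyBound g ≤ Real.toNNReal M + 1 := by
    rw [cauchyBound, hg.leadingCoeff, nnnorm_one, div_one]
    gcongr
    refine Finset.sup_le fun k _ => ?_
    rw [← NNReal.coe_le_coe, Real.coe_toNNReal _ (by linarith)]
    exact h k
  have hlt := (IsRoot.norm_lt_cauchyBound hg.ne_zero hy).trans_le hbound
  rw [← NNReal.coe_lt_coe, coe_nnnorm, NNReal.coe_add, Real.coe_toNNReal _ (by linarith),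
    NNReal.coe_one] at hlt
  linarith

lemma abs_root_le {g : ℤ[X]} (hg : g.Monic) {M : ℝ} (hM : 1 ≤ M)
    (h : ∀ k, |((g.coeff k : ℤ) : ℝ)| ≤ M) {y : ℤ} (hy : g.eval y = 0) : |(y : ℝ)| ≤ 2 * M := by
  refine norm_root_le (hg.map (Int.castRingHom ℝ)) hM (fun k => by simpa using h k) ?_
  rw [IsRoot.def, eval_intCast_map]
  simp [hy]

/-! ### Hensel approximation of an integral branch -/

lemma eval_eval_eq_eval_map {R : Type*} [CommRing R] (f : R[X][X]) (g : R[X]) (x : R) :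
    (f.eval g).eval x = (f.map (evalRingHom x)).eval (g.eval x) := by
  rw [← coe_evalRingHom, ← eval_map_apply, coe_evalRingHom]

lemma dvd_eval_map_sub_eval_map {R : Type*} [CommRing R] {p x x₀ y y₀ : R} (hx : p ∣ x - x₀)
    (hy : p ∣ y - y₀) (f : R[X][X]) :
    p ∣ (f.map (evalRingHom x)).eval y - (f.map (evalRingHom x₀)).eval y₀ := by
  have hfst : p ∣ (f.map (evalRingHom x)).eval y₀ - (f.map (evalRingHom x₀)).eval y₀ := by
    have h := hx.trans (sub_dvd_eval_sub x x₀ (f.eval (C y₀)))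
    rwa [eval_eval_eq_eval_map, eval_eval_eq_eval_map, eval_C, eval_C] at h
  have hsnd := hy.trans (sub_dvd_eval_sub y y₀ (f.map (evalRingHom x)))
  simpa only [sub_add_sub_cancel] using dvd_add hsnd hfst

/-- Newton iteration `g ↦ g - v f(g)`, with `v` a fixed inverse of the derivative modulo `p`. -/
lemma exists_hensel_approx {R : Type*} [CommRing R] {p x₀ y₀ v : R} {f : R[X][X]}
    (hv : p ∣ 1 - v * ((derivative f).map (evalRingHom x₀)).eval y₀) (k : ℕ) :
    ∃ g : R[X], ∀ x y : R, p ∣ x - x₀ → p ∣ y - y₀ → (f.map (evalRingHom x)).eval y = 0 →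
      p ^ (k + 1) ∣ y - g.eval x := by
  induction k with
  | zero => exact ⟨C y₀, fun x y _ hy _ => by simpa using hy⟩
  | succ k ih =>
    obtain ⟨g, hg⟩ := ih
    refine ⟨g - C v * f.eval g, fun x y hx hy hroot => ?_⟩
    have happrox := hg x y hx hy hroot
    rw [eval_sub, eval_mul, eval_C, eval_eval_eq_eval_map]
    set fx := f.map (evalRingHom x)
    set w := g.eval x
    obtain ⟨q, hq⟩ := binomExpansion fx y (w - y)
    rw [add_sub_cancel, hroot, zero_add] at hq
    have hderiv := dvd_eval_map_sub_eval_map hx hy (derivative f)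
    rw [← derivative_map] at hderiv
    have hnewton : y - (w - v * fx.eval w) =
        (y - w) * (1 - v * ((derivative f).map (evalRingHom x₀)).eval y₀
          - v * ((derivative fx).eval y - ((derivative f).map (evalRingHom x₀)).eval y₀)
          + v * q * (y - w)) := by
      rw [hq]
      ring
    rw [hnewton, pow_succ]
    refine mul_dvd_mul happrox (dvd_add (dvd_sub hv (hderiv.mul_left _)) (Dvd.dvd.mul_left ?_ _))
    exact (dvd_pow_self p k.succ_ne_zero).trans happrox

/-! ### Auxiliary polynomials by the pigeonhole principle -/

lemma exists_ne_zero_abs_le_of_prod_lt {ι κ : Type*} [Fintype ι] [Fintype κ]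
    (L : (ι → ℤ) →+ (κ → ℤ)) (b : ι → ℕ) (m : κ → ℕ) (hm : ∀ k, 0 < m k)
    (hcard : ∏ k, m k < ∏ i, (b i + 1)) :
    ∃ c : ι → ℤ, c ≠ 0 ∧ (∀ i, |c i| ≤ b i) ∧ ∀ k, (m k : ℤ) ∣ L c k := by
  classical
  let boxes : Finset (ι → ℤ) := Fintype.piFinset fun i => Finset.Icc 0 (b i : ℤ)
  let residues : Finset (κ → ℤ) := Fintype.piFinset fun k => Finset.Ico 0 (m k : ℤ)
  have hmaps : ∀ a ∈ boxes, (fun k => L a k % m k) ∈ residues := fun a _ => by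
    simp only [residues, Fintype.mem_piFinset, Finset.mem_Ico]
    exact fun k => ⟨Int.emod_nonneg _ (by exact_mod_cast (hm k).ne'),
      Int.emod_lt_of_pos _ (by exact_mod_cast hm k)⟩
  have hlt : residues.card < boxes.card := by
    simp only [residues, boxes, Fintype.card_piFinset, Int.card_Ico, Int.card_Icc, sub_zero]
    exact_mod_cast hcard
  obtain ⟨a, ha, a', ha', hne, heq⟩ := Finset.exists_ne_map_eq_of_card_lt_of_maps_to hlt hmaps
  refine ⟨a - a', sub_ne_zero.mpr hne, fun i => ?_, fun k => ?_⟩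
  · have hai := Finset.mem_Icc.mp (Fintype.mem_piFinset.mp ha i)
    have hai' := Finset.mem_Icc.mp (Fintype.mem_piFinset.mp ha' i)
    rw [Pi.sub_apply, abs_le]
    omega
  · rw [map_sub, Pi.sub_apply]
    exact Int.ModEq.dvd (congrFun heq k).symm

lemma pow_dvd_eval_of_dvd_coeff_taylor {R : Type*} [CommRing R] {p x x₀ : R} {f : R[X]} {J : ℕ}
    (hcoeff : ∀ k < J, p ^ (J - k) ∣ (taylor x₀ f).coeff k) (hx : p ∣ x - x₀) :
    p ^ J ∣ f.eval x := by
  rw [← sub_add_cancel x x₀, ← taylor_eval, eval_eq_sum_range]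
  refine Finset.dvd_sum fun k _ => ?_
  have hpow : p ^ k ∣ (x - x₀) ^ k := pow_dvd_pow_of_dvd hx k
  obtain hk | hk := lt_or_ge k J
  · rw [← Nat.sub_add_cancel hk.le, pow_add]
    exact mul_dvd_mul (hcoeff k hk) hpow
  · exact ((pow_dvd_pow p hk).trans hpow).mul_left _

lemma abs_eval_ofFn_mul_le {n : ℕ} {c : Fin n → ℤ} {N T Z x y : ℤ} (hx : |x| ≤ N) (hy : |y| ≤ T)
    (hc : ∀ i, |c i| * (N ^ (i : ℕ) * T) ≤ Z) : |(ofFn n c).eval x * y| ≤ n * Z := by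
  have hN : 0 ≤ N := (abs_nonneg x).trans hx
  have hsum : (ofFn n c).eval x = ∑ i, c i * x ^ (i : ℕ) := by
    rw [ofFn_eq_sum_monomial, eval_finsetSum]
    exact Finset.sum_congr rfl fun i _ => eval_monomial
  rw [hsum, Finset.sum_mul]
  calc |∑ i, c i * x ^ (i : ℕ) * y| ≤ ∑ i, |c i * x ^ (i : ℕ) * y| :=
        Finset.abs_sum_le_sum_abs _ _
    _ ≤ ∑ _i : Fin n, Z := by
        refine Finset.sum_le_sum fun i _ => (hc i).trans' ?_
        rw [abs_mul, abs_mul, abs_pow, mul_assoc]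
        gcongr
    _ = n * Z := by simp

/-- The height `Z` allowed for the coefficients in `exists_auxiliary_polynomials`: the first bound
makes the pigeonhole principle apply, the second forces the small multiples of `p ^ (2 * μ + 2)`
arising there to vanish. -/
lemma exists_auxiliary_height {p N T μ : ℕ} (hp : 2 ≤ p) (hN : 1 ≤ N) (hT : 1 ≤ T)
    (hNp : 16 * N ≤ p ^ 2) (hTμ : 16 * T ≤ 4 ^ μ) :
    ∃ Z : ℕ, p ^ (2 * μ + 3) * N ^ μ * T ≤ Z ^ 2 ∧ (2 * μ + 2) * Z < p ^ (2 * μ + 2) := by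
  set Q := p ^ (2 * μ + 3) * N ^ μ * T with hQ
  refine ⟨Nat.sqrt Q + 1, (Nat.lt_succ_sqrt' Q).le, ?_⟩
  have hsqrt : (Nat.sqrt Q + 1) ^ 2 ≤ 4 * Q := by
    have hQ1 : 1 ≤ Q := Nat.one_le_iff_ne_zero.mpr (by positivity)
    nlinarith [Nat.le_sqrt.mpr (by simpa using hQ1 : 1 * 1 ≤ Q), Nat.sqrt_le' Q]
  have hμ : (μ + 1) ^ 2 ≤ 4 ^ μ :=
    calc (μ + 1) ^ 2 ≤ (2 ^ μ) ^ 2 := Nat.pow_le_pow_left Nat.lt_two_pow_self 2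
      _ = 4 ^ μ := by rw [← pow_mul, mul_comm, pow_mul]; norm_num
  have hpow : 16 * (μ + 1) ^ 2 * N ^ μ * T < p ^ (2 * μ) * p :=
    calc 16 * (μ + 1) ^ 2 * N ^ μ * T = (μ + 1) ^ 2 * (16 * T) * N ^ μ := by ring
      _ ≤ 4 ^ μ * 4 ^ μ * N ^ μ := by gcongr
      _ = (16 * N) ^ μ := by rw [mul_pow, ← mul_pow]; norm_num
      _ ≤ (p ^ 2) ^ μ := by gcongr
      _ = p ^ (2 * μ) * 1 := by rw [← pow_mul, mul_one]
      _ < p ^ (2 * μ) * p := Nat.mul_lt_mul_of_pos_left (by omega) (by positivity)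
  refine lt_of_pow_lt_pow_left₀ 2 (by positivity) ?_
  calc ((2 * μ + 2) * (Nat.sqrt Q + 1)) ^ 2 = 4 * (μ + 1) ^ 2 * (Nat.sqrt Q + 1) ^ 2 := by ring
    _ ≤ 4 * (μ + 1) ^ 2 * (4 * Q) := by gcongr
    _ = p ^ (2 * μ + 3) * (16 * (μ + 1) ^ 2 * N ^ μ * T) := by rw [hQ]; ring
    _ < p ^ (2 * μ + 3) * (p ^ (2 * μ) * p) := Nat.mul_lt_mul_of_pos_left hpow (by positivity)
    _ = (p ^ (2 * μ + 2)) ^ 2 := by ring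

section pigeonhole

variable {p N T μ Z : ℕ}

lemma prod_pow_sub (p J : ℕ) : (∏ k : Fin J, p ^ (J - k)) ^ 2 = p ^ (J * (J + 1)) := by
  rw [Finset.prod_pow_eq_pow_sum, ← pow_mul, Fin.sum_univ_eq_sum_range (fun k => J - k) J]
  congr 1
  calc (∑ k ∈ Finset.range J, (J - k)) * 2 = (∑ k ∈ Finset.range J, (k + 1)) * 2 := by
        rw [← Finset.sum_range_reflect]
        exact congrArg (· * 2) (Finset.sum_congr rfl fun k hk => by
          have := Finset.mem_range.mp hk
          omega)
    _ = J * (J + 1) := by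
        rw [← Finset.sum_range_succ' (fun k => k) J |>.trans (add_zero _),
          Finset.sum_range_id_mul_two, mul_comm, Nat.add_sub_cancel]

/-- The bounds `|x| ^ i` and `|x| ^ i * |y|` for the monomials of `A₀(x) + A₁(x) y`, whose
coefficients are indexed by `Fin (μ + 1) ⊕ Fin (μ + 1)`. -/
def monomialBound (N T μ : ℕ) : Fin (μ + 1) ⊕ Fin (μ + 1) → ℕ :=
  Sum.elim (fun i => N ^ (i : ℕ)) fun i => N ^ (i : ℕ) * T

lemma prod_monomialBound (N T μ : ℕ) : ∏ i, monomialBound N T μ i = (N ^ μ * T) ^ (μ + 1) := by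
  have hpow : (∏ i : Fin (μ + 1), N ^ (i : ℕ)) ^ 2 = (N ^ μ) ^ (μ + 1) := by
    rw [Finset.prod_pow_eq_pow_sum, ← pow_mul, ← pow_mul,
      Fin.sum_univ_eq_sum_range (fun k => k) (μ + 1), Finset.sum_range_id_mul_two,
      Nat.add_sub_cancel, mul_comm]
  simp only [Fintype.prod_sum_type, monomialBound, Sum.elim_inl, Sum.elim_inr,
    Finset.prod_mul_distrib, Finset.prod_const, Finset.card_univ, Fintype.card_fin]
  rw [← mul_assoc, ← sq, hpow, mul_pow]

lemma prod_pow_sub_lt_prod_div_monomialBound (hp : 0 < p) (hN : 0 < N) (hT : 0 < T)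
    (hZ : p ^ (2 * μ + 3) * N ^ μ * T ≤ Z ^ 2) :
    ∏ k : Fin (2 * μ + 2), p ^ (2 * μ + 2 - k) < ∏ i, (Z / monomialBound N T μ i + 1) := by
  have hZ0 : 0 < Z := Nat.pos_of_ne_zero fun h => by
    have : 0 < p ^ (2 * μ + 3) * N ^ μ * T := by positivity
    simp only [h] at hZ
    omega
  have hbound : ∀ i, 0 < monomialBound N T μ i := by
    rintro (i | i) <;> simp only [monomialBound, Sum.elim_inl, Sum.elim_inr] <;> positivity
  have hupper : Z ^ (2 * (μ + 1)) <
      (∏ i, (Z / monomialBound N T μ i + 1)) * (N ^ μ * T) ^ (μ + 1) :=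
    calc Z ^ (2 * (μ + 1)) = ∏ _i : Fin (μ + 1) ⊕ Fin (μ + 1), Z := by simp [two_mul]
      _ < ∏ i, (Z / monomialBound N T μ i + 1) * monomialBound N T μ i :=
          Finset.prod_lt_prod_of_nonempty (fun _ _ => hZ0)
            (fun i _ => by rw [add_one_mul]; exact Nat.lt_div_mul_add (hbound i))
            Finset.univ_nonempty
      _ = _ := by rw [Finset.prod_mul_distrib, prod_monomialBound]
  have hmoduli : ∏ k : Fin (2 * μ + 2), p ^ (2 * μ + 2 - k) = p ^ ((2 * μ + 3) * (μ + 1)) := by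
    refine Nat.pow_left_injective two_ne_zero (.trans (prod_pow_sub p _) ?_)
    simp only [← pow_mul]
    ring_nf
  rw [hmoduli]
  refine lt_of_mul_lt_mul_right (hupper.trans_le' ?_) (Nat.zero_le ((N ^ μ * T) ^ (μ + 1)))
  rw [pow_mul, pow_mul, ← mul_pow]
  exact Nat.pow_le_pow_left (by rwa [← mul_assoc]) _

lemma exists_auxiliary_coeffs (hp : 0 < p) (hN : 0 < N) (hT : 0 < T)
    (hZ : p ^ (2 * μ + 3) * N ^ μ * T ≤ Z ^ 2) (g : ℤ[X]) (x₀ : ℤ) :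
    ∃ c₀ c₁ : Fin (μ + 1) → ℤ, (c₀ ≠ 0 ∨ c₁ ≠ 0) ∧ (∀ i, |c₀ i| * N ^ (i : ℕ) ≤ Z) ∧
      (∀ i, |c₁ i| * (N ^ (i : ℕ) * T) ≤ Z) ∧ ∀ k < 2 * μ + 2,
        (p : ℤ) ^ (2 * μ + 2 - k) ∣
          (taylor x₀ (ofFn (μ + 1) c₀ + ofFn (μ + 1) c₁ * g)).coeff k := by
  let L : (Fin (μ + 1) ⊕ Fin (μ + 1) → ℤ) →+ (Fin (2 * μ + 2) → ℤ) :=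
    AddMonoidHom.mk' (fun c k => (taylor x₀
        (ofFn (μ + 1) (c ∘ Sum.inl) + ofFn (μ + 1) (c ∘ Sum.inr) * g)).coeff k)
      fun c c' => funext fun k => by
        have hadd (s : Fin (μ + 1) → Fin (μ + 1) ⊕ Fin (μ + 1)) : ofFn (μ + 1) ((c + c') ∘ s) =
            ofFn (μ + 1) (c ∘ s) + ofFn (μ + 1) (c' ∘ s) := map_add (ofFn (μ + 1)) _ _
        rw [Pi.add_apply, ← coeff_add, ← map_add, hadd, hadd, add_mul, add_add_add_comm]
  obtain ⟨c, hc, hsmall, hdvd⟩ := exists_ne_zero_abs_le_of_prod_lt L _ _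
    (fun k => Nat.pow_pos hp) (prod_pow_sub_lt_prod_div_monomialBound hp hN hT hZ)
  have hheight (i) : |c i| * monomialBound N T μ i ≤ (Z : ℤ) :=
    (mul_le_mul_of_nonneg_right (hsmall i) (Nat.cast_nonneg _)).trans
      (by exact_mod_cast Nat.div_mul_le_self Z _)
  refine ⟨c ∘ Sum.inl, c ∘ Sum.inr, ?_, fun i => ?_, fun i => ?_, fun k hk => ?_⟩
  · contrapose! hc
    ext (i | i)
    · exact congrFun hc.1 i
    · exact congrFun hc.2 i
  · simpa [monomialBound] using hheight (Sum.inl i)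
  · simpa [monomialBound] using hheight (Sum.inr i)
  · simpa [L] using hdvd ⟨k, hk⟩

/-- Coefficients of `A₀ + A₁ g`, developed around `x₀`, are made divisible by high powers of `p`;
then `A₀(x) + A₁(x) y` is both small and divisible by `p ^ (2 * μ + 2)`. -/
lemma exists_auxiliary_polynomials (hp : 2 ≤ p) (hN : 1 ≤ N) (hT : 1 ≤ T) (hNp : 16 * N ≤ p ^ 2)
    (hTμ : 16 * T ≤ 4 ^ μ) (g : ℤ[X]) (x₀ : ℤ) :
    ∃ A₀ A₁ : ℤ[X], A₀.natDegree ≤ μ ∧ A₁.natDegree ≤ μ ∧ (A₀ ≠ 0 ∨ A₁ ≠ 0) ∧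
      ∀ x y : ℤ, |x| ≤ N → |y| ≤ T → (p : ℤ) ∣ x - x₀ → (p : ℤ) ^ (2 * μ + 2) ∣ y - g.eval x →
        A₀.eval x + A₁.eval x * y = 0 := by
  obtain ⟨Z, hZ, hZp⟩ := exists_auxiliary_height hp hN hT hNp hTμ
  obtain ⟨c₀, c₁, hc, hc₀, hc₁, hdvd⟩ := exists_auxiliary_coeffs (by omega) hN hT hZ g x₀
  have hdegree (c : Fin (μ + 1) → ℤ) : (ofFn (μ + 1) c).natDegree ≤ μ :=
    Nat.lt_succ_iff.mp (ofFn_natDegree_lt (by omega) c)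
  have hne {c : Fin (μ + 1) → ℤ} (h : c ≠ 0) : ofFn (μ + 1) c ≠ 0 := fun h0 =>
    h (injective_ofFn _ (h0.trans (map_zero (ofFn (μ + 1))).symm))
  refine ⟨ofFn _ c₀, ofFn _ c₁, hdegree _, hdegree _, hc.imp hne hne, fun x y hx hy hxx₀ hyg => ?_⟩
  have hval := pow_dvd_eval_of_dvd_coeff_taylor hdvd hxx₀
  have hvaly := dvd_add hval (hyg.mul_left ((ofFn (μ + 1) c₁).eval x))
  rw [eval_add, eval_mul, add_assoc, ← mul_add, add_sub_cancel] at hvaly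
  have hA₀ := abs_eval_ofFn_mul_le (T := 1) (y := 1) hx (by simp) fun i => by simpa using hc₀ i
  have hA₁ := abs_eval_ofFn_mul_le hx hy hc₁
  rw [mul_one] at hA₀
  refine Int.eq_zero_of_abs_lt_dvd hvaly ?_
  calc _ ≤ _ := abs_add_le _ _
    _ ≤ ((μ + 1 : ℕ) : ℤ) * Z + ((μ + 1 : ℕ) : ℤ) * Z := add_le_add hA₀ hA₁
    _ = ((2 * μ + 2) * Z : ℕ) := by push_cast; ring
    _ < _ := by exact_mod_cast hZp

end pigeonhole

/-! ### New roots of specialised polynomials -/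

section newRoot

variable {R S : Type*} [CommRing R] [CommRing S]

/-- `y` is a root of the specialisation `f.map φ` which is not the specialisation of a root
of `f`. -/
def IsNewRoot (φ : R →+* S) (f : R[X]) (y : S) : Prop :=
  (f.map φ).eval y = 0 ∧ ∀ r, f.eval r = 0 → φ r ≠ y

lemma IsNewRoot.of_comp {T : Type*} [CommRing T] {χ : R →+* S} {ψ : S →+* T} {f : R[X]} {y : T}
    (h : IsNewRoot (ψ.comp χ) f y) (hχ : ∀ q, ¬ IsNewRoot χ f q) :
    IsNewRoot ψ (f.map χ) y := by
  refine ⟨by rw [Polynomial.map_map, h.1], fun q hq hqy => hχ q ⟨hq, fun r hr hrq => ?_⟩⟩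
  exact h.2 r hr (by rw [RingHom.comp_apply, hrq, hqy])

lemma IsNewRoot.natDegree_ne_zero [Nontrivial S] {φ : R →+* S} {f : R[X]} {y : S}
    (h : IsNewRoot φ f y) (hf : f.Monic) : f.natDegree ≠ 0 := fun h0 => by
  have hroot := h.1
  rw [hf.natDegree_eq_zero.mp h0] at hroot
  simp at hroot

lemma map_eval_scaleRoots (φ : R →+* S) (f : R[X]) {u v : R} {y : S} (h : φ u = φ v * y) :
    φ ((f.scaleRoots v).eval u) = φ v ^ f.natDegree * (f.map φ).eval y := by
  rw [← eval₂_at_apply, h, scaleRoots_eval₂_mul, eval_map]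

lemma exists_root_of_eval_scaleRoots_eq_zero [IsDomain R] [IsIntegrallyClosed R] {f : R[X]}
    (hf : f.Monic) {u v : R} (hv : v ≠ 0) (h : (f.scaleRoots v).eval u = 0) :
    ∃ r, f.eval r = 0 ∧ v * r = u := by
  set ψ := algebraMap R (FractionRing R)
  have hinj : Function.Injective ψ := IsFractionRing.injective R _
  have hψv : ψ v ≠ 0 := (map_ne_zero_iff ψ hinj).mpr hv
  have hroot : (f.map ψ).eval (ψ u / ψ v) = 0 := by
    have hscale := map_eval_scaleRoots ψ f (mul_div_cancel₀ (ψ u) hψv).symm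
    rw [h, map_zero] at hscale
    exact (mul_eq_zero.mp hscale.symm).resolve_left (pow_ne_zero _ hψv)
  obtain ⟨r, hr⟩ := IsIntegrallyClosed.algebraMap_eq_of_integral
    (⟨f, hf, by rwa [← eval_map]⟩ : IsIntegral R (ψ u / ψ v))
  refine ⟨r, hinj ?_, hinj ?_⟩
  · rw [map_zero, ← hroot, ← hr, eval_map_apply]
  · rw [map_mul, hr, mul_div_cancel₀ _ hψv]

/-- If `u / v` is a root of `f`, it is the only candidate for `y` wherever `v` does not vanish. -/
lemma IsNewRoot.map_eq_zero [IsDomain R] [IsIntegrallyClosed R] [IsDomain S] {φ : R →+* S}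
    {f : R[X]} {y : S} (hy : IsNewRoot φ f y) (hf : f.Monic) {u v : R}
    (huv : φ u = φ v * y) (h : (f.scaleRoots v).eval u = 0) (hv : v ≠ 0) : φ v = 0 := by
  obtain ⟨r, hr, rfl⟩ := exists_root_of_eval_scaleRoots_eq_zero hf hv h
  by_contra hφv
  rw [map_mul] at huv
  exact hy.2 r hr (mul_left_cancel₀ hφv huv)

end newRoot

section auxiliary

variable {R : Type*} [CommRing R]

lemma natDegree_eval_scaleRoots_le {f : R[X][X]} {δ μ : ℕ} (hd : f.natDegree ≤ δ)
    (hc : ∀ k, (f.coeff k).natDegree ≤ δ) {u v : R[X]} (hu : u.natDegree ≤ μ)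
    (hv : v.natDegree ≤ μ) : ((f.scaleRoots v).eval u).natDegree ≤ δ + δ * μ := by
  rw [eval_eq_sum_range, natDegree_scaleRoots]
  refine natDegree_sum_le_of_forall_le _ _ fun k hk => ?_
  have hk : k ≤ f.natDegree := Nat.lt_succ_iff.mp (Finset.mem_range.mp hk)
  rw [coeff_scaleRoots]
  calc _ ≤ (f.coeff k).natDegree + (f.natDegree - k) * v.natDegree + k * u.natDegree :=
        natDegree_mul_le_of_le (natDegree_mul_le_of_le le_rfl natDegree_pow_le) natDegree_pow_le
    _ ≤ δ + (f.natDegree - k) * μ + k * μ := by gcongr; exact hc k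
    _ = δ + f.natDegree * μ := by rw [add_assoc, ← add_mul, Nat.sub_add_cancel hk]
    _ ≤ δ + δ * μ := by gcongr

lemma card_le_natDegree_of_eval_eq_zero [IsDomain R] {q : R[X]} (hq : q ≠ 0) {S : Finset R}
    (hS : ∀ x ∈ S, q.eval x = 0) : S.card ≤ q.natDegree :=
  card_le_degree_of_subset_roots fun x hx => (mem_roots hq).mpr (hS x hx)

lemma card_le_of_eval_add_mul_eq_zero [IsDomain R] [UniqueFactorizationMonoid R] {f : R[X][X]}
    (hf : f.Monic) {δ μ : ℕ} (hd : f.natDegree ≤ δ) (hc : ∀ k, (f.coeff k).natDegree ≤ δ)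
    {A₀ A₁ : R[X]} (hA₀ : A₀.natDegree ≤ μ) (hA₁ : A₁.natDegree ≤ μ) (hne : A₀ ≠ 0 ∨ A₁ ≠ 0)
    {S : Finset R}
    (hS : ∀ x ∈ S, ∃ y, A₀.eval x + A₁.eval x * y = 0 ∧ IsNewRoot (evalRingHom x) f y) :
    S.card ≤ δ + δ * μ + μ := by
  choose! y hA hy using hS
  have hratio : ∀ x ∈ S, evalRingHom x (-A₀) = evalRingHom x A₁ * y x := fun x hx => by
    rw [map_neg, neg_eq_iff_add_eq_zero]
    exact hA x hx
  by_cases hW : (f.scaleRoots A₁).eval (-A₀) = 0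
  · have hA₁0 : A₁ ≠ 0 := by
      rintro rfl
      rw [scaleRoots_zero, hf.leadingCoeff, one_smul, eval_pow, eval_X] at hW
      exact hne.elim (fun h => neg_ne_zero.mpr h (eq_zero_of_pow_eq_zero hW)) (· rfl)
    refine (card_le_natDegree_of_eval_eq_zero hA₁0 fun x hx => ?_).trans (by omega)
    exact (hy x hx).map_eq_zero hf (hratio x hx) hW hA₁0
  · refine (card_le_natDegree_of_eval_eq_zero hW fun x hx => ?_).trans
      ((natDegree_eval_scaleRoots_le hd hc (by rwa [natDegree_neg]) hA₁).trans (by omega))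
    have hscale := map_eval_scaleRoots (evalRingHom x) f (hratio x hx)
    rwa [(hy x hx).1, mul_zero] at hscale

end auxiliary

/-! ### Counting new roots along a line -/

section residueClasses

variable {f : ℤ[X][X]} {δ p N T μ : ℕ}

lemma card_le_of_isNewRoot_of_modEq (hf : f.Monic) (hd : f.natDegree ≤ δ)
    (hc : ∀ k, (f.coeff k).natDegree ≤ δ) (hp : 2 ≤ p) (hN : 1 ≤ N) (hT : 1 ≤ T)
    (hNp : 16 * N ≤ p ^ 2) (hTμ : 16 * T ≤ 4 ^ μ) {x₀ y₀ v : ℤ}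
    (hv : (p : ℤ) ∣ 1 - v * ((derivative f).map (evalRingHom x₀)).eval y₀) {S : Finset ℤ}
    (hS : ∀ x ∈ S, |x| ≤ N ∧ (p : ℤ) ∣ x - x₀ ∧
      ∃ y : ℤ, |y| ≤ T ∧ (p : ℤ) ∣ y - y₀ ∧ IsNewRoot (evalRingHom x) f y) :
    S.card ≤ δ + δ * μ + μ := by
  obtain ⟨g, hg⟩ := exists_hensel_approx hv (2 * μ + 1)
  obtain ⟨A₀, A₁, hA₀, hA₁, hne, hA⟩ := exists_auxiliary_polynomials hp hN hT hNp hTμ g x₀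
  refine card_le_of_eval_add_mul_eq_zero hf hd hc hA₀ hA₁ hne fun x hx => ?_
  obtain ⟨hxN, hxx₀, y, hyT, hyy₀, hy⟩ := hS x hx
  exact ⟨y, hA x y hxN hyT hxx₀ (hg x y hxx₀ hyy₀ hy.1), hy⟩

lemma card_le_of_abs_le_of_dvd_sub (hp : 0 < p) {x₀ : ℤ} {S : Finset ℤ}
    (hS : ∀ x ∈ S, |x| ≤ N ∧ (p : ℤ) ∣ x - x₀) : S.card ≤ 2 * N / p + 1 := by
  have hcard : S.card ≤ (Finset.Icc (0 : ℤ) ((2 * N / p : ℕ) : ℤ)).card := by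
    refine Finset.card_le_card_of_injOn (fun x => (x + N) / p) (fun x hx => ?_)
      fun x hx y hy hxy => ?_
    · have hxN := abs_le.mp (hS x hx).1
      rw [Finset.mem_coe, Finset.mem_Icc]
      push_cast
      exact ⟨Int.ediv_nonneg (by omega) (by omega),
        Int.ediv_le_ediv (by exact_mod_cast hp) (by omega)⟩
    · have hmod : (x + N) % p = (y + N) % p := Int.modEq_iff_dvd.mpr <| by
        simpa using dvd_sub (hS y hy).2 (hS x hx).2
      have hx' := Int.mul_ediv_add_emod (x + N) p
      have hy' := Int.mul_ediv_add_emod (y + N) p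
      rw [show (x + N) / (p : ℤ) = (y + N) / p from hxy, hmod] at hx'
      linarith
  rwa [Int.card_Icc, sub_zero, ← Nat.cast_succ, Int.toNat_natCast] at hcard

lemma exists_dvd_one_sub_mul_derivative (hp : p.Prime) {x y : ℤ}
    (hroot : (f.map (evalRingHom x)).eval y = 0) (hf : f.natDegree ≠ 0)
    (hx : ¬ (p : ℤ) ∣ (derivResultant f).eval x) :
    ∃ v, (p : ℤ) ∣ 1 - v * ((derivative f).map (evalRingHom x)).eval y := by
  obtain ⟨u, w, huw⟩ := exists_mul_add_derivative_mul_eq_C_derivResultant hf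
  have hbezout := congrArg (fun P : ℤ[X][X] => (P.map (evalRingHom x)).eval y) huw
  simp only [Polynomial.map_add, Polynomial.map_mul, eval_add, eval_mul, map_C, eval_C, hroot,
    zero_mul, zero_add, coe_evalRingHom] at hbezout
  obtain ⟨b, c, hbc⟩ := (Nat.prime_iff_prime_int.mp hp).coprime_iff_not_dvd.mpr hx
  refine ⟨c * (w.map (evalRingHom x)).eval y, b, ?_⟩
  rw [← hbc, ← hbezout]
  ring

lemma intCast_zmod_eq_iff {x y : ℤ} : (x : ZMod p) = y ↔ (p : ℤ) ∣ x - y := by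
  rw [← ZMod.intCast_zmod_eq_zero_iff_dvd, Int.cast_sub, sub_eq_zero]

lemma card_le_of_dvd_eval (hp : p.Prime) {g : ℤ[X]} {x₁ : ℤ} (hx₁ : ¬ (p : ℤ) ∣ g.eval x₁)
    {S : Finset ℤ} (hS : ∀ x ∈ S, |x| ≤ N ∧ (p : ℤ) ∣ g.eval x) :
    S.card ≤ (2 * N / p + 1) * g.natDegree := by
  have : Fact p.Prime := ⟨hp⟩
  set γ := g.map (Int.castRingHom (ZMod p)) with hγ
  have heval (x : ℤ) : γ.eval (x : ZMod p) = (g.eval x : ℤ) := by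
    rw [hγ, eval_intCast_map, eq_intCast, Int.cast_id]
  have hγ0 : γ ≠ 0 := fun h0 => hx₁ <| by
    rw [← ZMod.intCast_zmod_eq_zero_iff_dvd, ← heval, h0, eval_zero]
  have hroots : γ.roots.toFinset.card ≤ g.natDegree :=
    (Multiset.toFinset_card_le _).trans ((card_roots' _).trans natDegree_map_le)
  refine (Finset.card_le_mul_card_image_of_maps_to (f := fun x : ℤ => (x : ZMod p))
    (t := γ.roots.toFinset) (fun x hx => ?_) _ fun r _ => ?_).trans (Nat.mul_le_mul_left _ hroots)
  · rw [Multiset.mem_toFinset, mem_roots hγ0, IsRoot.def, heval,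
      ZMod.intCast_zmod_eq_zero_iff_dvd]
    exact (hS x hx).2
  · obtain ⟨x₀, rfl⟩ := ZMod.intCast_surjective r
    refine card_le_of_abs_le_of_dvd_sub hp.pos (x₀ := x₀) fun x hx => ?_
    rw [Finset.mem_filter] at hx
    exact ⟨(hS x hx.1).1, intCast_zmod_eq_iff.mp hx.2⟩

lemma card_le_mul_of_root_mod [Fact p.Prime] (hf : f.Monic) (hd : f.natDegree ≤ δ) {S : Finset ℤ}
    {y : ℤ → ℤ} (hy : ∀ x ∈ S, (f.map (evalRingHom x)).eval (y x) = 0) {K : ℕ}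
    (hK : ∀ x₀ y₀ : ZMod p,
      (S.filter fun x : ℤ => (x : ZMod p) = x₀ ∧ (y x : ZMod p) = y₀).card ≤ K) :
    S.card ≤ K * (p * δ) := by
  let φ (r : ZMod p) : ℤ[X] →+* ZMod p := eval₂RingHom (Int.castRingHom (ZMod p)) r
  have hφ (x : ℤ) : φ x = (Int.castRingHom (ZMod p)).comp (evalRingHom x) := by
    apply Polynomial.ringHom_ext <;> simp [φ]
  let t : Finset (ZMod p × ZMod p) :=
    Finset.univ.biUnion fun r => (f.map (φ r)).roots.toFinset.image fun s => (r, s)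
  have ht : t.card ≤ p * δ :=
    calc t.card ≤ (Finset.univ : Finset (ZMod p)).card * δ :=
          Finset.card_biUnion_le_card_mul _ _ _ fun r _ =>
            Finset.card_image_le.trans ((Multiset.toFinset_card_le _).trans
              ((card_roots' _).trans (natDegree_map_le.trans hd)))
      _ = p * δ := by rw [Finset.card_univ, ZMod.card]
  refine (Finset.card_le_mul_card_image_of_maps_to (t := t)
    (f := fun x : ℤ => ((x : ZMod p), (y x : ZMod p))) (fun x hx => ?_) K ?_).trans
    (Nat.mul_le_mul_left _ ht)
  · simp only [t, Finset.mem_biUnion, Finset.mem_univ, true_and, Finset.mem_image, Prod.mk.injEq,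
      Multiset.mem_toFinset]
    refine ⟨x, y x, ?_, rfl, rfl⟩
    rw [mem_roots (hf.map _).ne_zero, IsRoot.def, hφ, ← Polynomial.map_map, eval_intCast_map,
      Int.cast_id, hy x hx, map_zero]
  · rintro ⟨x₀, y₀⟩ _
    simpa only [Prod.mk.injEq] using hK x₀ y₀

lemma card_le_of_isNewRoot_of_not_dvd (hf : f.Monic) (hd : f.natDegree ≤ δ)
    (hc : ∀ k, (f.coeff k).natDegree ≤ δ) (hp : p.Prime) (hN : 1 ≤ N) (hT : 1 ≤ T)
    (hNp : 16 * N ≤ p ^ 2) (hTμ : 16 * T ≤ 4 ^ μ) {S : Finset ℤ}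
    (hS : ∀ x ∈ S, |x| ≤ N ∧ ∃ y : ℤ, |y| ≤ T ∧ IsNewRoot (evalRingHom x) f y)
    (hdvd : ∀ x ∈ S, ¬ (p : ℤ) ∣ (derivResultant f).eval x) :
    S.card ≤ (δ + δ * μ + μ) * (p * δ) := by
  have : Fact p.Prime := ⟨hp⟩
  choose! y hyT hy using fun x hx => (hS x hx).2
  refine card_le_mul_of_root_mod hf hd (fun x hx => (hy x hx).1) fun x₀ y₀ => ?_
  obtain hempty | ⟨x₁, hx₁⟩ :=
    Finset.eq_empty_or_nonempty (S.filter fun x : ℤ => (x : ZMod p) = x₀ ∧ (y x : ZMod p) = y₀)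
  · rw [hempty]
    exact Nat.zero_le _
  obtain ⟨hx₁S, rfl, rfl⟩ := Finset.mem_filter.mp hx₁
  obtain ⟨v, hv⟩ := exists_dvd_one_sub_mul_derivative hp (hy x₁ hx₁S).1
    ((hy x₁ hx₁S).natDegree_ne_zero hf) (hdvd x₁ hx₁S)
  refine card_le_of_isNewRoot_of_modEq hf hd hc hp.two_le hN hT hNp hTμ hv fun x hx => ?_
  obtain ⟨hxS, hxx₁, hyy₁⟩ := Finset.mem_filter.mp hx
  exact ⟨(hS x hxS).1, intCast_zmod_eq_iff.mp hxx₁, y x, hyT x hxS,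
    intCast_zmod_eq_iff.mp hyy₁, hy x hxS⟩

lemma card_le_of_isNewRoot_of_prime (hf : f.Monic) (hd : f.natDegree ≤ δ)
    (hc : ∀ k, (f.coeff k).natDegree ≤ δ) (hp : p.Prime) (hN : 1 ≤ N) (hT : 1 ≤ T)
    (hNp : 16 * N ≤ p ^ 2) (hTμ : 16 * T ≤ 4 ^ μ) {x₁ : ℤ}
    (hx₁ : ¬ (p : ℤ) ∣ (derivResultant f).eval x₁) {S : Finset ℤ}
    (hS : ∀ x ∈ S, |x| ≤ N ∧ ∃ y : ℤ, |y| ≤ T ∧ IsNewRoot (evalRingHom x) f y) :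
    S.card ≤ (2 * N / p + 1) * (derivResultant f).natDegree + (δ + δ * μ + μ) * (p * δ) := by
  rw [← Finset.card_filter_add_card_filter_not fun x => (p : ℤ) ∣ (derivResultant f).eval x]
  refine Nat.add_le_add (card_le_of_dvd_eval hp hx₁ fun x hx => ?_)
    (card_le_of_isNewRoot_of_not_dvd hf hd hc hp hN hT hNp hTμ (fun x hx => ?_) fun x hx => ?_)
  · exact ⟨(hS x (Finset.mem_filter.mp hx).1).1, (Finset.mem_filter.mp hx).2⟩
  · exact hS x (Finset.mem_filter.mp hx).1
  · exact (Finset.mem_filter.mp hx).2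

end residueClasses

lemma one_le_log {H : ℝ} (hH : 3 ≤ H) : 1 ≤ Real.log H := by
  rw [Real.le_log_iff_exp_le (by linarith)]
  linarith [Real.exp_one_lt_d9]

lemma log_mul_pow_le {K H : ℝ} (hK : 0 < K) (hH : 3 ≤ H) (b : ℕ) :
    Real.log (K * H ^ b) ≤ (|Real.log K| + b) * Real.log H := by
  rw [Real.log_mul hK.ne' (pow_pos (by linarith) b).ne', Real.log_pow, add_mul]
  refine add_le_add_left ?_ _
  exact (le_abs_self _).trans (le_mul_of_one_le_right (abs_nonneg _) (one_le_log hH))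

section lineCount

variable {f : ℤ[X][X]} {δ N : ℕ} {H : ℝ}

lemma abs_eval_derivResultant_le (hf : f.Monic) (hd : f.natDegree ≤ δ) (hH : 1 ≤ H)
    (hgr : ∀ k (x : ℤ), |(((f.coeff k).eval x : ℤ) : ℝ)| ≤ H * (1 + |(x : ℝ)|) ^ δ) (x : ℤ) :
    |(((derivResultant f).eval x : ℤ) : ℝ)| ≤
      (2 * δ).factorial * ((δ + 1) * H) ^ (2 * δ) * (1 + |(x : ℝ)|) ^ (δ * (2 * δ)) := by
  have hx : 1 ≤ (1 + |(x : ℝ)|) ^ δ := one_le_pow₀ (le_add_of_nonneg_right (abs_nonneg _))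
  rw [← coe_evalRingHom, ← derivResultant_map _ hf]
  refine (abs_derivResultant_le (natDegree_map_le.trans hd) (one_le_mul_of_one_le_of_one_le hH hx)
    fun k => ?_).trans_eq ?_
  · rw [coeff_map]
    exact hgr k x
  · rw [pow_mul (1 + |(x : ℝ)|), ← mul_assoc, mul_pow, mul_assoc]

lemma natDegree_derivResultant_le (hf : f.Monic) (hd : f.natDegree ≤ δ) (hH : 1 ≤ H)
    (hgr : ∀ k (x : ℤ), |(((f.coeff k).eval x : ℤ) : ℝ)| ≤ H * (1 + |(x : ℝ)|) ^ δ) :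
    (derivResultant f).natDegree ≤ δ * (2 * δ) :=
  natDegree_le_of_abs_eval_le (abs_eval_derivResultant_le hf hd hH hgr)

lemma exists_eval_ne_zero_of_natDegree_le {g : ℤ[X]} (hg : g ≠ 0) {a : ℕ}
    (ha : g.natDegree ≤ a) : ∃ x : ℤ, |x| ≤ a ∧ g.eval x ≠ 0 := by
  by_contra! hcon
  refine hg (eq_zero_of_natDegree_lt_card_of_eval_eq_zero' g (Finset.Icc (0 : ℤ) a)
    (fun x hx => hcon x ?_) ?_)
  · rw [Finset.mem_Icc] at hx
    exact (abs_of_nonneg hx.1).trans_le hx.2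
  · rw [Int.card_Icc]
    omega

variable (δ) in
lemma exists_prime_not_dvd_eval_derivResultant : ∃ C : ℝ, 0 < C ∧ ∀ f : ℤ[X][X], f.Monic →
    f.natDegree ≤ δ → derivResultant f ≠ 0 → ∀ H : ℝ, 3 ≤ H →
    (∀ k (x : ℤ), |(((f.coeff k).eval x : ℤ) : ℝ)| ≤ H * (1 + |(x : ℝ)|) ^ δ) →
    ∀ N : ℕ, 1 ≤ N → ∃ p : ℕ, p.Prime ∧ 4 * √N ≤ p ∧ p ≤ C * √N * Real.log H ∧
      ∃ x : ℤ, ¬ (p : ℤ) ∣ (derivResultant f).eval x := by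
  set a := δ * (2 * δ)
  set K : ℝ := (2 * δ).factorial * (δ + 1) ^ (2 * δ) * (1 + a) ^ a
  have hK : 0 < K := by positivity
  set c := |Real.log K| + (2 * δ : ℕ)
  have hc : 0 ≤ c := by positivity
  refine ⟨50 ^ 4 * (4 + c), mul_pos (by norm_num) (by linarith), fun f hf hd hD H hH hgr N hN => ?_⟩
  obtain ⟨x, hxa, hx⟩ := exists_eval_ne_zero_of_natDegree_le hD
    (natDegree_derivResultant_le hf hd (by linarith) hgr)
  have hsqrt : 1 ≤ √(N : ℝ) := Real.one_le_sqrt.mpr (by exact_mod_cast hN)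
  obtain ⟨p, hp, hle, hge, hdvd⟩ := exists_prime_not_dvd (P := 4 * √N) (by linarith) hx
  refine ⟨p, hp, hle, hge.trans ?_, x, hdvd⟩
  have hlog : Real.log |(((derivResultant f).eval x : ℤ) : ℝ)| ≤ c * Real.log H := by
    have hxa' : |(x : ℝ)| ≤ a := by exact_mod_cast hxa
    have hbound : |(((derivResultant f).eval x : ℤ) : ℝ)| ≤ K * H ^ (2 * δ) := by
      calc _ ≤ (2 * δ).factorial * ((δ + 1) * H) ^ (2 * δ) * (1 + (a : ℝ)) ^ a :=
            (abs_eval_derivResultant_le hf hd (by linarith) hgr x).trans (by gcongr)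
        _ = K * H ^ (2 * δ) := by rw [mul_pow]; ring
    have hpos : 0 < |(((derivResultant f).eval x : ℤ) : ℝ)| :=
      abs_pos.mpr (by exact_mod_cast hx)
    exact (Real.log_le_log hpos hbound).trans (log_mul_pow_le hK hH _)
  have hL := one_le_log hH
  calc 50 ^ 4 * (4 * √N + Real.log |(((derivResultant f).eval x : ℤ) : ℝ)|)
      ≤ 50 ^ 4 * (4 * (√N * Real.log H) + c * (√N * Real.log H)) := by
        gcongr
        · exact le_mul_of_one_le_right (by positivity) hL
        · exact hlog.trans (by gcongr; exact le_mul_of_one_le_left (by linarith) hsqrt)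
    _ = 50 ^ 4 * (4 + c) * √N * Real.log H := by ring

lemma exists_height_exponent (hH : 3 ≤ H) (hNH : (N : ℝ) ≤ H) : ∃ T μ : ℕ, 1 ≤ T ∧
    2 * (H * (1 + (N : ℝ)) ^ δ) ≤ T ∧ 16 * T ≤ 4 ^ μ ∧ μ ≤ (2 * δ + 7) * Real.log H := by
  have hL := one_le_log hH
  set M := H * (1 + (N : ℝ)) ^ δ with hM
  have hM1 : 1 ≤ M :=
    one_le_mul_of_one_le_of_one_le (by linarith) (one_le_pow₀ (by simp))
  have hMH : M ≤ H ^ (2 * δ + 1) := by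
    rw [hM, pow_succ, pow_mul, mul_comm]
    gcongr
    nlinarith
  have hT : (⌈2 * M⌉₊ : ℝ) < 2 * M + 1 := Nat.ceil_lt_add_one (by linarith)
  have hμ : (⌈(2 * δ + 6) * Real.log H⌉₊ : ℝ) < (2 * δ + 6) * Real.log H + 1 :=
    Nat.ceil_lt_add_one (by positivity)
  refine ⟨⌈2 * M⌉₊, ⌈(2 * δ + 6) * Real.log H⌉₊, Nat.one_le_ceil_iff.mpr (by linarith),
    Nat.le_ceil _, ?_, by linarith⟩
  have hpow : (16 : ℝ) * ⌈2 * M⌉₊ ≤ 4 ^ ⌈(2 * δ + 6) * Real.log H⌉₊ := by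
    calc (16 : ℝ) * ⌈2 * M⌉₊ ≤ 3 ^ 5 * H ^ (2 * δ + 1) := by linarith
      _ ≤ H ^ 5 * H ^ (2 * δ + 1) := by gcongr
      _ = Real.exp ((2 * δ + 6 : ℕ) * Real.log H) := by
          rw [Real.exp_nat_mul, Real.exp_log (by linarith), ← pow_add]
          ring
      _ ≤ Real.exp (⌈(2 * δ + 6) * Real.log H⌉₊ : ℝ) := by
          push_cast
          exact Real.exp_le_exp.mpr (Nat.le_ceil _)
      _ = Real.exp 1 ^ ⌈(2 * δ + 6) * Real.log H⌉₊ := by rw [← Real.exp_nat_mul, mul_one]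
      _ ≤ 4 ^ ⌈(2 * δ + 6) * Real.log H⌉₊ := by
          gcongr
          linarith [Real.exp_one_lt_d9]
  exact_mod_cast hpow

lemma abs_le_of_isNewRoot (hf : f.Monic) (hH : 1 ≤ H)
    (hgr : ∀ k (x : ℤ), |(((f.coeff k).eval x : ℤ) : ℝ)| ≤ H * (1 + |(x : ℝ)|) ^ δ) {x y : ℤ}
    (hx : |x| ≤ N) (hy : IsNewRoot (evalRingHom x) f y) :
    |(y : ℝ)| ≤ 2 * (H * (1 + (N : ℝ)) ^ δ) := by
  have hxN : |(x : ℝ)| ≤ N := by exact_mod_cast hx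
  refine abs_root_le (hf.map _) ?_ (fun k => ?_) hy.1
  · exact one_le_mul_of_one_le_of_one_le hH (one_le_pow₀ (by simp))
  · rw [coeff_map]
    exact (hgr k x).trans (by gcongr)

lemma cast_two_mul_div_add_one_le {p : ℕ} (hN : 1 ≤ N) (hp : 4 * √N ≤ p) :
    ((2 * N / p + 1 : ℕ) : ℝ) ≤ 2 * √N := by
  have hsqrt : 1 ≤ √(N : ℝ) := Real.one_le_sqrt.mpr (by exact_mod_cast hN)
  have hdiv : ((2 * N : ℕ) : ℝ) / p ≤ √N := by
    rw [div_le_iff₀ (by linarith)]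
    calc ((2 * N : ℕ) : ℝ) = 2 * (√N * √N) := by rw [Real.mul_self_sqrt] <;> simp
      _ ≤ √N * (4 * √N) := by nlinarith
      _ ≤ √N * p := by gcongr
  push_cast
  linarith [(Nat.cast_div_le (m := 2 * N) (n := p) (α := ℝ)).trans hdiv]

variable (δ) in
lemma exists_card_le_of_isNewRoot : ∃ C : ℝ, 0 < C ∧ ∀ f : ℤ[X][X], f.Monic →
    f.natDegree ≤ δ → derivResultant f ≠ 0 → ∀ H : ℝ, 3 ≤ H →
    (∀ k (x : ℤ), |(((f.coeff k).eval x : ℤ) : ℝ)| ≤ H * (1 + |(x : ℝ)|) ^ δ) →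
    ∀ N : ℕ, 1 ≤ N → (N : ℝ) ≤ H → ∀ S : Finset ℤ,
    (∀ x ∈ S, |x| ≤ N ∧ ∃ y, IsNewRoot (evalRingHom x) f y) →
    (S.card : ℝ) ≤ C * Real.log H ^ 2 * √N := by
  obtain ⟨c, hc, hprime⟩ := exists_prime_not_dvd_eval_derivResultant δ
  set a := δ * (2 * δ)
  set b : ℝ := δ + (δ + 1) * (2 * δ + 7)
  refine ⟨2 * a + b * (c * δ) + 1, by positivity, fun f hf hd hD H hH hgr N hN hNH S hS => ?_⟩
  have hL := one_le_log hH
  set L := Real.log H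
  obtain ⟨p, hp, hle, hge, x₁, hx₁⟩ := hprime f hf hd hD H hH hgr N hN
  obtain ⟨T, μ, hT, hMT, hTμ, hμ⟩ := exists_height_exponent (δ := δ) hH hNH
  have hNp : 16 * N ≤ p ^ 2 := by
    have hsq : (16 : ℝ) * N ≤ (p : ℝ) ^ 2 := by
      calc (16 : ℝ) * N = (4 * √N) ^ 2 := by rw [mul_pow, Real.sq_sqrt (by positivity)]; norm_num
        _ ≤ (p : ℝ) ^ 2 := by gcongr
    exact_mod_cast hsq
  have hcount := card_le_of_isNewRoot_of_prime hf hd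
    (fun k => natDegree_le_of_abs_eval_le (hgr k)) hp hN hT hNp hTμ hx₁ fun x hx => by
      obtain ⟨hxN, y, hy⟩ := hS x hx
      refine ⟨hxN, y, ?_, hy⟩
      exact_mod_cast (abs_le_of_isNewRoot hf (by linarith) hgr hxN hy).trans hMT
  have hheight : (δ + δ * μ + μ : ℝ) ≤ b * L := by
    calc (δ + δ * μ + μ : ℝ) = δ + (δ + 1) * μ := by ring
      _ ≤ δ * L + (δ + 1) * ((2 * δ + 7) * L) := by
          gcongr
          exact le_mul_of_one_le_right (by positivity) hL
      _ = b * L := by ring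
  calc (S.card : ℝ) ≤ (2 * N / p + 1 : ℕ) * (derivResultant f).natDegree +
        (δ + δ * μ + μ) * (p * δ) := by exact_mod_cast hcount
    _ ≤ 2 * √N * a + b * L * (c * √N * L * δ) := by
        gcongr
        · exact cast_two_mul_div_add_one_le hN hle
        · exact natDegree_derivResultant_le hf hd (by linarith) hgr
    _ ≤ 2 * √N * a * L ^ 2 + b * L * (c * √N * L * δ) + L ^ 2 * √N := by
        refine (add_le_add_left ?_ _).trans (le_add_of_nonneg_right (by positivity))
        exact le_mul_of_one_le_right (by positivity) (one_le_pow₀ hL)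
    _ = (2 * a + b * (c * δ) + 1) * L ^ 2 * √N := by ring

end lineCount

/-! ### Counting new roots at integer points -/

section interpolation

/-- Clearing denominators in Lagrange interpolation. -/
lemma exists_interpolation {R : Type*} [CommRing R] [IsDomain R] {k : ℕ} {c : Fin k → R}
    (hc : Function.Injective c) :
    ∃ (d : R) (L : Fin k → R[X]), d ≠ 0 ∧ (∀ i, (L i).natDegree ≤ k - 1) ∧
      ∀ q : R[X], q.natDegree < k → C d * q = ∑ i, C (q.eval (c i)) * L i := by
  set w : Fin k → R := fun i => (Lagrange.nodal (Finset.univ.erase i) c).eval (c i)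
  set L : Fin k → R[X] := fun i =>
    C (∏ l ∈ Finset.univ.erase i, w l) * Lagrange.nodal (Finset.univ.erase i) c with hL
  have hLdeg : ∀ i, (L i).natDegree ≤ k - 1 := fun i =>
    (natDegree_C_mul_le _ _).trans (by simp [Lagrange.natDegree_nodal])
  have hLself : ∀ j, (L j).eval (c j) = ∏ l, w l := fun j => by
    rw [hL, eval_mul, eval_C, ← Finset.mul_prod_erase _ w (Finset.mem_univ j), mul_comm]
  have hLne : ∀ i j, i ≠ j → (L i).eval (c j) = 0 := fun i j hij => by
    rw [hL, eval_mul, Lagrange.eval_nodal_at_node (by simpa using hij.symm), mul_zero]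
  refine ⟨∏ l, w l, L, ?_, hLdeg, fun q hq => ?_⟩
  · refine Finset.prod_ne_zero_iff.mpr fun l _ => Lagrange.eval_nodal_not_at_node fun i hi h => ?_
    exact (Finset.ne_of_mem_erase hi) (hc h).symm
  rw [← sub_eq_zero]
  refine eq_zero_of_natDegree_lt_card_of_eval_eq_zero _ hc (fun j => ?_) ?_
  · rw [eval_sub, eval_mul, eval_C, eval_finsetSum, sub_eq_zero, Finset.sum_eq_single j]
    · rw [eval_mul, eval_C, hLself, mul_comm]
    · intro i _ hij
      rw [eval_mul, hLne i j hij, mul_zero]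
    · simp
  · rw [Fintype.card_fin]
    refine (natDegree_sub_le _ _).trans_lt (max_lt ((natDegree_C_mul_le _ _).trans_lt hq) ?_)
    refine (natDegree_sum_le_of_forall_le (n := k - 1) _ _ fun i _ => ?_).trans_lt (by omega)
    exact (natDegree_C_mul_le _ _).trans (hLdeg i)

end interpolation

section specialisation

variable {m : ℕ}

lemma exists_injective_substCoord_ne_zero (i : Fin (m + 1)) {p : ZX (m + 1)}
    (hp : p ≠ 0) {a : ℕ} (hdeg : p.degreeOf i ≤ a) (k : ℕ) :
    ∃ c : Fin k → ℤ, Function.Injective c ∧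
      ∀ l, |c l| ≤ (a + k : ℕ) ∧ substCoord i (c l) p ≠ 0 := by
  classical
  obtain ⟨z, hz⟩ : ∃ z, MvPolynomial.eval z p ≠ 0 := by
    by_contra! h
    exact hp (MvPolynomial.funext fun x => by rw [h x, map_zero])
  set g := lineEval i (i.removeNth z) p
  have hg : ∀ s, g.eval s = MvPolynomial.eval (i.insertNth s (i.removeNth z)) p :=
    fun s => eval_lineEval i _ s p
  have hg0 : g ≠ 0 := fun h0 => hz <| by
    rw [← Fin.insertNth_self_removeNth i z, ← hg, h0, eval_zero]
  set T := Finset.Icc (0 : ℤ) (a + k : ℕ) \ g.roots.toFinset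
  have hT : k ≤ T.card := by
    have hsdiff : _ ≤ T.card :=
      Finset.le_card_sdiff g.roots.toFinset (Finset.Icc (0 : ℤ) (a + k : ℕ))
    have hroots : g.roots.toFinset.card ≤ a := (Multiset.toFinset_card_le _).trans <|
      (card_roots' _).trans <| (natDegree_lineEval_le i _ p).trans hdeg
    rw [Int.card_Icc] at hsdiff
    omega
  obtain ⟨T', hT'T, hT'⟩ := Finset.exists_subset_card_eq hT
  refine ⟨fun l => T'.orderEmbOfFin hT' l, (T'.orderEmbOfFin hT').injective, fun l => ?_⟩
  obtain ⟨hmem, hroot⟩ := Finset.mem_sdiff.mp (hT'T (Finset.orderEmbOfFin_mem T' hT' l))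
  rw [Finset.mem_Icc] at hmem
  refine ⟨(abs_of_nonneg hmem.1).trans_le hmem.2, fun h0 => hroot ?_⟩
  rw [Multiset.mem_toFinset, mem_roots hg0, IsRoot.def, hg, ← eval_substCoord, h0, map_zero]

lemma evalRingHom_comp_lineEval (i : Fin (m + 1)) (x : Fin m → ℤ) (s : ℤ) :
    (evalRingHom s).comp (lineEval i x).toRingHom =
      MvPolynomial.eval (i.insertNth s x) :=
  RingHom.ext fun p => eval_lineEval i x s p

lemma eval_comp_substCoord (i : Fin (m + 1)) (x : Fin m → ℤ) (c : ℤ) :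
    (MvPolynomial.eval x).comp (substCoord i c).toRingHom =
      (evalRingHom c).comp (lineEval i x).toRingHom := by
  rw [evalRingHom_comp_lineEval]
  exact RingHom.ext fun p => eval_substCoord i c x p

lemma eval_map_eval_insertNth (E : (ZX (m + 1))[X]) (i : Fin (m + 1))
    (x : Fin m → ℤ) (q : ℤ[X]) (s : ℤ) :
    (E.map (MvPolynomial.eval (i.insertNth s x))).eval (q.eval s) =
      ((E.map (lineEval i x).toRingHom).eval q).eval s := by
  rw [← evalRingHom_comp_lineEval, ← Polynomial.map_map, ← coe_evalRingHom s, eval_map,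
    eval₂_at_apply]

/-- Each point of `V` carries a whole line of zeros of `W`. -/
lemma card_mul_le_of_lineEval_eq_zero {W : ZX (m + 1)} (hW : W ≠ 0) {a : ℕ}
    (hdeg : ∀ j, W.degreeOf j ≤ a) {N : ℕ} (hN : 1 ≤ N) {V : Finset (Fin m → ℤ)}
    (hV : V ⊆ intBox m N) (hzero : ∀ x ∈ V, lineEval 0 x W = 0) :
    (V.card : ℝ) * N ≤ 3 ^ (m + 1) * ((m + 1) * a) * N ^ m := by
  classical
  set S : Finset (Fin (m + 1) → ℤ) :=
    (V ×ˢ Finset.Icc (-(N : ℤ)) N).image fun xs => Fin.insertNth 0 xs.2 xs.1 with hS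
  have hScard : S.card = V.card * (2 * N + 1) := by
    rw [hS, Finset.card_image_of_injective, Finset.card_product, card_Icc_neg_self]
    rintro ⟨x, s⟩ ⟨y, t⟩ h
    obtain ⟨rfl, rfl⟩ := Fin.cons_inj.mp (by simpa only [Fin.insertNth_zero'] using h)
    rfl
  have hSmem : ∀ z ∈ S, z ∈ intBox (m + 1) N ∧ MvPolynomial.eval z W = 0 := by
    simp only [hS, Finset.mem_image, Finset.mem_product, Finset.mem_Icc, Prod.exists]
    rintro _ ⟨x, s, ⟨hx, hs⟩, rfl⟩
    refine ⟨mem_intBox.mpr fun j => ?_, by rw [← eval_lineEval, hzero x hx, eval_zero]⟩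
    refine Fin.succAboveCases 0 ?_ (fun k => ?_) j
    · simpa [abs_le] using hs
    · simpa using mem_intBox.mp (hV hx) k
  have hbound := card_zeros_mul_le hW hdeg hN (fun z hz => (hSmem z hz).1)
    fun z hz => (hSmem z hz).2
  rw [hScard] at hbound
  push_cast at hbound
  refine le_of_mul_le_mul_right (a := (N : ℝ)) ?_ (by exact_mod_cast hN)
  calc (V.card : ℝ) * N * N ≤ V.card * (2 * N + 1) * N := by gcongr; linarith
    _ ≤ _ := by rw [mul_assoc _ ((N : ℝ) ^ m), ← pow_succ]; exact hbound

end specialisation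

section tuple

variable {σ R : Type*} [CommRing R]

lemma degreeOf_eval_scaleRoots_le {f : (MvPolynomial σ R)[X]} {δ μ ν : ℕ} (hd : f.natDegree ≤ δ)
    (j : σ) (hc : ∀ k, (f.coeff k).degreeOf j ≤ μ) {u : MvPolynomial σ R}
    (hu : u.degreeOf j ≤ ν) (v : R) :
    ((f.scaleRoots (MvPolynomial.C v)).eval u).degreeOf j ≤ μ + δ * ν := by
  rw [eval_eq_sum_range, natDegree_scaleRoots]
  refine (MvPolynomial.degreeOf_sum_le _ _ _).trans (Finset.sup_le fun k hk => ?_)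
  have hk : k ≤ f.natDegree := Nat.lt_succ_iff.mp (Finset.mem_range.mp hk)
  rw [coeff_scaleRoots, ← map_pow, mul_comm (f.coeff k)]
  calc _ ≤ (MvPolynomial.C (v ^ (f.natDegree - k)) * f.coeff k).degreeOf j +
        (u ^ k).degreeOf j := MvPolynomial.degreeOf_mul_le _ _ _
    _ ≤ μ + k * ν := add_le_add ((MvPolynomial.degreeOf_C_mul_le _ _ _).trans (hc k))
        ((MvPolynomial.degreeOf_pow_le _ _ _).trans (Nat.mul_le_mul_left _ hu))
    _ ≤ μ + δ * ν := by gcongr; omega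

lemma degreeOf_aeval_X_le [Nontrivial R] (i j : σ) (g : R[X]) :
    (aeval (MvPolynomial.X i : MvPolynomial σ R) g).degreeOf j ≤ g.natDegree := by
  classical
  rw [aeval_eq_sum_range]
  refine (MvPolynomial.degreeOf_sum_le _ _ _).trans (Finset.sup_le fun k hk => ?_)
  rw [MvPolynomial.smul_eq_C_mul]
  have hk : k ≤ g.natDegree := Nat.lt_succ_iff.mp (Finset.mem_range.mp hk)
  have hX : (MvPolynomial.X i : MvPolynomial σ R).degreeOf j ≤ 1 := by
    rw [MvPolynomial.degreeOf_X]
    split <;> omega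
  calc _ ≤ ((MvPolynomial.X i : MvPolynomial σ R) ^ k).degreeOf j :=
        MvPolynomial.degreeOf_C_mul_le _ _ _
    _ ≤ k * 1 := (MvPolynomial.degreeOf_pow_le _ _ _).trans (Nat.mul_le_mul_left _ hX)
    _ ≤ g.natDegree := by omega

lemma degreeOf_rename_succAbove_le {m : ℕ} (i : Fin (m + 1)) {p : MvPolynomial (Fin m) R} {a : ℕ}
    (hp : ∀ j, p.degreeOf j ≤ a) (j : Fin (m + 1)) :
    (MvPolynomial.rename i.succAbove p).degreeOf j ≤ a := by
  classical
  refine i.succAboveCases ?_ (fun k => ?_) j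
  · have hi : i ∉ (MvPolynomial.rename i.succAbove p).vars := fun h => by
      obtain ⟨k, -, hk⟩ := MvPolynomial.mem_vars_rename _ _ h
      exact Fin.succAbove_ne i k hk
    rw [MvPolynomial.vars_def, Multiset.mem_toFinset] at hi
    rw [MvPolynomial.degreeOf_def, Multiset.count_eq_zero_of_notMem hi]
    exact Nat.zero_le a
  · rw [MvPolynomial.degreeOf_rename_of_injective Fin.succAbove_right_injective]
    exact hp k

end tuple

section newRootLine

variable {m δ : ℕ} {E : (ZX (m + 1))[X]}

/-- The polynomial roots `q` are interpolated, up to the denominator `d`, by a single polynomial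
`Q`, so that `E(Q / d)` vanishes on the lines above `V`. -/
lemma card_mul_le_of_isNewRoot_lineEval (hE : E.Monic) (hd : E.natDegree ≤ δ)
    (hc : ∀ k j, (E.coeff k).degreeOf j ≤ δ) {c : Fin (δ + 1) → ℤ} (hcinj : Function.Injective c)
    {ρ : Fin (δ + 1) → ZX m} (hρ : ∀ l j, (ρ l).degreeOf j ≤ δ) {N : ℕ}
    (hN : 1 ≤ N) {V : Finset (Fin m → ℤ)} (hV : V ⊆ intBox m N)
    (hroot : ∀ x ∈ V, ∃ q : ℤ[X], q.natDegree ≤ δ ∧ IsNewRoot (lineEval 0 x).toRingHom E q ∧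
      ∀ l, MvPolynomial.eval x (ρ l) = q.eval (c l)) :
    (V.card : ℝ) * N ≤ 3 ^ (m + 1) * ((m + 1) * (δ + δ * (δ + δ) : ℕ)) * N ^ m := by
  obtain ⟨d, L, hd0, hL, hinterp⟩ := exists_interpolation hcinj
  set Q : ZX (m + 1) :=
    ∑ l, MvPolynomial.rename (Fin.succAbove 0) (ρ l) * aeval (MvPolynomial.X 0) (L l) with hQ
  have hQdeg : ∀ j, Q.degreeOf j ≤ δ + δ := fun j =>
    (MvPolynomial.degreeOf_sum_le _ _ _).trans <| Finset.sup_le fun l _ =>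
      (MvPolynomial.degreeOf_mul_le _ _ _).trans <| add_le_add
        (degreeOf_rename_succAbove_le 0 (hρ l) j) ((degreeOf_aeval_X_le 0 j _).trans (hL l))
  choose! q hqdeg hqroot hq using hroot
  have hQline : ∀ x ∈ V, lineEval 0 x Q = lineEval 0 x (MvPolynomial.C d) * q x := fun x hx => by
    have hCd : lineEval 0 x (MvPolynomial.C d) = C d := by simp [lineEval]
    rw [hCd, hinterp (q x) (Nat.lt_succ_of_le (hqdeg x hx)), hQ, map_sum]
    exact Finset.sum_congr rfl fun l _ => by
      rw [map_mul, lineEval_rename, lineEval_aeval_X, hq x hx]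
  have hCd0 : (MvPolynomial.C d : ZX (m + 1)) ≠ 0 :=
    MvPolynomial.C_ne_zero.mpr hd0
  by_cases hW : (E.scaleRoots (MvPolynomial.C d)).eval Q = 0
  · have hVempty : V = ∅ := Finset.eq_empty_of_forall_notMem fun x hx => by
      have h0 := (hqroot x hx).map_eq_zero hE (hQline x hx) hW hCd0
      exact hd0 (by simpa [lineEval] using h0)
    rw [hVempty, Finset.card_empty, Nat.cast_zero, zero_mul]
    positivity
  · refine card_mul_le_of_lineEval_eq_zero hW
      (fun j => degreeOf_eval_scaleRoots_le hd j (fun k => hc k j) (hQdeg j) d) hN hV fun x hx => ?_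
    have hscale := map_eval_scaleRoots (lineEval 0 x).toRingHom E (hQline x hx)
    rwa [(hqroot x hx).1, mul_zero] at hscale

end newRootLine

/-- `E` is monic of degree at most `δ` in `Y`, and its coefficients satisfy `HasGrowth` with
constant `H` and exponent `δ`: the class of polynomials over which the counting bounds are
uniform. -/
structure IsMonicOfGrowth {n : ℕ} (E : (ZX n)[X]) (δ : ℕ) (H : ℝ) : Prop where
  monic : E.Monic
  natDegree_le : E.natDegree ≤ δ
  growth : ∀ k, HasGrowth (E.coeff k) H δ

namespace IsMonicOfGrowth

variable {m n δ : ℕ} {H : ℝ}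

lemma nonneg {E : (ZX n)[X]} (hE : IsMonicOfGrowth E δ H) : 0 ≤ H :=
  (hE.growth 0).nonneg

lemma degreeOf_coeff_le {E : (ZX n)[X]} (hE : IsMonicOfGrowth E δ H) (k : ℕ)
    (j : Fin n) : (E.coeff k).degreeOf j ≤ δ :=
  (hE.growth k).degreeOf_le j

lemma degreeOf_derivResultant_le {E : (ZX n)[X]} (hE : IsMonicOfGrowth E δ H)
    (hH : 1 ≤ H) (j : Fin n) : (derivResultant E).degreeOf j ≤ δ * (2 * δ) :=
  (HasGrowth.derivResultant hE.monic hE.natDegree_le hH hE.growth).degreeOf_le j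

lemma degreeOf_le_of_eval_eq_zero {E : (ZX n)[X]} (hE : IsMonicOfGrowth E δ H)
    (hH : 1 ≤ H) {r : ZX n} (hr : E.eval r = 0) (j : Fin n) :
    r.degreeOf j ≤ δ := by
  suffices HasGrowth r (2 * H) δ from this.degreeOf_le j
  intro x
  rw [mul_assoc]
  refine abs_root_le (hE.monic.map (MvPolynomial.eval x))
    (one_le_mul_of_one_le_of_one_le hH (one_le_pow₀ (one_le_coordWeight x))) (fun k => ?_) ?_
  · rw [coeff_map]
    exact hE.growth k x
  · rw [eval_map_apply, hr, map_zero]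

variable {E : (ZX (m + 1))[X]}

lemma natDegree_le_of_eval_map_lineEval_eq_zero (hE : IsMonicOfGrowth E δ H) (hH : 1 ≤ H)
    (i : Fin (m + 1)) {x : Fin m → ℤ} {q : ℤ[X]}
    (hq : (E.map (lineEval i x).toRingHom).eval q = 0) : q.natDegree ≤ δ := by
  refine natDegree_le_of_abs_eval_le (A := 2 * (H * coordWeight x ^ δ)) fun s => ?_
  rw [mul_assoc 2]
  refine abs_root_le (hE.monic.map (MvPolynomial.eval (i.insertNth s x)))
    (one_le_mul_of_one_le_of_one_le
      (one_le_mul_of_one_le_of_one_le hH (one_le_pow₀ (one_le_coordWeight x)))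
      (one_le_pow₀ (le_add_of_nonneg_right (abs_nonneg (s : ℝ))))) (fun k => ?_) ?_
  · rw [coeff_map, ← eval_lineEval]
    exact (hE.growth k).abs_eval_lineEval_le i x s
  · rw [eval_map_eval_insertNth, hq, eval_zero]

lemma map_substCoord (hE : IsMonicOfGrowth E δ H) (i : Fin (m + 1)) {c : ℤ} {A : ℝ}
    (hc : |(c : ℝ)| ≤ A) :
    IsMonicOfGrowth (E.map (substCoord i c).toRingHom) δ ((1 + A) ^ δ * H) where
  monic := hE.monic.map _
  natDegree_le := natDegree_map_le.trans hE.natDegree_le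
  growth k x := by
    have hH := hE.nonneg
    have hw := zero_le_one.trans (one_le_coordWeight x)
    rw [coeff_map, mul_comm _ H]
    refine ((hE.growth k).substCoord i c x).trans ?_
    gcongr

lemma abs_eval_coeff_map_lineEval_le (hE : IsMonicOfGrowth E δ H) (hH : 3 ≤ H) {N : ℕ}
    (hNH : (N : ℝ) ≤ H) (i : Fin (m + 1)) {x : Fin m → ℤ} (hx : x ∈ intBox m N) (k : ℕ) (s : ℤ) :
    |((((E.map (lineEval i x).toRingHom).coeff k).eval s : ℤ) : ℝ)| ≤
      H ^ (1 + 2 * m * δ) * (1 + |(s : ℝ)|) ^ δ := by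
  rw [coeff_map]
  refine ((hE.growth k).abs_eval_lineEval_le i x s).trans ?_
  have hw := zero_le_one.trans (one_le_coordWeight x)
  gcongr
  calc H * coordWeight x ^ δ ≤ H * ((1 + (N : ℝ)) ^ m) ^ δ := by
        gcongr
        exact coordWeight_le_of_mem_intBox hx
    _ ≤ H * ((H ^ 2) ^ m) ^ δ := by
        gcongr
        nlinarith
    _ = H ^ (1 + 2 * m * δ) := by rw [← pow_mul, ← pow_mul, pow_add, pow_one, mul_assoc]

end IsMonicOfGrowth

/-- The bound `C log² H · N ^ (n - 1/2)` for the number of points of the box at which a polynomial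
of the class `IsMonicOfGrowth` acquires a new integer root. It is written with `√N` on the left,
so that it makes sense for `n = 0`. -/
def NewRootBound (n δ : ℕ) (C : ℝ) : Prop :=
  ∀ (E : (ZX n)[X]) (H : ℝ), 3 ≤ H → IsMonicOfGrowth E δ H →
    derivResultant E ≠ 0 → ∀ N : ℕ, 1 ≤ N → (N : ℝ) ≤ H → ∀ S ⊆ intBox n N,
    (∀ x ∈ S, ∃ t, IsNewRoot (MvPolynomial.eval x) E t) →
    (S.card : ℝ) * √N ≤ C * Real.log H ^ 2 * N ^ n

lemma sqrt_natCast_le_self {N : ℕ} (hN : 1 ≤ N) : √(N : ℝ) ≤ N :=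
  Real.sqrt_le_iff.mpr ⟨by positivity, le_self_pow₀ (by exact_mod_cast hN) two_ne_zero⟩

section badLines

variable {m δ : ℕ} {C₀ H : ℝ} {E : (ZX (m + 1))[X]} {N : ℕ}

lemma NewRootBound.card_mul_le_of_substCoord (h : NewRootBound m δ C₀) (hC₀ : 0 ≤ C₀) (hH : 3 ≤ H)
    (hE : IsMonicOfGrowth E δ H) {c : ℤ} {A : ℝ} (hc : |(c : ℝ)| ≤ A)
    (hD : substCoord 0 c (derivResultant E) ≠ 0) (hN : 1 ≤ N) (hNH : (N : ℝ) ≤ H)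
    {S : Finset (Fin m → ℤ)} (hS : S ⊆ intBox m N)
    (hroot : ∀ x ∈ S, ∃ t, IsNewRoot (MvPolynomial.eval x) (E.map (substCoord 0 c).toRingHom) t) :
    (S.card : ℝ) * √N ≤ C₀ * (|Real.log ((1 + A) ^ δ)| + 1) ^ 2 * Real.log H ^ 2 * N ^ m := by
  set K := (1 + A) ^ δ
  have hK : 1 ≤ K := one_le_pow₀ (by linarith [abs_nonneg (c : ℝ)])
  have hHK : H ≤ K * H := le_mul_of_one_le_left (by linarith) hK
  have hlog0 : 0 ≤ Real.log (K * H) := zero_le_one.trans (one_le_log (hH.trans hHK))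
  have hlog : Real.log (K * H) ≤ (|Real.log K| + 1) * Real.log H := by
    simpa using log_mul_pow_le (zero_lt_one.trans_le hK) hH 1
  refine (h _ _ (hH.trans hHK) (hE.map_substCoord 0 hc) ?_ N hN (hNH.trans hHK) S hS hroot).trans ?_
  · rwa [derivResultant_map _ hE.monic]
  · rw [mul_assoc C₀ ((_ + 1) ^ 2), ← mul_pow]
    gcongr

lemma card_mul_le_of_subset_biUnion {α ι κ : Type*} [DecidableEq α] {B : Finset α} {s : Finset ι}
    {t : Finset κ} {T : ι → Finset α} {V : κ → Finset α} (hB : B ⊆ s.biUnion T ∪ t.biUnion V)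
    {r a b : ℝ} (hr : 0 ≤ r) (hT : ∀ i ∈ s, ((T i).card : ℝ) * r ≤ a)
    (hV : ∀ i ∈ t, ((V i).card : ℝ) * r ≤ b) :
    (B.card : ℝ) * r ≤ s.card * a + t.card * b := by
  have hcard : B.card ≤ ∑ i ∈ s, (T i).card + ∑ i ∈ t, (V i).card :=
    (Finset.card_le_card hB).trans <| (Finset.card_union_le _ _).trans <|
      add_le_add Finset.card_biUnion_le Finset.card_biUnion_le
  calc (B.card : ℝ) * r ≤ (∑ i ∈ s, ((T i).card : ℝ) + ∑ i ∈ t, ((V i).card : ℝ)) * r := by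
        gcongr
        exact_mod_cast hcard
    _ = ∑ i ∈ s, ((T i).card : ℝ) * r + ∑ i ∈ t, ((V i).card : ℝ) * r := by
        rw [add_mul, Finset.sum_mul, Finset.sum_mul]
    _ ≤ s.card * a + t.card * b := by
        rw [← nsmul_eq_mul, ← nsmul_eq_mul]
        exact add_le_add (Finset.sum_le_card_nsmul _ _ _ hT) (Finset.sum_le_card_nsmul _ _ _ hV)

lemma card_piFinset_roots_le {k : ℕ} {R : Type*} [CommRing R] [IsDomain R] [DecidableEq R]
    {f : Fin k → R[X]} (hf : ∀ l, (f l).natDegree ≤ δ) :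
    (Fintype.piFinset fun l => (f l).roots.toFinset).card ≤ δ ^ k := by
  rw [Fintype.card_piFinset]
  calc _ ≤ ∏ _l : Fin k, δ := Finset.prod_le_prod' fun l _ =>
        (Multiset.toFinset_card_le _).trans ((card_roots' _).trans (hf l))
    _ = δ ^ k := by simp

/-- Specialise the first variable to `δ + 1` constants `c l`. Either some value `q (c l)` of the new
root `q` is itself a new root, or all of them come from roots `ρ l` of the specialised
polynomials; there are only boundedly many tuples `ρ`. -/
lemma card_mul_le_of_substCoord_cover (hE : IsMonicOfGrowth E δ H) (hH : 1 ≤ H)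
    {c : Fin (δ + 1) → ℤ} (hcinj : Function.Injective c) (hN : 1 ≤ N) {B : Finset (Fin m → ℤ)}
    (hB : B ⊆ intBox m N) {q : (Fin m → ℤ) → ℤ[X]}
    (hq : ∀ x ∈ B, IsNewRoot (lineEval 0 x).toRingHom E (q x)) {a : ℝ}
    (hT : ∀ l, ∀ T ⊆ B, (∀ x ∈ T, ∃ t,
      IsNewRoot (MvPolynomial.eval x) (E.map (substCoord 0 (c l)).toRingHom) t) →
      (T.card : ℝ) * √N ≤ a) :
    (B.card : ℝ) * √N ≤ (δ + 1) * a +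
      δ ^ (δ + 1) * (3 ^ (m + 1) * ((m + 1) * (δ + δ * (δ + δ) : ℕ)) * N ^ m) := by
  classical
  set El := fun l => E.map (substCoord 0 (c l)).toRingHom
  have hElmonic : ∀ l, (El l).Monic := fun l => hE.monic.map _
  set T := fun l => {x ∈ B | IsNewRoot (MvPolynomial.eval x) (El l) ((q x).eval (c l))}
  set R := Fintype.piFinset fun l => (El l).roots.toFinset
  set V := fun ρ : Fin (δ + 1) → ZX m =>
    {x ∈ B | ∀ l, MvPolynomial.eval x (ρ l) = (q x).eval (c l)}
  have hcover : B ⊆ Finset.univ.biUnion T ∪ R.biUnion V := fun x hx => by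
    by_contra hx'
    have hnotT : ∀ l, ∃ r, (El l).eval r = 0 ∧ MvPolynomial.eval x r = (q x).eval (c l) := by
      by_contra! ⟨l, hl⟩
      refine hx' (Finset.mem_union_left _ (Finset.mem_biUnion.mpr
        ⟨l, Finset.mem_univ l, Finset.mem_filter.mpr ⟨hx, ?_, hl⟩⟩))
      rw [Polynomial.map_map, eval_comp_substCoord, evalRingHom_comp_lineEval,
        eval_map_eval_insertNth, (hq x hx).1, eval_zero]
    choose ρ hρ hρx using hnotT
    refine hx' (Finset.mem_union_right _ (Finset.mem_biUnion.mpr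
      ⟨ρ, Fintype.mem_piFinset.mpr fun l => ?_, Finset.mem_filter.mpr ⟨hx, hρx⟩⟩))
    exact Multiset.mem_toFinset.mpr ((mem_roots (hElmonic l).ne_zero).mpr (hρ l))
  refine (card_mul_le_of_subset_biUnion hcover (Real.sqrt_nonneg N) (fun l _ => hT l _
    (Finset.filter_subset _ _) fun x hx => ⟨_, (Finset.mem_filter.mp hx).2⟩)
    fun ρ hρ => (?_ : _ ≤ 3 ^ (m + 1) * ((m + 1) * (δ + δ * (δ + δ) : ℕ)) * (N : ℝ) ^ m)).trans ?_
  · refine (mul_le_mul_of_nonneg_left (sqrt_natCast_le_self hN) (Nat.cast_nonneg _)).trans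
      (card_mul_le_of_isNewRoot_lineEval hE.monic hE.natDegree_le hE.degreeOf_coeff_le hcinj
        (ρ := ρ) (fun l j => ?_) hN ((Finset.filter_subset _ _).trans hB) fun x hx => ?_)
    · refine (hE.map_substCoord 0 le_rfl).degreeOf_le_of_eval_eq_zero ?_ (isRoot_of_mem_roots
        (Multiset.mem_toFinset.mp (Fintype.mem_piFinset.mp hρ l))) j
      exact one_le_mul_of_one_le_of_one_le
        (one_le_pow₀ (le_add_of_nonneg_right (abs_nonneg _))) hH
    · obtain ⟨hxB, hxρ⟩ := Finset.mem_filter.mp hx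
      exact ⟨q x, hE.natDegree_le_of_eval_map_lineEval_eq_zero hH 0 (hq x hxB).1, hq x hxB, hxρ⟩
  · have hR := card_piFinset_roots_le fun l =>
      (natDegree_map_le.trans hE.natDegree_le : (El l).natDegree ≤ δ)
    rw [Finset.card_univ, Fintype.card_fin]
    push_cast
    gcongr
    exact_mod_cast hR

lemma NewRootBound.exists_card_mul_le_of_lineEval (h : NewRootBound m δ C₀) (hC₀ : 0 ≤ C₀) :
    ∃ C : ℝ, 0 ≤ C ∧ ∀ (E : (ZX (m + 1))[X]) (H : ℝ), 3 ≤ H →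
      IsMonicOfGrowth E δ H → derivResultant E ≠ 0 → ∀ N : ℕ, 1 ≤ N → (N : ℝ) ≤ H →
      ∀ B ⊆ intBox m N, (∀ x ∈ B, ∃ q, IsNewRoot (lineEval 0 x).toRingHom E q) →
      (B.card : ℝ) * √N ≤ C * Real.log H ^ 2 * N ^ m := by
  set A : ℝ := ((δ * (2 * δ) + (δ + 1) : ℕ) : ℝ)
  set a : ℝ := C₀ * (|Real.log ((1 + A) ^ δ)| + 1) ^ 2
  set b : ℝ := δ ^ (δ + 1) * (3 ^ (m + 1) * ((m + 1) * (δ + δ * (δ + δ) : ℕ)))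
  refine ⟨(δ + 1) * a + b, by positivity, fun E H hH hE hD N hN hNH B hB hroot => ?_⟩
  have hH1 : 1 ≤ H := by linarith
  choose! q hq using hroot
  obtain ⟨c, hcinj, hc⟩ := exists_injective_substCoord_ne_zero 0 hD
    (hE.degreeOf_derivResultant_le hH1 0) (δ + 1)
  have hcA : ∀ l, |(c l : ℝ)| ≤ A := fun l => by
    unfold A
    exact_mod_cast (hc l).1
  refine (card_mul_le_of_substCoord_cover hE hH1 hcinj hN hB hq fun l T hT hTroot =>
    h.card_mul_le_of_substCoord hC₀ hH hE (A := A) (hcA l) (hc l).2 hN hNH (hT.trans hB)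
      hTroot).trans ?_
  have hL : 1 ≤ Real.log H ^ 2 := one_le_pow₀ (one_le_log hH)
  calc _ = ((δ + 1) * a * Real.log H ^ 2 + b) * N ^ m := by ring
    _ ≤ ((δ + 1) * a * Real.log H ^ 2 + b * Real.log H ^ 2) * N ^ m := by
        gcongr
        exact le_mul_of_one_le_right (by positivity) hL
    _ = _ := by ring

end badLines

section fibers

variable {m N : ℕ}

lemma removeNth_mem_intBox (i : Fin (m + 1)) {x : Fin (m + 1) → ℤ} (hx : x ∈ intBox (m + 1) N) :
    i.removeNth x ∈ intBox m N :=
  mem_intBox.mpr fun _ => mem_intBox.mp hx _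

lemma card_le_card_mul_of_fiber_le {α : Type*} (i : Fin (m + 1))
    {S : Finset (Fin (m + 1) → α)} {T : Finset (Fin m → α)} {M : ℝ}
    (hT : ∀ x ∈ S, i.removeNth x ∈ T)
    (hM : ∀ x ∈ T, ∀ F : Finset α, (∀ s ∈ F, i.insertNth s x ∈ S) → (F.card : ℝ) ≤ M) :
    (S.card : ℝ) ≤ T.card * M := by
  classical
  rw [Finset.card_eq_sum_card_fiberwise (f := i.removeNth) hT, Nat.cast_sum, ← nsmul_eq_mul]
  refine Finset.sum_le_card_nsmul _ _ _ fun x hx => ?_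
  have hinj : Set.InjOn (fun a : Fin (m + 1) → α => a i)
      ({a ∈ S | i.removeNth a = x} : Finset (Fin (m + 1) → α)) := by
    intro a ha b hb hab
    have ha' : i.removeNth a = x := (Finset.mem_filter.mp ha).2
    have hb' : i.removeNth b = x := (Finset.mem_filter.mp hb).2
    rw [← Fin.insertNth_self_removeNth i a, ← Fin.insertNth_self_removeNth i b, ha', hb']
    exact congrArg (fun s => (i.insertNth s x : Fin (m + 1) → α)) hab
  rw [← Finset.card_image_of_injOn hinj]
  refine hM x hx _ fun s hs => ?_
  obtain ⟨a, ha, rfl⟩ := Finset.mem_image.mp hs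
  obtain ⟨haS, rfl⟩ := Finset.mem_filter.mp ha
  rwa [Fin.insertNth_self_removeNth]

lemma card_fiber_intBox_le (i : Fin (m + 1)) (x : Fin m → ℤ) {F : Finset ℤ}
    (h : ∀ s ∈ F, i.insertNth s x ∈ intBox (m + 1) N) : (F.card : ℝ) ≤ 2 * N + 1 := by
  have hsub : F ⊆ Finset.Icc (-(N : ℤ)) N := fun s hs => by
    simpa [abs_le] using mem_intBox.mp (h s hs) i
  have hcard := Finset.card_le_card hsub
  rw [card_Icc_neg_self] at hcard
  exact_mod_cast hcard

lemma card_mul_sqrt_le_of_forall_removeNth_mem (hN : 1 ≤ N) (i : Fin (m + 1))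
    {S : Finset (Fin (m + 1) → ℤ)} (hS : S ⊆ intBox (m + 1) N) {T : Finset (Fin m → ℤ)}
    (hT : ∀ x ∈ S, i.removeNth x ∈ T) {M : ℝ} (hM : T.card * √N ≤ M) :
    S.card * √N ≤ 3 * M * N := by
  have hN' : (1 : ℝ) ≤ N := by exact_mod_cast hN
  have hfiber : (S.card : ℝ) ≤ T.card * (2 * N + 1) :=
    card_le_card_mul_of_fiber_le i hT fun x _ F hF => card_fiber_intBox_le i x fun s hs =>
      hS (hF s hs)
  calc (S.card : ℝ) * √N ≤ T.card * (2 * N + 1) * √N := by gcongr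
    _ = T.card * √N * (2 * N + 1) := by ring
    _ ≤ M * (3 * N) :=
      mul_le_mul hM (by linarith) (by positivity) ((by positivity : (0 : ℝ) ≤ _).trans hM)
    _ = 3 * M * N := by ring

lemma card_mul_sqrt_le_of_fiber_le (hN : 1 ≤ N) (i : Fin (m + 1))
    {S : Finset (Fin (m + 1) → ℤ)} (hS : S ⊆ intBox (m + 1) N) {M : ℝ}
    (hM : ∀ x ∈ intBox m N, ∀ F : Finset ℤ, (∀ s ∈ F, i.insertNth s x ∈ S) →
      (F.card : ℝ) ≤ M * √N) :
    S.card * √N ≤ 3 ^ m * M * N ^ (m + 1) := by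
  have hN' : (1 : ℝ) ≤ N := by exact_mod_cast hN
  have hM₀ : 0 ≤ M * √N := by
    simpa using hM 0 (mem_intBox.mpr fun _ => by simp) ∅ fun _ hs => absurd hs (by simp)
  have hfiber : (S.card : ℝ) ≤ (intBox m N).card * (M * √N) :=
    card_le_card_mul_of_fiber_le i (fun x hx => removeNth_mem_intBox i (hS hx)) hM
  rw [card_intBox] at hfiber
  push_cast at hfiber
  calc (S.card : ℝ) * √N ≤ (2 * N + 1) ^ m * (M * √N) * √N := by gcongr
    _ ≤ (3 * N) ^ m * (M * √N) * √N := by gcongr; linarith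
    _ = 3 ^ m * M * N ^ m * (√N * √N) := by ring
    _ = 3 ^ m * M * N ^ (m + 1) := by
      rw [Real.mul_self_sqrt (Nat.cast_nonneg N)]
      ring

end fibers

section newRootBound

variable {m δ : ℕ}

lemma not_isNewRoot_of_bijective {R S : Type*} [CommRing R] [CommRing S] {φ : R →+* S}
    (hφ : Function.Bijective φ) (f : R[X]) (y : S) : ¬ IsNewRoot φ f y := by
  rintro ⟨hy, hnew⟩
  obtain ⟨r, rfl⟩ := hφ.2 y
  exact hnew r (hφ.1 (by rw [← eval_map_apply, hy, map_zero])) rfl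

lemma newRootBound_zero (δ : ℕ) : NewRootBound 0 δ 0 := by
  intro E H _ _ _ N _ _ S _ hroot
  have hS : S = ∅ := Finset.eq_empty_of_forall_notMem fun x hx => by
    obtain ⟨t, ht⟩ := hroot x hx
    refine not_isNewRoot_of_bijective ⟨fun p q hpq => MvPolynomial.funext fun y => ?_, fun s => ?_⟩
      E t ht
    · rwa [Subsingleton.elim y x]
    · exact ⟨MvPolynomial.C s, MvPolynomial.eval_C s⟩
  simp [hS]

lemma exists_card_le_of_not_isNewRoot_lineEval (m δ : ℕ) :
    ∃ C : ℝ, 0 ≤ C ∧ ∀ (E : (ZX (m + 1))[X]) (H : ℝ), 3 ≤ H →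
      IsMonicOfGrowth E δ H → ∀ N : ℕ, 1 ≤ N → (N : ℝ) ≤ H → ∀ (i : Fin (m + 1)),
      ∀ x ∈ intBox m N, (∀ q, ¬ IsNewRoot (lineEval i x).toRingHom E q) → ∀ F : Finset ℤ,
      (∀ s ∈ F, i.insertNth s x ∈ intBox (m + 1) N ∧
        MvPolynomial.eval (i.insertNth s x) (derivResultant E) ≠ 0 ∧
        ∃ t, IsNewRoot (MvPolynomial.eval (i.insertNth s x)) E t) →
      (F.card : ℝ) ≤ C * Real.log H ^ 2 * √N := by
  obtain ⟨C, hC, hline⟩ := exists_card_le_of_isNewRoot δ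
  set b : ℕ := 1 + 2 * m * δ
  refine ⟨C * b ^ 2, by positivity, fun E H hH hE N hN hNH i x hx hnew F hF => ?_⟩
  have hHb : H ≤ H ^ b := le_self_pow₀ (by linarith) (by omega)
  rcases F.eq_empty_or_nonempty with rfl | ⟨s₀, hs₀⟩
  · rw [Finset.card_empty, Nat.cast_zero]
    positivity
  have hD : derivResultant (E.map (lineEval i x).toRingHom) ≠ 0 := fun h0 => by
    rw [derivResultant_map _ hE.monic] at h0
    refine (hF s₀ hs₀).2.1 ?_
    rw [← evalRingHom_comp_lineEval, RingHom.comp_apply, h0, map_zero]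
  refine (hline (E.map (lineEval i x).toRingHom) (hE.monic.map _)
    (natDegree_map_le.trans hE.natDegree_le) hD (H ^ b) (hH.trans hHb)
    (hE.abs_eval_coeff_map_lineEval_le hH hNH i hx) N hN (hNH.trans hHb) F
    fun s hs => ?_).trans_eq ?_
  · obtain ⟨hbox, -, t, ht⟩ := hF s hs
    rw [← evalRingHom_comp_lineEval] at ht
    exact ⟨by simpa using mem_intBox.mp hbox i, t, ht.of_comp hnew⟩
  · rw [Real.log_pow]
    ring

lemma NewRootBound.exists_succ {C₀ : ℝ} (h : NewRootBound m δ C₀) (hC₀ : 0 ≤ C₀) :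
    ∃ C : ℝ, 0 ≤ C ∧ NewRootBound (m + 1) δ C := by
  classical
  obtain ⟨C₁, hC₁, hbad⟩ := h.exists_card_mul_le_of_lineEval hC₀
  obtain ⟨C₂, hC₂, hgood⟩ := exists_card_le_of_not_isNewRoot_lineEval m δ
  set C₃ : ℝ := 3 ^ (m + 1) * ((m + 1 : ℕ) * (δ * (2 * δ) : ℕ))
  refine ⟨C₃ + 3 * C₁ + 3 ^ m * C₂, by positivity, fun E H hH hE hD N hN hNH S hS hroot => ?_⟩
  have hL : 1 ≤ Real.log H ^ 2 := one_le_pow₀ (one_le_log hH)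
  set S' := {x ∈ S | MvPolynomial.eval x (derivResultant E) ≠ 0}
  have hS' : S' ⊆ S := Finset.filter_subset _ _
  set Bad := {x ∈ intBox m N | ∃ q, IsNewRoot (lineEval 0 x).toRingHom E q}
  set S₁ := {x ∈ S' | (Fin.removeNth 0 x : Fin m → ℤ) ∈ Bad}
  set S₂ := {x ∈ S' | ¬ (Fin.removeNth 0 x : Fin m → ℤ) ∈ Bad}
  have hcard : (S.card : ℝ) ≤ C₃ * N ^ m + (S₁.card + S₂.card) := by
    rw [← Nat.cast_add, Finset.card_filter_add_card_filter_not]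
    exact card_le_add_card_filter_eval_ne_zero hD (hE.degreeOf_derivResultant_le (by linarith))
      hN hS
  have hS₁ : S₁.card * √N ≤ 3 * (C₁ * Real.log H ^ 2 * N ^ m) * N :=
    card_mul_sqrt_le_of_forall_removeNth_mem hN 0
      ((Finset.filter_subset _ _).trans (hS'.trans hS)) (fun x hx => (Finset.mem_filter.mp hx).2)
      (hbad E H hH hE hD N hN hNH Bad (Finset.filter_subset _ _) fun x hx =>
        (Finset.mem_filter.mp hx).2)
  have hS₂ : S₂.card * √N ≤ 3 ^ m * (C₂ * Real.log H ^ 2) * N ^ (m + 1) := by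
    refine card_mul_sqrt_le_of_fiber_le hN 0 ((Finset.filter_subset _ _).trans (hS'.trans hS))
      fun x hx F hF => ?_
    rcases F.eq_empty_or_nonempty with rfl | ⟨s₀, hs₀⟩
    · rw [Finset.card_empty, Nat.cast_zero]
      positivity
    have hxBad := (Finset.mem_filter.mp (hF s₀ hs₀)).2
    rw [Fin.removeNth_insertNth] at hxBad
    refine hgood E H hH hE N hN hNH 0 x hx
      (fun q hq => hxBad (Finset.mem_filter.mpr ⟨hx, q, hq⟩)) F fun s hs => ?_
    obtain ⟨hsS, hs0⟩ := Finset.mem_filter.mp (Finset.mem_filter.mp (hF s hs)).1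
    exact ⟨hS hsS, hs0, hroot _ hsS⟩
  calc S.card * √N ≤ C₃ * N ^ m * √N + (S₁.card * √N + S₂.card * √N) := by
        rw [← add_mul, ← add_mul]
        gcongr
    _ ≤ C₃ * Real.log H ^ 2 * N ^ m * N + (3 * (C₁ * Real.log H ^ 2 * N ^ m) * N +
          3 ^ m * (C₂ * Real.log H ^ 2) * N ^ (m + 1)) := by
        gcongr
        · exact le_mul_of_one_le_right (by positivity) hL
        · exact sqrt_natCast_le_self hN
    _ = _ := by ring

theorem exists_newRootBound (m δ : ℕ) : ∃ C : ℝ, 0 ≤ C ∧ NewRootBound m δ C := by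
  induction m with
  | zero => exact ⟨0, le_rfl, newRootBound_zero δ⟩
  | succ m ih =>
    obtain ⟨C, hC, h⟩ := ih
    exact h.exists_succ hC

end newRootBound

/-! ### Growth of integral algebraic functions -/

lemma exists_ringHom_comp_algebraMap_eq {R O k : Type*} [CommRing R] [CommRing O] [IsDomain O]
    [Algebra R O] [FaithfulSMul R O] [Algebra.IsIntegral R O] [Field k] [IsAlgClosed k]
    (e : R →+* k) : ∃ φ : O →+* k, φ.comp (algebraMap R O) = e := by
  have : (RingHom.ker e).IsPrime := RingHom.ker_isPrime e
  obtain ⟨Q, hQ, hQe⟩ := Ideal.exists_ideal_over_prime_of_isIntegral_of_isDomain (S := O)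
    (RingHom.ker e) <| by
      rw [(RingHom.injective_iff_ker_eq_bot _).mp (FaithfulSMul.algebraMap_injective R O)]
      exact bot_le
  have : Q.LiesOver (RingHom.ker e) := ⟨hQe.symm⟩
  let : Algebra (R ⧸ RingHom.ker e) k := (RingHom.kerLift e).toAlgebra
  have : Module.IsTorsionFree (R ⧸ RingHom.ker e) k :=
    Module.isTorsionFree_iff_algebraMap_injective.mpr (RingHom.kerLift_injective e)
  have : Module.IsTorsionFree (R ⧸ RingHom.ker e) (O ⧸ Q) :=
    Module.isTorsionFree_iff_algebraMap_injective.mpr (FaithfulSMul.algebraMap_injective ..)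
  have ψ : (O ⧸ Q) →ₐ[R ⧸ RingHom.ker e] k := IsAlgClosed.lift
  exact ⟨ψ.toRingHom.comp (Ideal.Quotient.mk Q),
    RingHom.ext fun r => ψ.commutes (Ideal.Quotient.mk _ r)⟩

/-- A complex point of an algebra over `ℤ[X₁,…,Xₙ]` lying above an integer point of affine
space. -/
structure PointAbove (n : ℕ) (O : Type*) [CommRing O] [Algebra (ZX n) O] where
  coord : Fin n → ℤ
  hom : O →+* ℂ
  hom_comp_algebraMap :
    hom.comp (algebraMap (ZX n) O) = (Int.castRingHom ℂ).comp (MvPolynomial.eval coord)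

/-- The analogue of `HasGrowth` for an element `z` of an algebra over `ℤ[X₁,…,Xₙ]`: all the complex
values of `z` above the integer point `x` have size at most `A (∏ⱼ (1 + |xⱼ|)) ^ a`. -/
def HasGrowthAbove (n : ℕ) {O : Type*} [CommRing O] [Algebra (ZX n) O] (z : O) (A : ℝ)
    (a : ℕ) : Prop :=
  ∀ P : PointAbove n O, ‖P.hom z‖ ≤ A * coordWeight P.coord ^ a

section growthAbove

variable {n δ : ℕ} {O : Type*} [CommRing O] [Algebra (ZX n) O]

namespace PointAbove

lemma hom_algebraMap (P : PointAbove n O) (r : ZX n) :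
    P.hom (algebraMap (ZX n) O r) = ((MvPolynomial.eval P.coord r : ℤ) : ℂ) :=
  RingHom.congr_fun P.hom_comp_algebraMap r

lemma map_hom_map_algebraMap (P : PointAbove n O) (f : (ZX n)[X]) :
    (f.map (algebraMap (ZX n) O)).map P.hom =
      (f.map (MvPolynomial.eval P.coord)).map (Int.castRingHom ℂ) := by
  rw [Polynomial.map_map, P.hom_comp_algebraMap, Polynomial.map_map]

lemma hom_aeval (P : PointAbove n O) (f : (ZX n)[X]) (z : O) :
    P.hom (aeval z f) =
      ((f.map (MvPolynomial.eval P.coord)).map (Int.castRingHom ℂ)).eval (P.hom z) := by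
  rw [← map_hom_map_algebraMap, eval_map_apply, eval_map_algebraMap]

lemma exists_coord_eq [IsDomain O] [FaithfulSMul (ZX n) O] [Algebra.IsIntegral (ZX n) O]
    (x : Fin n → ℤ) : ∃ P : PointAbove n O, P.coord = x :=
  let ⟨φ, hφ⟩ := exists_ringHom_comp_algebraMap_eq (O := O)
    ((Int.castRingHom ℂ).comp (MvPolynomial.eval x))
  ⟨⟨x, φ, hφ⟩, rfl⟩

lemma exists_root_hom_eq [IsDomain O] (P : PointAbove n O) {f : (ZX n)[X]} (hf : f.Monic)
    (hsplit : (f.map (algebraMap (ZX n) O)).Splits) {t : ℂ}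
    (ht : ((f.map (MvPolynomial.eval P.coord)).map (Int.castRingHom ℂ)).IsRoot t) :
    ∃ z : O, aeval z f = 0 ∧ P.hom z = t := by
  rw [← P.map_hom_map_algebraMap, hsplit.eq_prod_roots_of_monic (hf.map _),
    Polynomial.map_multiset_prod, IsRoot.def, eval_multiset_prod, Multiset.prod_eq_zero_iff,
    Multiset.map_map, Multiset.map_map, Multiset.mem_map] at ht
  obtain ⟨z, hz, hzt⟩ := ht
  refine ⟨z, ?_, ?_⟩
  · rw [← eval_map_algebraMap]
    exact isRoot_of_mem_roots hz
  · refine (sub_eq_zero.mp ?_).symm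
    simpa using hzt

end PointAbove

lemma HasGrowthAbove.hasGrowth [IsDomain O] [FaithfulSMul (ZX n) O] [Algebra.IsIntegral (ZX n) O]
    {p : ZX n} {A : ℝ} {a : ℕ} (h : HasGrowthAbove n (algebraMap (ZX n) O p) A a) :
    HasGrowth p A a := fun x => by
  obtain ⟨P, rfl⟩ := PointAbove.exists_coord_eq (O := O) x
  simpa [P.hom_algebraMap] using h P

lemma norm_root_le_of_hasGrowth {f : (ZX n)[X]} (hf : f.Monic) {H : ℝ} (hH : 1 ≤ H)
    (h : ∀ k, HasGrowth (f.coeff k) H δ) (x : Fin n → ℤ) {t : ℂ}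
    (ht : ((f.map (MvPolynomial.eval x)).map (Int.castRingHom ℂ)).IsRoot t) :
    ‖t‖ ≤ 2 * (H * coordWeight x ^ δ) :=
  norm_root_le ((hf.map _).map _)
    (one_le_mul_of_one_le_of_one_le hH (one_le_pow₀ (one_le_coordWeight x)))
    (fun k => by simpa using h k x) ht

lemma hasGrowthAbove_of_aeval_eq_zero {f : (ZX n)[X]} (hf : f.Monic) {H : ℝ} (hH : 1 ≤ H)
    (h : ∀ k, HasGrowth (f.coeff k) H δ) {z : O} (hz : aeval z f = 0) :
    HasGrowthAbove n z (2 * H) δ := fun P => by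
  rw [mul_assoc]
  refine norm_root_le_of_hasGrowth hf hH h P.coord ?_
  rw [IsRoot.def, ← P.hom_aeval, hz, map_zero]

lemma norm_coeff_map_le_of_roots_le {R : Type*} [CommRing R] (φ : R →+* ℂ) {g : R[X]}
    (hg : g.Monic) (hd : g.natDegree ≤ δ) {B : ℝ} (hB : 1 ≤ B)
    (h : ∀ t, (g.map φ).IsRoot t → ‖t‖ ≤ B) (k : ℕ) : ‖φ (g.coeff k)‖ ≤ (2 * B) ^ δ := by
  rw [← coeff_map]
  refine (coeff_bdd_of_roots_le φ hg (IsAlgClosed.splits _) hd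
    (fun t ht => h t (isRoot_of_mem_roots ht)) k).trans ?_
  rw [max_eq_left hB, mul_pow, mul_comm]
  gcongr
  exact_mod_cast Nat.choose_le_two_pow δ (δ / 2)

lemma hasGrowthAbove_coeff_of_dvd {f : (ZX n)[X]} (hf : f.Monic) {H : ℝ} (hH : 1 ≤ H)
    (h : ∀ k, HasGrowth (f.coeff k) H δ) {g : O[X]} (hg : g.Monic) (hd : g.natDegree ≤ δ)
    (hdvd : g ∣ f.map (algebraMap (ZX n) O)) (k : ℕ) :
    HasGrowthAbove n (g.coeff k) ((4 * H) ^ δ) (δ * δ) := fun P => by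
  have hw := one_le_pow₀ (one_le_coordWeight P.coord) (n := δ)
  refine (norm_coeff_map_le_of_roots_le P.hom hg hd (B := 2 * (H * coordWeight P.coord ^ δ))
    (by nlinarith) (fun t ht => ?_) k).trans_eq (by ring)
  refine norm_root_le_of_hasGrowth hf hH h P.coord ?_
  rw [← P.map_hom_map_algebraMap]
  exact ht.dvd (Polynomial.map_dvd P.hom hdvd)

lemma hasGrowth_coeff_of_forall_root [IsDomain O] [FaithfulSMul (ZX n) O]
    [Algebra.IsIntegral (ZX n) O] {g : (ZX n)[X]} (hg : g.Monic) (hd : g.natDegree ≤ δ)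
    (hsplit : (g.map (algebraMap (ZX n) O)).Splits) {A : ℝ} (hA : 1 ≤ A) {a : ℕ}
    (h : ∀ z : O, aeval z g = 0 → HasGrowthAbove n z A a) (k : ℕ) :
    HasGrowth (g.coeff k) ((2 * A) ^ δ) (a * δ) := by
  refine HasGrowthAbove.hasGrowth (O := O) fun P => ?_
  rw [← coeff_map]
  have hB := one_le_mul_of_one_le_of_one_le hA (one_le_pow₀ (one_le_coordWeight P.coord) (n := a))
  have hroots : ∀ t, ((g.map (algebraMap (ZX n) O)).map P.hom).IsRoot t →
      ‖t‖ ≤ A * coordWeight P.coord ^ a := fun t ht => by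
    rw [P.map_hom_map_algebraMap] at ht
    obtain ⟨z, hz, rfl⟩ := P.exists_root_hom_eq hg hsplit ht
    exact h z hz P
  exact (norm_coeff_map_le_of_roots_le P.hom (hg.map _) (natDegree_map_le.trans hd) hB hroots
    k).trans_eq (by ring)

end growthAbove

lemma splits_map_integralClosure {R W : Type*} [CommRing R] [Field W] [IsAlgClosed W] [Algebra R W]
    {f : R[X]} (hf : f.Monic) : (f.map (algebraMap R (integralClosure R W))).Splits := by
  refine Splits.of_splits_map_of_injective (i := algebraMap (integralClosure R W) W)
    Subtype.val_injective (IsAlgClosed.splits _) fun z hz => ?_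
  rw [Polynomial.map_map, ← IsScalarTower.algebraMap_eq] at hz
  have hroot := isRoot_of_mem_roots hz
  rw [IsRoot.def, eval_map] at hroot
  exact ⟨⟨z, f, hf, hroot⟩, rfl⟩

/-! ### Roots of polynomials with coefficients in `K[X]` -/

lemma map_derivResultant_eq_zero_of_eval_eq_zero {R S : Type*} [CommRing R] [IsDomain R]
    [CommRing S] [Nontrivial S] (φ : R →+* S) {f : R[X]} (hf : f.Monic) {r s : R} (hrs : r ≠ s)
    (hr : f.eval r = 0) (hs : f.eval s = 0) (h : φ r = φ s) : φ (derivResultant f) = 0 := by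
  obtain ⟨g, rfl⟩ := dvd_iff_isRoot.mpr hr
  have hgs : g.eval s = 0 := by
    rw [eval_mul, eval_sub, eval_X, eval_C] at hs
    exact (mul_eq_zero.mp hs).resolve_left (sub_ne_zero.mpr hrs.symm)
  obtain ⟨g', rfl⟩ := dvd_iff_isRoot.mpr hgs
  have hdeg : ((X - C r) * ((X - C s) * g')).natDegree ≠ 0 := fun h0 => by
    rw [hf.natDegree_eq_zero.mp h0, eval_one] at hr
    exact one_ne_zero hr
  obtain ⟨u, v, huv⟩ := exists_mul_add_derivative_mul_eq_C_derivResultant hdeg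
  rw [← eval₂_C φ (φ r), ← huv]
  simp [eval₂_add, eval₂_mul, derivative_mul, h]

section galois

variable {K W : Type*} [Field K] [Field W] [Algebra K W]

open IntermediateField

lemma evalRingHom_comp_mapRingHom_algebraMap (c : K) :
    (evalRingHom (algebraMap K W c)).comp (mapRingHom (algebraMap K W)) =
      (algebraMap K W).comp (evalRingHom c) :=
  RingHom.ext fun p => eval_map_apply (f := algebraMap K W) (p := p) c

lemma aeval_eval_map_evalRingHom {f : K[X][X]} {b : W[X]}
    (hb : (f.map (mapRingHom (algebraMap K W))).eval b = 0) (c : K) :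
    aeval (b.eval (algebraMap K W c)) (f.map (evalRingHom c)) = 0 := by
  have h := congrArg (evalRingHom (algebraMap K W c)) hb
  rwa [eval_map, hom_eval₂, map_zero, evalRingHom_comp_mapRingHom_algebraMap, ← eval₂_map] at h

lemma irreducible_of_natDegree_le_finrank_adjoin {g : K[X]} (hg : g.Monic) {y : W}
    (hy : aeval y g = 0) (hdeg : g.natDegree ≤ Module.finrank K K⟮y⟯) : Irreducible g := by
  have hintegral : IsIntegral K y := ⟨g, hg, hy⟩
  rw [adjoin.finrank hintegral] at hdeg
  rw [eq_of_monic_of_dvd_of_natDegree_le (minpoly.monic hintegral) hg (minpoly.dvd K y hy) hdeg]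
  exact minpoly.irreducible hintegral

variable [IsGalois K W]

lemma mem_adjoin_simple_of_forall_apply_eq {y w : W} (h : ∀ σ : W ≃ₐ[K] W, σ y = y → σ w = w) :
    w ∈ K⟮y⟯ := by
  rw [← InfiniteGalois.fixedField_fixingSubgroup K⟮y⟯, mem_fixedField_iff]
  intro σ hσ
  exact h σ ((mem_fixingSubgroup_iff _ _).mp hσ y (mem_adjoin_simple_self K y))

lemma exists_algEquiv_apply_eq {f : K[X]} (hf : Irreducible f) {y z : W} (hy : aeval y f = 0)
    (hz : aeval z f = 0) : ∃ σ : W ≃ₐ[K] W, σ y = z := by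
  refine minpoly.exists_algEquiv_of_root' (K := K) (Algebra.IsAlgebraic.isAlgebraic y) ?_
  rw [← minpoly.eq_of_irreducible hf hy, map_mul, hz, zero_mul]

/-- If the discriminant of `f` does not vanish at `c`, distinct roots of `f` in `W[X]` have distinct
values at `c`, so that an automorphism fixing the value of `b` at `c` fixes `b`. -/
lemma eval_mem_adjoin_eval {f : K[X][X]} (hf : f.Monic) {b : W[X]}
    (hb : (f.map (mapRingHom (algebraMap K W))).eval b = 0) {c : K}
    (hc : (derivResultant f).eval c ≠ 0) (c' : K) :
    b.eval (algebraMap K W c') ∈ K⟮b.eval (algebraMap K W c)⟯ := by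
  refine mem_adjoin_simple_of_forall_apply_eq fun σ hσ => ?_
  have heval (a : K) : σ (b.eval (algebraMap K W a)) =
      (b.map (σ : W →+* W)).eval (algebraMap K W a) := by
    simpa using (eval_map_apply (f := (σ : W →+* W)) (p := b) (algebraMap K W a)).symm
  suffices hbσ : b.map (σ : W →+* W) = b by rw [heval, hbσ]
  by_contra hne
  have hσf : (mapRingHom (σ : W →+* W)).comp (mapRingHom (algebraMap K W)) =
      mapRingHom (algebraMap K W) := by
    rw [mapRingHom_comp]
    congr 1
    exact RingHom.ext σ.commutes
  have hroot : (f.map (mapRingHom (algebraMap K W))).eval (b.map (σ : W →+* W)) = 0 := by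
    have h := congrArg (mapRingHom (σ : W →+* W)) hb
    rwa [eval_map, hom_eval₂, map_zero, hσf, ← eval_map] at h
  have h0 := map_derivResultant_eq_zero_of_eval_eq_zero (evalRingHom (algebraMap K W c))
    (hf.map _) hne hroot hb ((heval c).symm.trans hσ)
  rw [derivResultant_map _ hf, coe_evalRingHom, coe_mapRingHom, eval_map_apply,
    map_eq_zero] at h0
  exact hc h0

lemma adjoin_eval_eq_adjoin_eval {f : K[X][X]} (hf : f.Monic) {b : W[X]}
    (hb : (f.map (mapRingHom (algebraMap K W))).eval b = 0) {c c' : K}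
    (hc : (derivResultant f).eval c ≠ 0) (hc' : (derivResultant f).eval c' ≠ 0) :
    K⟮b.eval (algebraMap K W c)⟯ = K⟮b.eval (algebraMap K W c')⟯ :=
  le_antisymm (adjoin_simple_le_iff.mpr (eval_mem_adjoin_eval hf hb hc' c))
    (adjoin_simple_le_iff.mpr (eval_mem_adjoin_eval hf hb hc c'))

/-- Since `b` generates the same extension of `K` at `c` and at `c'`, the specialisation of `f` at
`c` stays irreducible; conjugating `b` moves its value at `c'` to the given root `β`. -/
lemma irreducible_and_exists_root_mem_adjoin [CharZero K] {f : K[X][X]} (hf : f.Monic) {b : W[X]}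
    (hb : (f.map (mapRingHom (algebraMap K W))).eval b = 0) {c c' : K}
    (hc : (derivResultant f).eval c ≠ 0) (hirr : Irreducible (f.map (evalRingHom c'))) {β : W}
    (hβ : aeval β (f.map (evalRingHom c')) = 0) :
    Irreducible (f.map (evalRingHom c)) ∧
      ∃ α ∈ K⟮β⟯, aeval α (f.map (evalRingHom c)) = 0 := by
  have hc' : (derivResultant f).eval c' ≠ 0 := by
    rw [← coe_evalRingHom, ← derivResultant_map _ hf]
    exact derivResultant_ne_zero_of_irreducible_map (RingHom.id K) (hf.map _)
      (by rwa [Polynomial.map_id])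
  have hroot := aeval_eval_map_evalRingHom hb c
  have hroot' := aeval_eval_map_evalRingHom hb c'
  have hadj := adjoin_eval_eq_adjoin_eval hf hb hc hc'
  constructor
  · refine irreducible_of_natDegree_le_finrank_adjoin (hf.map _) hroot ?_
    rw [hadj, adjoin.finrank ⟨_, hf.map _, hroot'⟩,
      ← minpoly.eq_of_irreducible_of_monic hirr hroot' (hf.map _), hf.natDegree_map,
      hf.natDegree_map]
  · obtain ⟨σ, hσ⟩ := exists_algEquiv_apply_eq hirr hroot' hβ
    refine ⟨σ (b.eval (algebraMap K W c)), ?_, ?_⟩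
    · have hmem : b.eval (algebraMap K W c) ∈ K⟮b.eval (algebraMap K W c')⟯ :=
        hadj ▸ mem_adjoin_simple_self K _
      have hmap := adjoin_map K {b.eval (algebraMap K W c')} (σ : W →ₐ[K] W)
      rw [Set.image_singleton, AlgEquiv.coe_toAlgHom, hσ] at hmap
      rw [← hmap]
      exact ⟨_, hmem, rfl⟩
    · rw [← AlgEquiv.coe_toAlgHom, aeval_algHom_apply, hroot, map_zero]

end galois

/-! ### Viewing one coordinate as the polynomial variable -/

section coordLine

variable {m : ℕ}

/-- The embedding of `ℤ[X₁,…,Xₘ₊₁]` into `A[X]` which views the `i`-th coordinate as the polynomial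
variable and all other coordinates as constants in the algebra `A`. -/
def coordLine (A : Type*) [CommRing A] [Algebra (ZX (m + 1)) A] (i : Fin (m + 1)) :
    ZX (m + 1) →+* A[X] :=
  (lineEval i fun j =>
    algebraMap (ZX (m + 1)) A (MvPolynomial.X (i.succAbove j))).toRingHom.comp
      (MvPolynomial.map (Int.castRingHom A))

/-- The substitution `Xᵢ ↦ a`, without renumbering the variables as `substCoord` does. -/
def setCoord (i : Fin (m + 1)) (a : ℤ) : ZX (m + 1) →+* ZX (m + 1) :=
  (MvPolynomial.rename i.succAbove).toRingHom.comp (substCoord i a).toRingHom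

variable {A : Type*} [CommRing A] [Algebra (ZX (m + 1)) A]

lemma evalRingHom_intCast_comp_coordLine (i : Fin (m + 1)) (a : ℤ) :
    (evalRingHom (a : A)).comp (coordLine A i) =
      (algebraMap (ZX (m + 1)) A).comp (setCoord i a) := by
  refine MvPolynomial.ringHom_ext (by simp) fun j => ?_
  refine i.succAboveCases ?_ (fun k => ?_) j <;>
    simp [coordLine, lineEval, setCoord, substCoord]

lemma evalRingHom_X_comp_coordLine (i : Fin (m + 1)) :
    (evalRingHom (algebraMap (ZX (m + 1)) A (MvPolynomial.X i))).comp (coordLine A i) =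
      algebraMap (ZX (m + 1)) A := by
  refine MvPolynomial.ringHom_ext (by simp) fun j => ?_
  refine i.succAboveCases ?_ (fun k => ?_) j <;> simp [coordLine, lineEval]

lemma mapRingHom_comp_coordLine {B : Type*} [CommRing B] [Algebra (ZX (m + 1)) B] [Algebra A B]
    [IsScalarTower (ZX (m + 1)) A B] (i : Fin (m + 1)) :
    (mapRingHom (algebraMap A B)).comp (coordLine A i) = coordLine B i := by
  refine MvPolynomial.ringHom_ext (by simp) fun j => ?_
  refine i.succAboveCases ?_ (fun k => ?_) j <;>
    simp [coordLine, lineEval, ← IsScalarTower.algebraMap_apply]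

lemma eval_comp_setCoord (i : Fin (m + 1)) (a : ℤ) (x : Fin (m + 1) → ℤ) :
    (MvPolynomial.eval x).comp (setCoord i a) =
      MvPolynomial.eval (i.insertNth a (i.removeNth x)) := by
  refine MvPolynomial.ringHom_ext (by simp) fun j => ?_
  refine i.succAboveCases ?_ (fun k => ?_) j <;> simp [setCoord, substCoord]

lemma coordLine_injective [FaithfulSMul (ZX (m + 1)) A] (i : Fin (m + 1)) :
    Function.Injective (coordLine A i) := by
  refine Function.Injective.of_comp
    (f := evalRingHom (algebraMap (ZX (m + 1)) A (MvPolynomial.X i))) ?_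
  rw [← RingHom.coe_comp, evalRingHom_X_comp_coordLine]
  exact FaithfulSMul.algebraMap_injective _ A

lemma exists_rename_succAbove_eq {i : Fin (m + 1)} {p : ZX (m + 1)} (hp : p.degreeOf i = 0) :
    ∃ q : ZX m, MvPolynomial.rename i.succAbove q = p := by
  refine MvPolynomial.exists_rename_eq_of_vars_subset_range p i.succAbove
    Fin.succAbove_right_injective fun j hj => ?_
  rw [Fin.range_succAbove]
  rintro rfl
  exact MvPolynomial.mem_vars_iff_degreeOf_ne_zero.mp hj hp

lemma coordLine_of_degreeOf_eq_zero {i : Fin (m + 1)} {p : ZX (m + 1)} (hp : p.degreeOf i = 0) :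
    coordLine A i p = C (algebraMap (ZX (m + 1)) A p) := by
  obtain ⟨q, rfl⟩ := exists_rename_succAbove_eq hp
  suffices (coordLine A i).comp (MvPolynomial.rename i.succAbove).toRingHom =
      (C.comp (algebraMap (ZX (m + 1)) A)).comp (MvPolynomial.rename i.succAbove).toRingHom from
    RingHom.congr_fun this q
  exact MvPolynomial.ringHom_ext (by simp) fun j => by simp [coordLine, lineEval]

end coordLine

/-! ### Lines on which `F` has no polynomial root -/

section invariants

variable {R : Type*} [CommRing R] [IsIntegrallyClosed R]

lemma exists_algebraMap_eq_of_forall_apply_eq (K : Type*) {W : Type*} [Field K] [Field W]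
    [Algebra R K] [IsFractionRing R K] [Algebra K W] [Algebra R W] [IsScalarTower R K W]
    [IsGalois K W] {z : integralClosure R W}
    (hz : ∀ τ : integralClosure R W ≃ₐ[R] integralClosure R W, τ z = z) :
    ∃ r, algebraMap R (integralClosure R W) r = z := by
  obtain ⟨k, hk⟩ : (z : W) ∈ Set.range (algebraMap K W) := by
    rw [InfiniteGalois.mem_range_algebraMap_iff_fixed]
    intro σ
    exact (algebraMap_galRestrict_apply R σ z).symm.trans (congrArg Subtype.val (hz _))
  have hintegral : IsIntegral R k := by
    rw [← isIntegral_algebraMap_iff (FaithfulSMul.algebraMap_injective K W), hk]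
    exact z.2
  obtain ⟨r, rfl⟩ := IsIntegrallyClosed.algebraMap_eq_of_integral hintegral
  refine ⟨r, Subtype.ext ?_⟩
  rw [← hk, ← IsScalarTower.algebraMap_apply]
  rfl

end invariants

section rootTuples

variable {R O : Type*} [CommRing R] [CommRing O] [IsDomain O] [Algebra R O] [DecidableEq O]
  {k : ℕ} {f : Fin k → R[X]}

/-- The tuples whose `l`-th component is a root of `f l` in `O`. -/
def rootTuples (O : Type*) [CommRing O] [IsDomain O] [Algebra R O] [DecidableEq O]
    (f : Fin k → R[X]) : Finset (Fin k → O) :=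
  Fintype.piFinset fun l => ((f l).aroots O).toFinset

lemma mem_rootTuples (hf : ∀ l, (f l).Monic) {ρ : Fin k → O} :
    ρ ∈ rootTuples O f ↔ ∀ l, aeval (ρ l) (f l) = 0 := by
  simp only [rootTuples, Fintype.mem_piFinset, Multiset.mem_toFinset, aroots,
    mem_roots ((hf _).map _).ne_zero, IsRoot.def, eval_map_algebraMap]

lemma card_rootTuples_le {δ : ℕ} (hf : ∀ l, (f l).natDegree ≤ δ) :
    (rootTuples O f).card ≤ δ ^ k :=
  card_piFinset_roots_le fun l => natDegree_map_le.trans (hf l)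

lemma prod_rootTuples_apply_comp {M : Type*} [CommMonoid M] (hf : ∀ l, (f l).Monic)
    (τ : O ≃ₐ[R] O) (w : (Fin k → O) → M) :
    ∏ ρ ∈ rootTuples O f, w (fun l => τ (ρ l)) = ∏ ρ ∈ rootTuples O f, w ρ := by
  refine Finset.prod_equiv (Equiv.piCongrRight fun _ => τ.toEquiv) (fun ρ => ?_) fun ρ _ => rfl
  simp only [mem_rootTuples hf]
  refine forall_congr' fun l => ?_
  change _ ↔ aeval (τ (ρ l)) (f l) = 0
  rw [aeval_algHom_apply, map_eq_zero_iff τ τ.injective]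

end rootTuples

section isBigO

open Asymptotics

variable {n : ℕ} {O : Type*} [CommRing O] [Algebra (ZX n) O] {a b : ℕ}

lemma HasGrowthAbove.isBigO {z : O} {A : ℝ} (h : HasGrowthAbove n z A a) :
    (fun P : PointAbove n O => P.hom z) =O[⊤] fun P => coordWeight P.coord ^ a :=
  isBigO_top.mpr ⟨A, fun P => (h P).trans_eq <| by
    rw [Real.norm_of_nonneg (pow_nonneg (zero_le_one.trans (one_le_coordWeight _)) _)]⟩

lemma hasGrowthAbove_of_isBigO {z : O}
    (h : (fun P : PointAbove n O => P.hom z) =O[⊤] fun P => coordWeight P.coord ^ a) :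
    ∃ A, HasGrowthAbove n z A a := by
  obtain ⟨A, hA⟩ := isBigO_top.mp h
  refine ⟨A, fun P => (hA P).trans_eq ?_⟩
  rw [Real.norm_of_nonneg (pow_nonneg (zero_le_one.trans (one_le_coordWeight _)) _)]

lemma isBigO_coordWeight_pow (h : a ≤ b) :
    (fun P : PointAbove n O => coordWeight P.coord ^ a) =O[⊤]
      fun P => coordWeight P.coord ^ b :=
  isBigO_top.mpr ⟨1, fun P => by
    have hw := one_le_coordWeight P.coord
    rw [one_mul, Real.norm_of_nonneg (by positivity), Real.norm_of_nonneg (by positivity)]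
    gcongr⟩

lemma HasGrowth.isBigO {p : ZX n} {A : ℝ} (h : HasGrowth p A a) :
    (fun P : PointAbove n O => P.hom (algebraMap (ZX n) O p)) =O[⊤]
      fun P => coordWeight P.coord ^ a :=
  HasGrowthAbove.isBigO (A := A) fun P => by simpa [P.hom_algebraMap] using h P.coord

lemma isBigO_hom_aeval {g : (ZX n)[X]} {δ : ℕ} (hδ : g.natDegree ≤ δ)
    (hg : ∀ k, ∃ A, HasGrowth (g.coeff k) A a) {z : O}
    (hz : (fun P : PointAbove n O => P.hom z) =O[⊤] fun P => coordWeight P.coord ^ b) :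
    (fun P : PointAbove n O => P.hom (aeval z g)) =O[⊤]
      fun P => coordWeight P.coord ^ (a + b * δ) := by
  simp only [aeval_eq_sum_range, map_sum, Algebra.smul_def, map_mul, map_pow]
  refine IsBigO.fun_sum fun k hk => ?_
  obtain ⟨A, hA⟩ := hg k
  refine (hA.isBigO.mul (hz.pow k)).trans ?_
  simp only [← pow_mul, ← pow_add]
  exact isBigO_coordWeight_pow
    (by gcongr; exact (Nat.lt_succ_iff.mp (Finset.mem_range.mp hk)).trans hδ)

lemma isBigO_hom_prod {ι : Type*} {s : Finset ι} {M : ℕ} (hs : s.card ≤ M) {w : ι → O}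
    (hw : ∀ ρ ∈ s, (fun P : PointAbove n O => P.hom (w ρ)) =O[⊤]
      fun P => coordWeight P.coord ^ a) :
    (fun P : PointAbove n O => P.hom (∏ ρ ∈ s, w ρ)) =O[⊤]
      fun P => coordWeight P.coord ^ (a * M) := by
  simp only [map_prod]
  refine (IsBigO.finsetProd hw).trans ?_
  simp only [Finset.prod_const, ← pow_mul]
  exact isBigO_coordWeight_pow (by gcongr)

end isBigO

lemma exists_algebraMap_eq_prod_rootTuples {R : Type*} [CommRing R] [IsIntegrallyClosed R]
    (K : Type*) {W : Type*} [Field K] [Field W] [DecidableEq W] [Algebra R K] [IsFractionRing R K]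
    [Algebra K W] [Algebra R W] [IsScalarTower R K W] [IsGalois K W] {k : ℕ} {f : Fin k → R[X]}
    (hf : ∀ l, (f l).Monic) (e : Fin k → ℤ) (g : R[X]) :
    ∃ r : R, algebraMap R (integralClosure R W) r =
      ∏ ρ ∈ rootTuples (integralClosure R W) f, aeval (∑ l, e l • ρ l) g := by
  refine exists_algebraMap_eq_of_forall_apply_eq K fun τ => ?_
  rw [map_prod, ← prod_rootTuples_apply_comp hf τ fun ρ => aeval (∑ l, e l • ρ l) g]
  refine Finset.prod_congr rfl fun ρ _ => ?_
  simp only [← aeval_algHom_apply, map_sum, map_zsmul]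

section lineNorm

variable {m δ : ℕ}

lemma degreeOf_le_of_algebraMap_eq_prod_rootTuples {n : ℕ} {O : Type*} [CommRing O] [IsDomain O]
    [DecidableEq O] [Algebra (ZX n) O] [FaithfulSMul (ZX n) O] [Algebra.IsIntegral (ZX n) O] {k : ℕ}
    {f : Fin k → (ZX n)[X]} (hf : ∀ l, ∃ H, 1 ≤ H ∧ IsMonicOfGrowth (f l) δ H) {e : Fin k → ℤ}
    {g : (ZX n)[X]} (hδ : g.natDegree ≤ δ) (hg : ∀ k, ∃ A, HasGrowth (g.coeff k) A δ) {Φ : ZX n}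
    (hΦ : algebraMap (ZX n) O Φ = ∏ ρ ∈ rootTuples O f, aeval (∑ l, e l • ρ l) g) (j : Fin n) :
    Φ.degreeOf j ≤ (δ + δ * δ) * δ ^ k := by
  choose H hH hfH using hf
  have hprod := isBigO_hom_prod (n := n)
    (card_rootTuples_le (O := O) fun l => (hfH l).natDegree_le) (a := δ + δ * δ)
    (w := fun ρ => aeval (∑ l, e l • ρ l) g) fun ρ hρ => by
      refine isBigO_hom_aeval hδ hg ?_
      simp only [map_sum, zsmul_eq_mul, map_mul, map_intCast]
      refine Asymptotics.IsBigO.fun_sum fun l _ => ?_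
      refine (hasGrowthAbove_of_aeval_eq_zero (hfH l).monic (hH l) (hfH l).growth
        ((mem_rootTuples fun l => (hfH l).monic).mp hρ l)).isBigO.const_mul_left _
  rw [← hΦ] at hprod
  obtain ⟨A, hA⟩ := hasGrowthAbove_of_isBigO hprod
  exact hA.hasGrowth.degreeOf_le j

lemma HasGrowth.setCoord {p : ZX (m + 1)} {A : ℝ} {a : ℕ} (h : HasGrowth p A a)
    (i : Fin (m + 1)) (c : ℤ) :
    HasGrowth (setCoord i c p) (A * (1 + |(c : ℝ)|) ^ a) a := fun x => by
  have hA := h.nonneg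
  have hw := zero_le_one.trans (one_le_coordWeight (i.removeNth x))
  have heval := RingHom.congr_fun (eval_comp_setCoord i c x) p
  rw [RingHom.comp_apply] at heval
  rw [heval, mul_assoc, ← mul_pow]
  refine (h _).trans ?_
  rw [coordWeight_insertNth]
  gcongr
  exact coordWeight_removeNth_le i x

lemma IsMonicOfGrowth.map_setCoord {F : (ZX (m + 1))[X]} {H : ℝ} (hF : IsMonicOfGrowth F δ H)
    (i : Fin (m + 1)) (c : ℤ) :
    IsMonicOfGrowth (F.map (setCoord i c)) δ (H * (1 + |(c : ℝ)|) ^ δ) where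
  monic := hF.monic.map _
  natDegree_le := natDegree_map_le.trans hF.natDegree_le
  growth k := by
    rw [coeff_map]
    exact (hF.growth k).setCoord i c

lemma exists_hasGrowth_coeff_map_scaleRoots {F : (ZX (m + 1))[X]} {H : ℝ}
    (hF : IsMonicOfGrowth F δ H) (i : Fin (m + 1)) (a d : ℤ) (k : ℕ) :
    ∃ A, HasGrowth (((F.scaleRoots (d : ZX (m + 1))).map (setCoord i a)).coeff k) A δ := by
  refine ⟨H * (1 + |(a : ℝ)|) ^ δ * |(d : ℝ)| ^ (F.natDegree - k), fun x => ?_⟩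
  have h := (hF.growth k).setCoord i a x
  rw [coeff_map, coeff_scaleRoots]
  simp only [map_mul, map_pow, map_intCast, Int.cast_mul, Int.cast_pow, Int.cast_id, abs_mul,
    abs_pow]
  rw [mul_right_comm]
  gcongr

lemma exists_int_forall_eval_ne_zero {W ι : Type*} [CommRing W] [IsDomain W] [CharZero W]
    {s : Finset ι} {P : ι → W[X]} (h : ∀ ρ ∈ s, P ρ ≠ 0) :
    ∃ a : ℤ, ∀ ρ ∈ s, (P ρ).eval (a : W) ≠ 0 := by
  have hP := Finset.prod_ne_zero_iff.mpr h
  by_contra! hall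
  refine hP (eq_zero_of_infinite_isRoot _ ?_)
  refine (Set.infinite_range_of_injective (Int.cast_injective (α := W))).mono ?_
  rintro _ ⟨a, rfl⟩
  obtain ⟨ρ, hρ, h0⟩ := hall a
  rw [Set.mem_ofPred, IsRoot.def, eval_prod]
  exact Finset.prod_eq_zero hρ h0

lemma eval_map_coordLine_scaleRoots_ne_zero {W : Type*} [Field W] [CharZero W]
    [Algebra (ZX (m + 1)) W] {F : (ZX (m + 1))[X]} (hF : F.Monic) {i : Fin (m + 1)}
    (hno : ∀ Q : W[X], (F.map (coordLine W i)).eval Q ≠ 0) {d : ℤ} (hd : d ≠ 0) (Q : W[X]) :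
    ((F.scaleRoots (d : ZX (m + 1))).map (coordLine W i)).eval Q ≠ 0 := by
  have hQ : Q = C (d : W) * (C (d : W)⁻¹ * Q) := by
    rw [← mul_assoc, ← C_mul, mul_inv_cancel₀ (Int.cast_ne_zero.mpr hd), C_1, one_mul]
  have hscale := map_eval_scaleRoots (RingHom.id W[X]) (F.map (coordLine W i))
    (v := C (d : W)) hQ
  rw [Polynomial.map_id, RingHom.id_apply, RingHom.id_apply] at hscale
  rw [map_scaleRoots _ _ _ (by simp [hF.leadingCoeff]), map_intCast, ← C_eq_intCast, hscale]
  exact mul_ne_zero (pow_ne_zero _ (C_ne_zero.mpr (Int.cast_ne_zero.mpr hd))) (hno _)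

/-- At a point above a line on which `F` has a polynomial root `q`, the tuple of the values of `q`
at the nodes lifts to roots of `F(·, Xᵢ = c l)`, and the corresponding factor vanishes. -/
lemma hom_prod_rootTuples_eq_zero {O : Type*} [CommRing O] [IsDomain O] [DecidableEq O]
    [Algebra (ZX (m + 1)) O] {F : (ZX (m + 1))[X]} (hF : F.Monic)
    (hsplit : ∀ f : (ZX (m + 1))[X], f.Monic → (f.map (algebraMap (ZX (m + 1)) O)).Splits)
    {i : Fin (m + 1)} {k : ℕ} {c e : Fin k → ℤ} {a d : ℤ} (P : PointAbove (m + 1) O) {q : ℤ[X]}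
    (hq : (F.map (lineEval i (i.removeNth P.coord)).toRingHom).eval q = 0)
    (he : ∑ l, e l * q.eval (c l) = d * q.eval a) :
    P.hom (∏ ρ ∈ rootTuples O fun l => F.map (setCoord i (c l)),
      aeval (∑ l, e l • ρ l) ((F.scaleRoots (d : ZX (m + 1))).map (setCoord i a))) = 0 := by
  have hroot (s : ℤ) : ((F.map (setCoord i s)).map (MvPolynomial.eval P.coord)).eval (q.eval s) =
      0 := by
    rw [Polynomial.map_map, eval_comp_setCoord, eval_map_eval_insertNth, hq, eval_zero]
  have hex (l : Fin k) : ∃ z : O, aeval z (F.map (setCoord i (c l))) = 0 ∧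
      P.hom z = (q.eval (c l) : ℤ) := by
    refine P.exists_root_hom_eq (hF.map _) (hsplit _ (hF.map _)) ?_
    rw [IsRoot.def, ← eq_intCast (Int.castRingHom ℂ), eval_map_apply, hroot, map_zero]
  choose ρ hρ hρq using hex
  rw [map_prod]
  refine Finset.prod_eq_zero ((mem_rootTuples fun l => hF.map _).mpr hρ) ?_
  have hval : P.hom (∑ l, e l • ρ l) = ((d * q.eval a : ℤ) : ℂ) := by
    simp only [map_sum, zsmul_eq_mul, map_mul, map_intCast, hρq, ← he, Int.cast_sum, Int.cast_mul]
  have hscale := map_eval_scaleRoots (RingHom.id ℤ)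
    ((F.map (setCoord i a)).map (MvPolynomial.eval P.coord)) (v := d) (y := q.eval a)
    (u := d * q.eval a) rfl
  rw [Polynomial.map_id, hroot, mul_zero, RingHom.id_apply] at hscale
  rw [P.hom_aeval, hval, ← eq_intCast (Int.castRingHom ℂ), eval_map_apply, Polynomial.map_map,
    map_scaleRoots _ _ _ (by simp [hF.leadingCoeff]), ← Polynomial.map_map, map_intCast,
    Int.cast_id, hscale, map_zero]

variable {W : Type*} [Field W] [Algebra (ZX (m + 1)) W]

lemma algebraMap_aeval_scaleRoots_eq {F : (ZX (m + 1))[X]} (i : Fin (m + 1)) {k : ℕ} (a d : ℤ)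
    (L : Fin k → ℤ[X]) (ρ : Fin k → integralClosure (ZX (m + 1)) W) :
    ((aeval (∑ l, (L l).eval a • ρ l) ((F.scaleRoots (d : ZX (m + 1))).map (setCoord i a)) :
        integralClosure (ZX (m + 1)) W) : W) =
      (((F.scaleRoots (d : ZX (m + 1))).map (coordLine W i)).eval
        (∑ l, C (ρ l : W) * (L l).map (Int.castRingHom W))).eval (a : W) := by
  rw [eval_eval_eq_eval_map, Polynomial.map_map, evalRingHom_intCast_comp_coordLine,
    ← Polynomial.map_map, eval_map_algebraMap, ← Subalgebra.aeval_coe]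
  congr 1
  simp [eval_finsetSum, mul_comm]

/-- The norm of `F(Y, X)` at the interpolated candidates for a polynomial root: it does not vanish
identically because `F` has no root in `W[Xᵢ]`. -/
theorem exists_forall_eval_map_lineEval_ne_zero (K : Type*) [Field K] [CharZero W] [IsAlgClosed W]
    [Algebra (ZX (m + 1)) K] [IsFractionRing (ZX (m + 1)) K] [Algebra K W]
    [IsScalarTower (ZX (m + 1)) K W] [IsGalois K W] {F : (ZX (m + 1))[X]} {H : ℝ}
    (hH : 1 ≤ H) (hF : IsMonicOfGrowth F δ H) {i : Fin (m + 1)}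
    (hno : ∀ Q : W[X], (F.map (coordLine W i)).eval Q ≠ 0) :
    ∃ Φ : ZX (m + 1), Φ ≠ 0 ∧ (∀ j, Φ.degreeOf j ≤ (δ + δ * δ) * δ ^ (δ + 1)) ∧
      ∀ x, MvPolynomial.eval x Φ ≠ 0 →
        ∀ q : ℤ[X], (F.map (lineEval i (i.removeNth x)).toRingHom).eval q ≠ 0 := by
  classical
  have : FaithfulSMul (ZX (m + 1)) W := FaithfulSMul.trans _ K W
  set c : Fin (δ + 1) → ℤ := fun l => (l : ℕ)
  obtain ⟨d, L, hd, -, hL⟩ := exists_interpolation (c := c) fun l l' h => by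
    simpa [c, Fin.val_inj] using h
  set S := rootTuples (integralClosure (ZX (m + 1)) W) fun l => F.map (setCoord i (c l))
  obtain ⟨a, ha⟩ := exists_int_forall_eval_ne_zero (s := S) fun ρ _ =>
    eval_map_coordLine_scaleRoots_ne_zero hF.monic hno hd
      (∑ l, C (ρ l : W) * (L l).map (Int.castRingHom W))
  have hsetF (l : Fin (δ + 1)) : ∃ A, 1 ≤ A ∧ IsMonicOfGrowth (F.map (setCoord i (c l))) δ A :=
    ⟨_, one_le_mul_of_one_le_of_one_le hH (one_le_pow₀ (le_add_of_nonneg_right (abs_nonneg _))),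
      hF.map_setCoord i (c l)⟩
  obtain ⟨Φ, hΦ⟩ := exists_algebraMap_eq_prod_rootTuples K (W := W)
    (f := fun l => F.map (setCoord i (c l))) (fun l => hF.monic.map _) (fun l => (L l).eval a)
    ((F.scaleRoots (d : ZX (m + 1))).map (setCoord i a))
  refine ⟨Φ, ?_, ?_, fun x hx q hq => hx ?_⟩
  · rintro rfl
    rw [map_zero] at hΦ
    obtain ⟨ρ, hρ, h0⟩ := Finset.prod_eq_zero_iff.mp hΦ.symm
    exact ha ρ hρ (by rw [← algebraMap_aeval_scaleRoots_eq, h0]; rfl)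
  · refine degreeOf_le_of_algebraMap_eq_prod_rootTuples hsetF ?_
      (exists_hasGrowth_coeff_map_scaleRoots hF i a d) hΦ
    exact natDegree_map_le.trans ((natDegree_scaleRoots _ _).trans_le hF.natDegree_le)
  · obtain ⟨P, rfl⟩ := PointAbove.exists_coord_eq (O := integralClosure (ZX (m + 1)) W) x
    have hdeg := hF.natDegree_le_of_eval_map_lineEval_eq_zero hH i hq
    have hinterp := congrArg (eval a) (hL q (Nat.lt_succ_of_le hdeg))
    have h0 := hom_prod_rootTuples_eq_zero hF.monic (fun f => splits_map_integralClosure) P hq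
      (c := c) (e := fun l => (L l).eval a) (a := a) (d := d)
      (by simpa [eval_finsetSum, mul_comm] using hinterp.symm)
    rw [← hΦ, P.hom_algebraMap] at h0
    exact_mod_cast h0

end lineNorm

/-! ### Integer values of integral elements -/

section descent

open IntermediateField

lemma finiteDimensional_of_adjoin_simple_eq_top {K M : Type*} [Field K] [Field M] [Algebra K M]
    {y : M} (hy : IsIntegral K y) (htop : K⟮y⟯ = ⊤) : FiniteDimensional K M := by
  have := adjoin.finiteDimensional hy
  rw [htop] at this
  exact Module.Finite.equiv (topEquiv (F := K) (E := M)).toLinearEquiv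

lemma map_eq_minpoly {R K M : Type*} [CommRing R] [Field K] [Algebra R K] [Ring M] [Nontrivial M]
    [Algebra K M] [Algebra R M] [IsScalarTower R K M] {f : R[X]} {y : M} (hf : f.Monic)
    (hirr : Irreducible (f.map (algebraMap R K))) (hy : aeval y f = 0) :
    f.map (algebraMap R K) = minpoly K y :=
  minpoly.eq_of_irreducible_of_monic hirr (by rwa [aeval_map_algebraMap]) (hf.map _)

lemma dvd_scaleRoots_comp {R K M : Type*} [CommRing R] [Field K] [Algebra R K] [IsFractionRing R K]
    [CommRing M] [Nontrivial M] [Algebra K M] [Algebra R M] [IsScalarTower R K M] {f : R[X]} {y : M}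
    (hf : f.Monic) (hirr : Irreducible (f.map (algebraMap R K))) (hy : aeval y f = 0) {α : M}
    {G g : R[X]} (hα : aeval α G = 0) {d : R} (hg : algebraMap R M d * α = aeval y g) :
    f ∣ (G.scaleRoots d).comp g := by
  rw [← map_dvd_map (algebraMap R K) (IsFractionRing.injective R K) hf,
    map_eq_minpoly hf hirr hy]
  refine minpoly.dvd K y ?_
  rw [aeval_map_algebraMap, aeval_comp, ← hg]
  exact scaleRoots_aeval_eq_zero hα

variable {R K M : Type*} [CommRing R] [IsDomain R] [IsIntegrallyClosed R] [Field K] [Algebra R K]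
  [IsFractionRing R K] [Field M] [Algebra K M] [Algebra R M] [IsScalarTower R K M] {f : R[X]}
  {y : M}

/-- Euler's trace form computation: multiplication by `f'(y)` carries the trace dual of `R[y]`,
hence every integral element, into `R[y]`. -/
lemma exists_aeval_derivative_mul_eq_aeval [CharZero K] (hf : f.Monic)
    (hirr : Irreducible (f.map (algebraMap R K))) (hy : aeval y f = 0) (htop : K⟮y⟯ = ⊤) {α : M}
    (hα : IsIntegral R α) : ∃ g : R[X], aeval y (derivative f) * α = aeval y g := by
  have hintegral : IsIntegral K y := IsIntegral.tower_top ⟨f, hf, hy⟩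
  have := finiteDimensional_of_adjoin_simple_eq_top hintegral htop
  have hadj : Algebra.adjoin K {y} = ⊤ := by
    rw [← adjoin_simple_toSubalgebra_of_isAlgebraic hintegral.isAlgebraic, htop, top_toSubalgebra]
  have hdual : α ∈ (Algebra.traceForm K M).dualSubmodule
      (Subalgebra.toSubmodule (Algebra.adjoin R {y})) := fun w hw => by
    have hw : IsIntegral R w := adjoin_le_integralClosure (x := y) ⟨f, hf, hy⟩ hw
    obtain ⟨r, hr⟩ := IsIntegrallyClosed.algebraMap_eq_of_integral
      (Algebra.isIntegral_trace (L := K) (hα.mul hw))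
    exact Submodule.mem_one.mpr ⟨r, hr⟩
  rw [traceForm_dualSubmodule_adjoin R K hadj ⟨f, hf, hy⟩, ← map_eq_minpoly hf hirr hy,
    derivative_map, aeval_map_algebraMap] at hdual
  obtain ⟨w, hw, rfl⟩ := hdual
  obtain ⟨g, rfl⟩ := Algebra.adjoin_singleton_eq_range_aeval R y ▸ hw
  have hne : aeval y (derivative f) ≠ 0 := by
    have h := hirr.separable.aeval_derivative_ne_zero (x := y) (by rwa [aeval_map_algebraMap])
    rwa [derivative_map, aeval_map_algebraMap] at h
  exact ⟨g, mul_inv_cancel_left₀ hne _⟩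

lemma exists_derivResultant_mul_eq_aeval [CharZero K] (hf : f.Monic)
    (hirr : Irreducible (f.map (algebraMap R K))) (hy : aeval y f = 0) (htop : K⟮y⟯ = ⊤) {α : M}
    (hα : IsIntegral R α) :
    ∃ g : R[X], algebraMap R M (derivResultant f) * α = aeval y g := by
  obtain ⟨g, hg⟩ := exists_aeval_derivative_mul_eq_aeval hf hirr hy htop hα
  obtain ⟨u, v, huv⟩ := exists_mul_add_derivative_mul_eq_C_derivResultant (f := f)
    (by simpa [hf.natDegree_map] using hirr.natDegree_pos.ne')
  refine ⟨v * g, ?_⟩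
  have hD := congrArg (aeval y) huv
  rw [map_add, map_mul, hy, zero_mul, zero_add, map_mul, aeval_C] at hD
  rw [← hD, map_mul, ← hg]
  ring

lemma exists_eval_map_eq_zero [CharZero K] {S : Type*} [CommRing S] [IsDomain S]
    [IsIntegrallyClosed S] (φ : R →+* S) (hf : f.Monic)
    (hirr : Irreducible (f.map (algebraMap R K))) (hy : aeval y f = 0) (htop : K⟮y⟯ = ⊤) {α : M}
    {G : R[X]} (hG : G.Monic) (hα : aeval α G = 0) (hD : φ (derivResultant f) ≠ 0) {s : S}
    (hs : (f.map φ).eval s = 0) : ∃ t, (G.map φ).eval t = 0 := by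
  obtain ⟨g, hg⟩ := exists_derivResultant_mul_eq_aeval hf hirr hy htop ⟨G, hG, hα⟩
  have hdvd := Polynomial.map_dvd φ (dvd_scaleRoots_comp hf hirr hy hα hg)
  rw [Polynomial.map_comp, map_scaleRoots _ _ _ (by simp [hG.leadingCoeff])] at hdvd
  have hroot := eval_eq_zero_of_dvd_of_eval_eq_zero hdvd hs
  rw [eval_comp] at hroot
  obtain ⟨t, ht, -⟩ := exists_root_of_eval_scaleRoots_eq_zero (hG.map φ) hD hroot
  exact ⟨t, ht⟩

end descent

/-! ### Polynomials generating intermediate fields -/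

section intermediate

open IntermediateField

lemma exists_coeff_minpoly_notMem_bot {K M : Type*} [Field K] [Field M] [Algebra K M]
    [FiniteDimensional K M] {y : M} (htop : K⟮y⟯ = ⊤) {M' : IntermediateField K M}
    (hM' : M' ≠ ⊥) : ∃ k, ((minpoly M' y).coeff k : M) ∉ (⊥ : IntermediateField K M) := by
  by_contra! h
  refine hM' (eq_bot_iff.mpr ?_)
  rw [← adjoin_minpoly_coeff_of_exists_primitive_element K htop M', adjoin_le_iff]
  intro c hc
  obtain ⟨k, -, rfl⟩ := mem_coeffs_iff.mp hc
  rw [coeff_map]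
  exact h k

lemma exists_map_eq_of_monic_of_dvd_map {R W : Type*} [CommRing R] [Field W] [Algebra R W]
    {f : R[X]} (hf : f.Monic) {h : W[X]} (hh : h.Monic) (hdvd : h ∣ f.map (algebraMap R W)) :
    ∃ g : (integralClosure R W)[X], g.map (algebraMap _ W) = h ∧ g.Monic ∧
      g ∣ f.map (algebraMap R (integralClosure R W)) := by
  obtain ⟨g, hg, -, hgm⟩ := lifts_and_natDegree_eq_and_monic
    (integralClosure.mem_lifts_of_monic_of_dvd_map W hf hh hdvd) hh
  refine ⟨g, hg, hgm, ?_⟩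
  rwa [← map_dvd_map (algebraMap (integralClosure R W) W) Subtype.val_injective hgm, hg,
    Polynomial.map_map, ← IsScalarTower.algebraMap_eq]

lemma map_algEquiv_dvd_map {R O : Type*} [CommRing R] [CommRing O] [Algebra R O] (τ : O ≃ₐ[R] O)
    {f : R[X]} {g : O[X]} (h : g ∣ f.map (algebraMap R O)) :
    g.map (τ : O →+* O) ∣ f.map (algebraMap R O) := by
  have hτ := Polynomial.map_dvd (τ : O →+* O) h
  rwa [Polynomial.map_map, show (τ : O →+* O).comp (algebraMap R O) = algebraMap R O from
    RingHom.ext τ.commutes] at hτ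

variable {n δ : ℕ} {K W : Type*} [Field K] [Field W] [Algebra (ZX n) K] [Algebra K W]
  [Algebra (ZX n) W] [IsScalarTower (ZX n) K W]
  {F G : (ZX n)[X]} {H : ℝ}

lemma exists_coeff_eq_apply (hF : F.Monic) {M : Type*} [Field M] [Algebra K M]
    [FiniteDimensional K M] [Algebra (ZX n) M] [IsScalarTower (ZX n) K M] (φ : M →ₐ[K] W) {y : M}
    (hy : aeval y F = 0) (htop : K⟮y⟯ = ⊤) {M' : IntermediateField K M} (hM' : M' ≠ ⊥) :
    ∃ β ∈ M', β ∉ (⊥ : IntermediateField K M) ∧ ∃ g : (integralClosure (ZX n) W)[X], g.Monic ∧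
      g ∣ F.map (algebraMap (ZX n) (integralClosure (ZX n) W)) ∧ ∃ k, (g.coeff k : W) = φ β := by
  obtain ⟨k, hk⟩ := exists_coeff_minpoly_notMem_bot htop hM'
  have hdvd : minpoly M' y ∣ (F.map (algebraMap (ZX n) K)).map (algebraMap K M') :=
    minpoly.dvd _ _ (by rwa [aeval_map_algebraMap, aeval_map_algebraMap])
  have hdvdW := Polynomial.map_dvd (φ.toRingHom.comp (algebraMap M' M)) hdvd
  have hcomp : ((φ.toRingHom.comp (algebraMap M' M)).comp (algebraMap K M')).comp
      (algebraMap (ZX n) K) = algebraMap (ZX n) W := by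
    rw [IsScalarTower.algebraMap_eq (ZX n) K W]
    exact RingHom.ext fun r => φ.commutes _
  rw [Polynomial.map_map, Polynomial.map_map, hcomp] at hdvdW
  obtain ⟨g, hg, hgm, hgdvd⟩ := exists_map_eq_of_monic_of_dvd_map hF
    ((minpoly.monic (Algebra.IsIntegral.isIntegral y)).map _) hdvdW
  refine ⟨_, ((minpoly M' y).coeff k).2, hk, g, hgm, hgdvd, k, ?_⟩
  have h := congrArg (fun p => coeff p k) hg
  simp only [coeff_map] at h
  exact h

section galois

variable [IsFractionRing (ZX n) K] [IsGalois K W] [IsAlgClosed W]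

lemma hasGrowth_coeff_of_aeval_coeff_eq_zero (hH : 1 ≤ H) (hF : IsMonicOfGrowth F δ H)
    {g : (integralClosure (ZX n) W)[X]} (hg : g.Monic)
    (hdvd : g ∣ F.map (algebraMap (ZX n) (integralClosure (ZX n) W))) {k : ℕ} (hG : G.Monic)
    (hd : G.natDegree ≤ δ) (hirr : Irreducible (G.map (algebraMap (ZX n) K)))
    (hroot : aeval (g.coeff k) G = 0) (l : ℕ) :
    HasGrowth (G.coeff l) ((2 * (4 * H) ^ δ) ^ δ) (δ * δ * δ) := by
  have : FaithfulSMul (ZX n) W := FaithfulSMul.trans (ZX n) K W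
  refine hasGrowth_coeff_of_forall_root hG hd (splits_map_integralClosure (W := W) hG)
    (one_le_pow₀ (by linarith)) (fun z hz => ?_) l
  have aeval_coe {w : integralClosure (ZX n) W} (hw : aeval w G = 0) :
      aeval (w : W) (G.map (algebraMap (ZX n) K)) = 0 := by
    have h := Subalgebra.aeval_coe _ w G
    rwa [hw, ZeroMemClass.coe_zero, ← aeval_map_algebraMap K] at h
  obtain ⟨σ, hσ⟩ := exists_algEquiv_apply_eq hirr (aeval_coe hroot) (aeval_coe hz)
  set τ := galRestrict (ZX n) K W (integralClosure (ZX n) W) σ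
  have hτ : τ (g.coeff k) = z :=
    Subtype.ext ((algebraMap_galRestrict_apply (ZX n) (B := integralClosure (ZX n) W) σ _).trans hσ)
  have hdvdτ := map_algEquiv_dvd_map τ hdvd
  have hle := natDegree_le_of_dvd hdvdτ (hF.monic.map _).ne_zero
  rw [hF.monic.natDegree_map] at hle
  have h := hasGrowthAbove_coeff_of_dvd hF.monic hH hF.growth (hg.map _)
    (hle.trans hF.natDegree_le) hdvdτ k
  rwa [coeff_map, RingHom.coe_coe, hτ] at h

/-- Some coefficient of the minimal polynomial of `y` over `M'` generates a nontrivial subextension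
of `M'`; as a coefficient of a factor of `F` it has bounded height. -/
lemma exists_irreducible_hasGrowth_aeval_eq_zero (hH : 1 ≤ H) (hF : IsMonicOfGrowth F δ H)
    (hirr : Irreducible (F.map (algebraMap (ZX n) K))) {M : Type*} [Field M] [Algebra K M]
    [Algebra (ZX n) M] [IsScalarTower (ZX n) K M] (φ : M →ₐ[K] W) {y : M} (hy : aeval y F = 0)
    (htop : K⟮y⟯ = ⊤) {M' : IntermediateField K M} (hM' : M' ≠ ⊥) :
    ∃ β ∈ M', ∃ G : (ZX n)[X], aeval β G = 0 ∧ Irreducible (G.map (algebraMap (ZX n) K)) ∧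
      2 ≤ G.natDegree ∧ IsMonicOfGrowth G (δ * δ * δ) ((2 * (4 * H) ^ δ) ^ δ) := by
  have hyint : IsIntegral K y := IsIntegral.tower_top ⟨F, hF.monic, hy⟩
  have := finiteDimensional_of_adjoin_simple_eq_top hyint htop
  obtain ⟨β, hβM', hβ, g, hgm, hgdvd, k, hgk⟩ := exists_coeff_eq_apply hF.monic φ hy htop hM'
  have hβint : IsIntegral (ZX n) β :=
    (isIntegral_algHom_iff (φ.restrictScalars (ZX n)) φ.injective).mp (hgk ▸ (g.coeff k).2)
  have hmap := minpoly.isIntegrallyClosed_eq_field_fractions' K hβint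
  have hdeg : (minpoly (ZX n) β).natDegree = (minpoly K β).natDegree := by
    rw [hmap, (minpoly.monic hβint).natDegree_map]
  have hirrβ := minpoly.irreducible (hβint.tower_top (A := K))
  have hle : (minpoly (ZX n) β).natDegree ≤ δ := by
    refine hdeg.trans_le ((minpoly.natDegree_le β).trans ?_)
    rw [← (Field.primitive_element_iff_minpoly_natDegree_eq K y).mp htop,
      ← map_eq_minpoly hF.monic hirr hy, hF.monic.natDegree_map]
    exact hF.natDegree_le
  have htwo : 2 ≤ (minpoly (ZX n) β).natDegree := by
    rw [hdeg, minpoly.two_le_natDegree_iff hβint.tower_top]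
    exact fun h => hβ (mem_bot.mpr h)
  refine ⟨β, hβM', minpoly (ZX n) β, minpoly.aeval _ _, hmap ▸ hirrβ, htwo, minpoly.monic hβint,
    by nlinarith, hasGrowth_coeff_of_aeval_coeff_eq_zero hH hF hgm hgdvd (minpoly.monic hβint) hle
      (hmap ▸ hirrβ) (k := k) ?_⟩
  refine Subtype.ext ((Subalgebra.aeval_coe _ _ _).symm.trans ?_)
  rw [hgk, ← AlgHom.restrictScalars_apply (ZX n) φ, aeval_algHom_apply, minpoly.aeval, map_zero,
    ZeroMemClass.coe_zero]

end galois

lemma map_coordLine_of_degreeOf_eq_zero {m : ℕ} {A : Type*} [CommRing A]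
    [Algebra (ZX (m + 1)) A] {i : Fin (m + 1)} {p : (ZX (m + 1))[X]}
    (hp : ∀ k, (p.coeff k).degreeOf i = 0) :
    p.map (coordLine A i) = (p.map (algebraMap (ZX (m + 1)) A)).map C := by
  ext1 k
  simp only [coeff_map, coordLine_of_degreeOf_eq_zero (hp k)]

lemma exists_adjoinRoot_ringHom_comp_eq {R K L : Type*} [CommRing R] [IsDomain R] [Field K]
    [Algebra R K] [IsFractionRing R K] [Field L] {φ : R →+* L} (hφ : Function.Injective φ)
    {f : R[X]} {a : L} (ha : (f.map φ).eval a = 0) :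
    ∃ ψ : AdjoinRoot (f.map (algebraMap R K)) →+* L,
      (ψ.comp (AdjoinRoot.of _)).comp (algebraMap R K) = φ := by
  have hκ : (IsFractionRing.lift hφ : K →+* L).comp (algebraMap R K) = φ :=
    RingHom.ext fun r => IsFractionRing.lift_algebraMap hφ r
  refine ⟨AdjoinRoot.lift (IsFractionRing.lift hφ) a ?_, ?_⟩
  · rw [eval₂_map, hκ, ← eval_map, ha]
  · rw [AdjoinRoot.lift_comp_of, hκ]

lemma exists_eval_map_comp_coordLine_eq_zero {m : ℕ} {W : Type*} (L : Type*) [Field W]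
    [IsAlgClosed W] [Algebra (ZX (m + 1)) W] [FaithfulSMul (ZX (m + 1)) W] [CommRing L]
    [Algebra W[X] L] {i : Fin (m + 1)} {f : (ZX (m + 1))[X]} (hf : f.degree ≠ 0)
    (hdeg : ∀ k, (f.coeff k).degreeOf i = 0) :
    ∃ a : L, (f.map ((algebraMap W[X] L).comp (coordLine W i))).eval a = 0 := by
  obtain ⟨a, ha⟩ := IsAlgClosed.exists_aeval_eq_zero W f hf
  refine ⟨algebraMap W[X] L (C a), ?_⟩
  rw [← Polynomial.map_map, map_coordLine_of_degreeOf_eq_zero hdeg, eval_map_apply, eval_map_apply,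
    eval_map_algebraMap, ha, map_zero, map_zero]

lemma exists_eval_map_coordLine_eq_zero {m : ℕ} {K W : Type*} [Field K] [Field W] [IsAlgClosed W]
    [Algebra (ZX (m + 1)) K] [IsFractionRing (ZX (m + 1)) K] [Algebra (ZX (m + 1)) W]
    [FaithfulSMul (ZX (m + 1)) W] {i : Fin (m + 1)} {G₀ G : (ZX (m + 1))[X]}
    (hirr : Irreducible (G₀.map (algebraMap (ZX (m + 1)) K)))
    (hdeg : ∀ k, (G₀.coeff k).degreeOf i = 0) (hG : G.Monic)
    {β : AdjoinRoot (G₀.map (algebraMap (ZX (m + 1)) K))}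
    (hβ : aeval β (G.map (algebraMap (ZX (m + 1)) K)) = 0) :
    ∃ b : W[X], (G.map (coordLine W i)).eval b = 0 := by
  obtain ⟨L, _, _, _⟩ : ∃ (L : Type _) (_ : Field L) (_ : Algebra W[X] L), IsFractionRing W[X] L :=
    ⟨FractionRing W[X], inferInstance, inferInstance, inferInstance⟩
  have hdegree : G₀.degree ≠ 0 := by
    rw [← degree_map_eq_of_injective (IsFractionRing.injective _ K)]
    exact hirr.degree_pos.ne'
  obtain ⟨a, ha⟩ := exists_eval_map_comp_coordLine_eq_zero (W := W) L hdegree hdeg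
  have hinj : Function.Injective ((algebraMap W[X] L).comp (coordLine W i)) :=
    (IsFractionRing.injective W[X] L).comp (coordLine_injective i)
  obtain ⟨ψ, hψ⟩ := exists_adjoinRoot_ringHom_comp_eq (K := K) hinj ha
  have hroot : (G.map (coordLine W i)).eval₂ (algebraMap W[X] L) (ψ β) = 0 := by
    rw [eval₂_map, ← hψ, ← eval₂_map, ← hom_eval₂, ← AdjoinRoot.algebraMap_eq, ← aeval_def, hβ,
      map_zero]
  obtain ⟨b, hb⟩ := IsIntegrallyClosed.algebraMap_eq_of_integral (R := W[X])
    ⟨G.map (coordLine W i), hG.map _, hroot⟩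
  refine ⟨b, IsFractionRing.injective W[X] L ?_⟩
  rw [← eval_map_apply, hb, map_zero, eval_map, hroot]

end intermediate

/-! ### Specialising a coordinate of the generator -/

section specialise

open IntermediateField

lemma nonempty_adjoinRoot_algEquiv {K W : Type*} [Field K] [Field W] [Algebra K W] {p q : K[X]}
    (hp : p.Monic) (hq : q.Monic) (hpirr : Irreducible p) (hqirr : Irreducible q)
    (hdeg : p.natDegree = q.natDegree) {α β : W} (hα : aeval α p = 0) (hβ : aeval β q = 0)
    (h : α ∈ K⟮β⟯) : Nonempty (AdjoinRoot p ≃ₐ[K] AdjoinRoot q) := by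
  have hαint : IsIntegral K α := ⟨p, hp, hα⟩
  have hβint : IsIntegral K β := ⟨q, hq, hβ⟩
  have hpmin := minpoly.eq_of_irreducible_of_monic hpirr hα hp
  have hqmin := minpoly.eq_of_irreducible_of_monic hqirr hβ hq
  have := adjoin.finiteDimensional hβint
  have heq : K⟮α⟯ = K⟮β⟯ := eq_of_le_of_finrank_eq (adjoin_simple_le_iff.mpr h) <| by
    rw [adjoin.finrank hαint, adjoin.finrank hβint, ← hpmin, ← hqmin, hdeg]
  rw [hpmin, hqmin]
  exact ⟨(adjoinRootEquivAdjoin K hαint).trans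
    ((equivOfEq heq).trans (adjoinRootEquivAdjoin K hβint).symm)⟩

lemma degreeOf_setCoord {m : ℕ} (i : Fin (m + 1)) (a : ℤ) (p : ZX (m + 1)) :
    (setCoord i a p).degreeOf i = 0 := by
  by_contra h
  obtain ⟨j, -, hj⟩ := Finset.mem_image.mp
    (MvPolynomial.vars_rename _ _ (MvPolynomial.mem_vars_iff_degreeOf_ne_zero.mpr h))
  exact Fin.succAbove_ne i j hj

lemma setCoord_ne_zero {m : ℕ} {i : Fin (m + 1)} {a : ℤ} {p : ZX (m + 1)}
    (h : substCoord i a p ≠ 0) : setCoord i a p ≠ 0 := fun h0 =>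
  h (MvPolynomial.rename_injective _ Fin.succAbove_right_injective (h0.trans (map_zero _).symm))

variable {m δ : ℕ} {K W : Type*} [Field K] [Field W] [Algebra (ZX (m + 1)) K]
  {F G : (ZX (m + 1))[X]} {H : ℝ} {i : Fin (m + 1)} {a : ℤ}

lemma eval_map_substCoord_ne_zero (hG : G.Monic) (htwo : 2 ≤ G.natDegree)
    (hirr : Irreducible ((G.map (setCoord i a)).map (algebraMap (ZX (m + 1)) K))) (r : ZX m) :
    (G.map (substCoord i a).toRingHom).eval r ≠ 0 := by
  intro hr
  have hroot : ((G.map (setCoord i a)).map (algebraMap (ZX (m + 1)) K)).IsRoot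
      (algebraMap (ZX (m + 1)) K (MvPolynomial.rename i.succAbove r)) := by
    rw [IsRoot, eval_map_apply, setCoord, ← Polynomial.map_map]
    refine (congrArg _ (eval_map_apply
      (f := (MvPolynomial.rename i.succAbove).toRingHom) r)).trans ?_
    rw [hr, map_zero, map_zero]
  have hdeg := degree_eq_one_of_irreducible_of_root hirr hroot
  rw [(hG.map _).degree_map, hG.degree_map, degree_eq_natDegree hG.ne_zero] at hdeg
  norm_cast at hdeg
  omega

variable [IsFractionRing (ZX (m + 1)) K] [Algebra K W] [Algebra (ZX (m + 1)) W]
  [IsScalarTower (ZX (m + 1)) K W] [IsGalois K W]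

lemma irreducible_map_setCoord_and_exists_root (hG : G.Monic) {b : W[X]}
    (hb : (G.map (coordLine W i)).eval b = 0) (ha : substCoord i a (derivResultant G) ≠ 0)
    (hirr : Irreducible (G.map (algebraMap (ZX (m + 1)) K))) {β : W} (hβ : aeval β G = 0) :
    Irreducible ((G.map (setCoord i a)).map (algebraMap (ZX (m + 1)) K)) ∧
      ∃ α ∈ K⟮β⟯, aeval α (G.map (setCoord i a)) = 0 := by
  have : CharZero K := charZero_of_injective_algebraMap (IsFractionRing.injective (ZX (m + 1)) K)
  have hmapX : (G.map (coordLine K i)).map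
      (evalRingHom (algebraMap (ZX (m + 1)) K (MvPolynomial.X i))) =
      G.map (algebraMap (ZX (m + 1)) K) := by
    rw [Polynomial.map_map, evalRingHom_X_comp_coordLine]
  have hmapa : (G.map (coordLine K i)).map (evalRingHom (a : K)) =
      (G.map (setCoord i a)).map (algebraMap (ZX (m + 1)) K) := by
    rw [Polynomial.map_map, evalRingHom_intCast_comp_coordLine, ← Polynomial.map_map]
  have hc : (derivResultant (G.map (coordLine K i))).eval (a : K) ≠ 0 := by
    rw [derivResultant_map _ hG, ← coe_evalRingHom, ← RingHom.comp_apply,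
      evalRingHom_intCast_comp_coordLine, RingHom.comp_apply, Ne,
      map_eq_zero_iff _ (IsFractionRing.injective (ZX (m + 1)) K)]
    exact setCoord_ne_zero ha
  have h := irreducible_and_exists_root_mem_adjoin (hG.map (coordLine K i)) (b := b)
    (by rwa [Polynomial.map_map, mapRingHom_comp_coordLine]) hc (hmapX ▸ hirr) (β := β)
    (by rwa [hmapX, aeval_map_algebraMap])
  simpa only [hmapa, aeval_map_algebraMap] using h

lemma eval_map_coordLine_ne_zero (hF : F.Monic) [IsAlgClosed W]
    (hirr : Irreducible (F.map (algebraMap (ZX (m + 1)) K)))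
    (hgen : ∀ G : (ZX (m + 1))[X], Irreducible (G.map (algebraMap (ZX (m + 1)) K)) →
      Nonempty (AdjoinRoot (G.map (algebraMap (ZX (m + 1)) K)) ≃ₐ[K]
        AdjoinRoot (F.map (algebraMap (ZX (m + 1)) K))) → ∃ k, (G.coeff k).degreeOf i ≠ 0)
    (Q : W[X]) : (F.map (coordLine W i)).eval Q ≠ 0 := by
  intro hQ
  have : CharZero K := charZero_of_injective_algebraMap (IsFractionRing.injective (ZX (m + 1)) K)
  obtain ⟨c, -, hc⟩ := exists_injective_substCoord_ne_zero i
    (derivResultant_ne_zero_of_irreducible_map _ hF hirr) le_rfl 1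
  obtain ⟨β, hβ⟩ := IsAlgClosed.exists_aeval_eq_zero W _ hirr.degree_pos.ne'
  obtain ⟨hirr', α, hα, hαroot⟩ := irreducible_map_setCoord_and_exists_root hF hQ (hc 0).2 hirr
    (by rwa [aeval_map_algebraMap] at hβ)
  obtain ⟨k, hk⟩ := hgen _ hirr' <| nonempty_adjoinRoot_algEquiv ((hF.map _).map _) (hF.map _) hirr'
    hirr (by simp only [(hF.map _).natDegree_map, hF.natDegree_map])
    (by rwa [aeval_map_algebraMap]) hβ hα
  exact hk (by rw [coeff_map, degreeOf_setCoord])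

/-- The height of the polynomial `E` in `exists_eval_map_removeNth_eq_zero`; the first factor
accounts for the specialisation of a coordinate at an integer of absolute value at most
`2 * (δ ^ 3) ^ 2 + 1`. -/
def projectionHeight (δ : ℕ) (H : ℝ) : ℝ :=
  (1 + (δ * δ * δ * (2 * (δ * δ * δ)) + 1 : ℕ)) ^ (δ * δ * δ) * (2 * (4 * H) ^ δ) ^ δ

lemma exists_aeval_map_setCoord_eq_zero [IsAlgClosed W] (hH : 1 ≤ H) (hF : IsMonicOfGrowth F δ H)
    (hirr : Irreducible (F.map (algebraMap (ZX (m + 1)) K))) {M : Type*} [Field M] [Algebra K M]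
    [Algebra (ZX (m + 1)) M] [IsScalarTower (ZX (m + 1)) K M] (φ : M →ₐ[K] W) {y : M}
    (hy : aeval y F = 0) (htop : K⟮y⟯ = ⊤) {M' : IntermediateField K M} (hM' : M' ≠ ⊥)
    {G₀ : (ZX (m + 1))[X]} (hirr₀ : Irreducible (G₀.map (algebraMap (ZX (m + 1)) K)))
    (e : AdjoinRoot (G₀.map (algebraMap (ZX (m + 1)) K)) ≃ₐ[K] M')
    (hdeg : ∀ k, (G₀.coeff k).degreeOf i = 0) :
    ∃ (G : (ZX (m + 1))[X]) (a : ℤ) (α : M), G.Monic ∧ aeval α (G.map (setCoord i a)) = 0 ∧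
      IsMonicOfGrowth (G.map (substCoord i a).toRingHom) (δ * δ * δ) (projectionHeight δ H) ∧
      substCoord i a (derivResultant G) ≠ 0 ∧
      ∀ r, (G.map (substCoord i a).toRingHom).eval r ≠ 0 := by
  have : CharZero K := charZero_of_injective_algebraMap (IsFractionRing.injective (ZX (m + 1)) K)
  have : FaithfulSMul (ZX (m + 1)) W := FaithfulSMul.trans (ZX (m + 1)) K W
  obtain ⟨β, hβM', G, hβ, hGirr, htwo, hG⟩ :=
    exists_irreducible_hasGrowth_aeval_eq_zero hH hF hirr φ hy htop hM'
  have hβ' : aeval (⟨β, hβM'⟩ : M') (G.map (algebraMap (ZX (m + 1)) K)) = 0 := by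
    rw [← map_eq_zero M'.val, ← aeval_algHom_apply, IntermediateField.coe_val,
      aeval_map_algebraMap, hβ]
  obtain ⟨b, hb⟩ := exists_eval_map_coordLine_eq_zero (W := W) (β := e.symm ⟨β, hβM'⟩) hirr₀ hdeg
    hG.monic <| by rw [← AlgEquiv.coe_toAlgHom, aeval_algHom_apply, hβ', map_zero]
  have hH' : 1 ≤ (2 * (4 * H) ^ δ) ^ δ :=
    one_le_pow₀ (by linarith [one_le_pow₀ (n := δ) (show 1 ≤ 4 * H by linarith)])
  obtain ⟨c, -, hc⟩ := exists_injective_substCoord_ne_zero i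
    (derivResultant_ne_zero_of_irreducible_map _ hG.monic hGirr)
    (hG.degreeOf_derivResultant_le hH' i) 1
  obtain ⟨hirr', α, hα, hαroot⟩ := irreducible_map_setCoord_and_exists_root (β := φ β) hG.monic hb
    (hc 0).2 hGirr <| by
      rw [← aeval_map_algebraMap K, aeval_algHom_apply, aeval_map_algebraMap, hβ, map_zero]
  rw [← Set.image_singleton, ← adjoin_map] at hα
  obtain ⟨α, -, rfl⟩ := hα
  refine ⟨G, c 0, α, hG.monic, (map_eq_zero φ).mp ?_, hG.map_substCoord i (mod_cast (hc 0).1),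
    (hc 0).2, eval_map_substCoord_ne_zero hG.monic htwo hirr'⟩
  rw [← aeval_map_algebraMap K, ← aeval_algHom_apply, aeval_map_algebraMap]
  exact hαroot

/-- An integer value of a root of `F` forces an integer value of the root of `G` in the intermediate
field, and after specialising the coordinate that `G` does not involve this only depends on the
remaining coordinates. -/
lemma exists_eval_map_removeNth_eq_zero [IsAlgClosed W] (hH : 1 ≤ H) (hF : IsMonicOfGrowth F δ H)
    (hirr : Irreducible (F.map (algebraMap (ZX (m + 1)) K))) {M : Type*} [Field M] [Algebra K M]
    [Algebra (ZX (m + 1)) M] [IsScalarTower (ZX (m + 1)) K M] (φ : M →ₐ[K] W) {y : M}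
    (hy : aeval y F = 0) (htop : K⟮y⟯ = ⊤) {M' : IntermediateField K M} (hM' : M' ≠ ⊥)
    {G₀ : (ZX (m + 1))[X]} (hirr₀ : Irreducible (G₀.map (algebraMap (ZX (m + 1)) K)))
    (e : AdjoinRoot (G₀.map (algebraMap (ZX (m + 1)) K)) ≃ₐ[K] M')
    (hdeg : ∀ k, (G₀.coeff k).degreeOf i = 0) :
    ∃ E : (ZX m)[X], IsMonicOfGrowth E (δ * δ * δ) (projectionHeight δ H) ∧
      derivResultant E ≠ 0 ∧ (∀ r, E.eval r ≠ 0) ∧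
      ∀ x : Fin (m + 1) → ℤ, MvPolynomial.eval x (derivResultant F) ≠ 0 →
        (∃ s, (F.map (MvPolynomial.eval x)).eval s = 0) →
        ∃ t, (E.map (MvPolynomial.eval (i.removeNth x))).eval t = 0 := by
  obtain ⟨G, a, α, hG, hα, hgrowth, hne, hroots⟩ :=
    exists_aeval_map_setCoord_eq_zero hH hF hirr φ hy htop hM' hirr₀ e hdeg
  refine ⟨G.map (substCoord i a).toRingHom, hgrowth, ?_, hroots, fun x hx ⟨s, hs⟩ => ?_⟩
  · rwa [derivResultant_map _ hG]
  · have : CharZero K := charZero_of_injective_algebraMap (IsFractionRing.injective (ZX (m + 1)) K)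
    obtain ⟨t, ht⟩ := exists_eval_map_eq_zero (MvPolynomial.eval x) hF.monic hirr hy htop
      (hG.map (setCoord i a)) hα hx hs
    refine ⟨t, ?_⟩
    rwa [Polynomial.map_map, eval_comp_setCoord, ← evalRingHom_comp_lineEval,
      ← eval_comp_substCoord, ← Polynomial.map_map] at ht

end specialise

/-! ### Genuine extensions -/

section genuine

open IntermediateField

attribute [local instance] MvPolynomial.algebraMvPolynomial

lemma isFractionRing_of_isLocalization {R S T : Type*} [CommRing R] [IsDomain R] [CommRing S]
    [IsDomain S] [Algebra R S] [FaithfulSMul R S] [Field T] [Algebra S T] [IsFractionRing S T]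
    [Algebra R T] [IsScalarTower R S T] (M : Submonoid R) [IsLocalization M S] :
    IsFractionRing R T := by
  have : FaithfulSMul R T := FaithfulSMul.trans R S T
  refine IsFractionRing.of_field R T fun z => ?_
  obtain ⟨p, q, -, rfl⟩ := IsFractionRing.div_surjective (A := S) z
  obtain ⟨⟨p', c⟩, hp⟩ := IsLocalization.surj M p
  obtain ⟨⟨q', d⟩, hq⟩ := IsLocalization.surj M q
  have hne (c : M) : algebraMap S T (algebraMap R S c) ≠ 0 :=
    ((IsLocalization.map_units S c).map _).ne_zero
  refine ⟨p' * d, q' * c, ?_⟩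
  simp only [IsScalarTower.algebraMap_apply R S T, map_mul, ← hp, ← hq]
  field_simp [hne c, hne d]

instance isFractionRing_rf (n : ℕ) : IsFractionRing (ZX n) (RF n) :=
  isFractionRing_of_isLocalization (S := MvPolynomial (Fin n) ℚ)
    ((nonZeroDivisors ℤ).map MvPolynomial.C)

lemma toFrac_eq_map {n : ℕ} (F : (ZX n)[X]) : toFrac F = F.map (algebraMap (ZX n) (RF n)) := by
  rw [toFrac, toFracQ, toQ, Polynomial.map_map]
  rfl

lemma irreducible_toFrac {n : ℕ} {F : (ZX n)[X]} (hF : F.Monic) (hirr : Irreducible F) :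
    Irreducible (toFrac F) :=
  toFrac_eq_map F ▸ hF.irreducible_iff_irreducible_map_fraction_map.mp hirr

lemma degX_eq_zero_iff {n : ℕ} {F : (ZX n)[X]} {i : Fin n} :
    degX F i = 0 ↔ ∀ k, (F.coeff k).degreeOf i = 0 := by
  rw [degX, ← bot_eq_zero, Finset.sup_eq_bot_iff]
  refine forall_congr' fun k => ⟨fun h => ?_, fun h _ => h⟩
  by_cases hk : k ∈ F.support
  · exact h hk
  · rw [notMem_support_iff.mp hk, MvPolynomial.degreeOf_zero, bot_eq_zero]

lemma adjoin_simple_apply_root_eq_top {K M : Type*} [Field K] [Field M] [Algebra K M] {p : K[X]}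
    (e : AdjoinRoot p ≃ₐ[K] M) : K⟮e (AdjoinRoot.root p)⟯ = ⊤ := by
  refine eq_top_iff.mpr fun z _ => ?_
  obtain ⟨q, hq⟩ := AdjoinRoot.mk_surjective (e.symm z)
  rw [← e.apply_symm_apply z, ← hq, ← AdjoinRoot.aeval_eq, ← AlgEquiv.coe_toAlgHom,
    ← aeval_algHom_apply]
  exact algebra_adjoin_le_adjoin _ _ (aeval_mem_adjoin_singleton K _)

variable {m δ : ℕ} {F : (ZX (m + 1))[X]} {H : ℝ}

lemma eval_map_coordLine_ne_zero_of_genuine (hF : F.Monic) (hirr : Irreducible F)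
    (hgen : GenuineExtOfQ (toQ F)) (i : Fin (m + 1)) (Q : (AlgebraicClosure (RF (m + 1)))[X]) :
    (F.map (coordLine (AlgebraicClosure (RF (m + 1))) i)).eval Q ≠ 0 := by
  refine eval_map_coordLine_ne_zero (K := RF (m + 1)) hF
    (toFrac_eq_map F ▸ irreducible_toFrac hF hirr) (fun G hG e => ?_) Q
  have hpos := (hgen G (toFrac_eq_map G ▸ hG) (by
    rwa [← toFrac, toFrac_eq_map, toFrac_eq_map])).2 i
  contrapose! hpos
  exact (degX_eq_zero_iff.mpr hpos).le

lemma exists_forall_eval_map_lineEval_ne_zero_of_genuine (hH : 1 ≤ H) (hF : IsMonicOfGrowth F δ H)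
    (hirr : Irreducible F) (hgen : GenuineExtOfQ (toQ F)) (i : Fin (m + 1)) :
    ∃ Φ : ZX (m + 1), Φ ≠ 0 ∧ (∀ j, Φ.degreeOf j ≤ (δ + δ * δ) * δ ^ (δ + 1)) ∧
      ∀ x, MvPolynomial.eval x Φ ≠ 0 →
        ∀ q : ℤ[X], (F.map (lineEval i (i.removeNth x)).toRingHom).eval q ≠ 0 :=
  exists_forall_eval_map_lineEval_ne_zero (RF (m + 1)) hH hF
    (eval_map_coordLine_ne_zero_of_genuine hF.monic hirr hgen i)

lemma exists_projection_of_not_stronglyGenuine (hH : 1 ≤ H) (hF : IsMonicOfGrowth F δ H)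
    (hirr : Irreducible F) (hgen : ¬ StronglyGenuineExtOfQ (toQ F)) :
    ∃ (i : Fin (m + 1)) (E : (ZX m)[X]),
      IsMonicOfGrowth E (δ * δ * δ) (projectionHeight δ H) ∧
      derivResultant E ≠ 0 ∧ (∀ r, E.eval r ≠ 0) ∧
      ∀ x : Fin (m + 1) → ℤ, MvPolynomial.eval x (derivResultant F) ≠ 0 →
        (∃ s, (F.map (MvPolynomial.eval x)).eval s = 0) →
        ∃ t, (E.map (MvPolynomial.eval (i.removeNth x))).eval t = 0 := by
  simp only [StronglyGenuineExtOfQ, IsStronglyGenuineExt, IsGenuineExt, not_forall] at hgen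
  obtain ⟨M, _, _, ⟨e⟩, M', hM', G₀, hirr₀, ⟨e'⟩, hpos⟩ := hgen
  have hdeg₀ : 0 < G₀.natDegree := by
    have := hirr₀.natDegree_pos
    rw [toFrac_eq_map] at this
    exact this.trans_le natDegree_map_le
  obtain ⟨i, hi⟩ : ∃ i, degX G₀ i = 0 := by
    contrapose! hpos
    exact ⟨hdeg₀, fun i => Nat.pos_of_ne_zero (hpos i)⟩
  have hirrK := toFrac_eq_map F ▸ irreducible_toFrac hF.monic hirr
  have hroot : aeval (AdjoinRoot.root (toFracQ (toQ F))) (toFracQ (toQ F)) = 0 := by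
    rw [AdjoinRoot.aeval_eq, AdjoinRoot.mk_self]
  let : Algebra (ZX (m + 1)) M :=
    ((algebraMap (RF (m + 1)) M).comp (algebraMap (ZX (m + 1)) (RF (m + 1)))).toAlgebra
  have : IsScalarTower (ZX (m + 1)) (RF (m + 1)) M := IsScalarTower.of_algebraMap_eq' rfl
  have : Module.Finite (RF (m + 1)) M := by
    have := (AdjoinRoot.powerBasis (f := toFracQ (toQ F))
      (irreducible_toFrac hF.monic hirr).ne_zero).finite
    exact Module.Finite.equiv e.toLinearEquiv
  rw [toFrac_eq_map] at hirr₀ e'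
  obtain ⟨E, hE⟩ := exists_eval_map_removeNth_eq_zero hH hF hirrK
    (IsAlgClosed.lift : M →ₐ[RF (m + 1)] AlgebraicClosure (RF (m + 1)))
    (y := e (AdjoinRoot.root _))
    (by rw [← aeval_map_algebraMap (RF (m + 1)), ← toFrac_eq_map, toFrac, ← AlgEquiv.coe_toAlgHom,
      aeval_algHom_apply, hroot, map_zero])
    (adjoin_simple_apply_root_eq_top e) hM' hirr₀ e' (degX_eq_zero_iff.mp hi)
  exact ⟨i, E, hE⟩

end genuine

/-! ### Counting -/

section count

lemma le_projectionHeight {δ : ℕ} (hδ : δ ≠ 0) {H : ℝ} (hH : 1 ≤ H) :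
    H ≤ projectionHeight δ H := by
  have hle : 1 ≤ 4 * H := by linarith
  have hpow : 1 ≤ (4 * H) ^ δ := one_le_pow₀ hle
  calc H ≤ 4 * H := by linarith
    _ ≤ (4 * H) ^ δ := le_self_pow₀ hle hδ
    _ ≤ 2 * (4 * H) ^ δ := by linarith
    _ ≤ (2 * (4 * H) ^ δ) ^ δ := le_self_pow₀ (by linarith) hδ
    _ ≤ projectionHeight δ H :=
      le_mul_of_one_le_left (by positivity) (one_le_pow₀ (le_add_of_nonneg_right (by positivity)))

lemma exists_log_projectionHeight_le (δ : ℕ) :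
    ∃ κ : ℝ, ∀ H, 3 ≤ H → Real.log (projectionHeight δ H) ≤ κ * Real.log H := by
  set K : ℝ := (1 + (δ * δ * δ * (2 * (δ * δ * δ)) + 1 : ℕ)) ^ (δ * δ * δ) * (2 * 4 ^ δ) ^ δ
  have hK : 0 < K := by positivity
  refine ⟨|Real.log K| + (δ * δ : ℕ), fun H hH => ?_⟩
  have heq : projectionHeight δ H = K * H ^ (δ * δ) := by
    rw [projectionHeight, mul_pow 4 H, ← mul_assoc (2 : ℝ), mul_pow (2 * 4 ^ δ), ← pow_mul H,
      ← mul_assoc]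
  exact heq ▸ log_mul_pow_le hK hH _

lemma exists_card_le_of_projection (m δ δ' : ℕ) : ∃ C : ℝ, 0 ≤ C ∧
    ∀ (F : (ZX (m + 1))[X]) (E : (ZX m)[X]) (H H' : ℝ), 3 ≤ H → H ≤ H' →
      IsMonicOfGrowth F δ H → IsMonicOfGrowth E δ' H' → derivResultant E ≠ 0 →
      (∀ r, E.eval r ≠ 0) → ∀ N : ℕ, 1 ≤ N → N ≤ H → ∀ i, ∀ S ⊆ intBox (m + 1) N,
      (∀ x ∈ S, MvPolynomial.eval x (derivResultant F) ≠ 0 ∧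
        (∀ q : ℤ[X], (F.map (lineEval i (i.removeNth x)).toRingHom).eval q ≠ 0) ∧
        (∃ s, (F.map (MvPolynomial.eval x)).eval s = 0) ∧
        ∃ t, (E.map (MvPolynomial.eval (i.removeNth x))).eval t = 0) →
      (S.card : ℝ) ≤ C * Real.log H' ^ 2 * Real.log H ^ 2 * N ^ m := by
  classical
  obtain ⟨C₁, hC₁, hproj⟩ := exists_newRootBound m δ'
  obtain ⟨C₂, hC₂, hfiber⟩ := exists_card_le_of_not_isNewRoot_lineEval m δ
  refine ⟨C₁ * C₂, mul_nonneg hC₁ hC₂,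
    fun F E H H' hH hHH' hF hE hDE hEroot N hN hNH i S hS hx => ?_⟩
  set T : Finset (Fin m → ℤ) := S.image i.removeNth
  have hT : (T.card : ℝ) * √N ≤ C₁ * Real.log H' ^ 2 * N ^ m := by
    refine hproj E H' (hH.trans hHH') hE hDE N hN (hNH.trans hHH') T ?_ ?_
    · exact Finset.image_subset_iff.mpr fun x hxS => removeNth_mem_intBox i (hS hxS)
    · refine Finset.forall_mem_image.mpr fun x hxS => ?_
      obtain ⟨-, -, -, t, ht⟩ := hx x hxS
      exact ⟨t, ht, fun r hr => absurd hr (hEroot r)⟩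
  have hST : (S.card : ℝ) ≤ T.card * (C₂ * Real.log H ^ 2 * √N) := by
    refine card_le_card_mul_of_fiber_le i (fun x hxS => Finset.mem_image_of_mem _ hxS)
      fun x' hx' Z hZ => ?_
    obtain ⟨x, hxS, rfl⟩ := Finset.mem_image.mp hx'
    refine hfiber F H hH hF N hN hNH i _ (removeNth_mem_intBox i (hS hxS))
      (fun q hq => (hx x hxS).2.1 q hq.1) Z fun s hs => ?_
    obtain ⟨hD, -, ⟨t, ht⟩, -⟩ := hx _ (hZ s hs)
    refine ⟨hS (hZ s hs), hD, t, ht, fun r hr =>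
      ((hx x hxS).2.1 (lineEval i (i.removeNth x) r) ?_).elim⟩
    exact (eval_map_apply (f := (lineEval i (i.removeNth x)).toRingHom) r).trans
      ((congrArg _ hr).trans (map_zero _))
  calc (S.card : ℝ) ≤ T.card * (C₂ * Real.log H ^ 2 * √N) := hST
    _ = T.card * √N * (C₂ * Real.log H ^ 2) := by ring
    _ ≤ C₁ * Real.log H' ^ 2 * N ^ m * (C₂ * Real.log H ^ 2) := by gcongr
    _ = _ := by ring

theorem exists_card_le_of_genuine (m δ : ℕ) : ∃ C : ℝ, 0 ≤ C ∧
    ∀ (F : (ZX (m + 1))[X]) (H : ℝ), 3 ≤ H → IsMonicOfGrowth F δ H → Irreducible F →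
      GenuineExtOfQ (toQ F) → ¬ StronglyGenuineExtOfQ (toQ F) →
      ∀ N : ℕ, 1 ≤ N → N ≤ H → ∀ S ⊆ intBox (m + 1) N,
      (∀ x ∈ S, ∃ y, (F.map (MvPolynomial.eval x)).eval y = 0) →
      (S.card : ℝ) ≤ C * Real.log H ^ 4 * N ^ m := by
  obtain ⟨κ, hκ⟩ := exists_log_projectionHeight_le δ
  obtain ⟨C, hC, hcount⟩ := exists_card_le_of_projection m δ (δ * δ * δ)
  set c : ℝ := 3 ^ (m + 1) *
    ((m + 1 : ℕ) * (δ * (2 * δ) + (δ + δ * δ) * δ ^ (δ + 1) : ℕ))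
  refine ⟨c + C * κ ^ 2, by positivity, fun F H hH hF hirr hgen hngen N hN hNH S hS hroot => ?_⟩
  have hH₁ : 1 ≤ H := by linarith
  have hδ : δ ≠ 0 := (hF.monic.natDegree_pos.mpr hirr.ne_one |>.trans_le hF.natDegree_le).ne'
  obtain ⟨i, E, hE, hDE, hEroot, hproj⟩ :=
    exists_projection_of_not_stronglyGenuine hH₁ hF hirr hngen
  obtain ⟨Φ, hΦ, hΦdeg, hline⟩ :=
    exists_forall_eval_map_lineEval_ne_zero_of_genuine hH₁ hF hirr hgen i
  have hD : derivResultant F ≠ 0 := derivResultant_ne_zero_of_irreducible_map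
    (algebraMap _ (FractionRing (ZX (m + 1)))) hF.monic
    (hF.monic.irreducible_iff_irreducible_map_fraction_map.mp hirr)
  have hdeg (j) : (derivResultant F * Φ).degreeOf j ≤ δ * (2 * δ) + (δ + δ * δ) * δ ^ (δ + 1) :=
    (MvPolynomial.degreeOf_mul_le j _ _).trans
      (add_le_add (hF.degreeOf_derivResultant_le hH₁ j) (hΦdeg j))
  have hH' := le_projectionHeight hδ hH₁
  have hgood := hcount F E H _ hH hH' hF hE hDE hEroot N hN hNH i
    {x ∈ S | MvPolynomial.eval x (derivResultant F * Φ) ≠ 0} ((Finset.filter_subset _ _).trans hS)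
    fun x hx => by
      obtain ⟨hxS, hne⟩ := Finset.mem_filter.mp hx
      rw [map_mul, mul_ne_zero_iff] at hne
      exact ⟨hne.1, hline x hne.2, hroot x hxS, hproj x hne.1 (hroot x hxS)⟩
  have hlog' : 0 ≤ Real.log (projectionHeight δ H) := Real.log_nonneg (hH₁.trans hH')
  have hL : 1 ≤ Real.log H ^ 4 := one_le_pow₀ (one_le_log hH)
  calc (S.card : ℝ) ≤ c * N ^ m + _ :=
        card_le_add_card_filter_eval_ne_zero (mul_ne_zero hD hΦ) hdeg hN hS
    _ ≤ c * Real.log H ^ 4 * N ^ m + C * (κ * Real.log H) ^ 2 * Real.log H ^ 2 * N ^ m := by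
        refine add_le_add ?_ (hgood.trans ?_)
        · gcongr
          exact le_mul_of_one_le_right (by positivity) hL
        · gcongr
          exact hκ H hH
    _ = _ := by ring

end count

/-! ### Points of bounded height -/

section height

variable {n D : ℕ}

lemma abs_prod_pow_le_coordWeight_pow (x : Fin n → ℤ) {s : Fin n → ℕ} (hs : ∀ i, s i ≤ D) :
    |∏ i, (x i : ℝ) ^ s i| ≤ coordWeight x ^ D := by
  rw [coordWeight, Finset.abs_prod, ← Finset.prod_pow]
  refine Finset.prod_le_prod (fun i _ => abs_nonneg _) fun i _ => ?_
  rw [abs_pow]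
  calc |(x i : ℝ)| ^ s i ≤ (1 + |(x i : ℝ)|) ^ s i := by gcongr; linarith
    _ ≤ (1 + |(x i : ℝ)|) ^ D :=
      pow_le_pow_right₀ (le_add_of_nonneg_right (abs_nonneg _)) (hs i)

lemma card_support_le_pow_of_degreeOf_le {R : Type*} [CommSemiring R] {p : MvPolynomial (Fin n) R}
    (hp : ∀ i, p.degreeOf i ≤ D) : p.support.card ≤ (D + 1) ^ n := by
  have hmem : ∀ s ∈ p.support, ⇑s ∈ Fintype.piFinset fun _ : Fin n => Finset.range (D + 1) :=
    fun s hs => Fintype.mem_piFinset.mpr fun i =>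
      Finset.mem_range_succ_iff.mpr ((MvPolynomial.monomial_le_degreeOf i hs).trans (hp i))
  calc p.support.card ≤ (Fintype.piFinset fun _ : Fin n => Finset.range (D + 1)).card :=
        Finset.card_le_card_of_injOn _ hmem DFunLike.coe_injective.injOn
    _ = (D + 1) ^ n := by simp

lemma abs_coeff_le_mvNorm (p : ZX n) (s : Fin n →₀ ℕ) : |((p.coeff s : ℤ) : ℝ)| ≤ mvNorm p := by
  have hle : (p.coeff s).natAbs ≤ mvNorm p := by
    by_cases hs : s ∈ p.support
    · exact Finset.le_sup (f := fun s => (p.coeff s).natAbs) hs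
    · simp [MvPolynomial.notMem_support_iff.mp hs]
  rw [← Int.cast_abs, Int.abs_eq_natAbs]
  exact_mod_cast hle

lemma hasGrowth_of_degreeOf_le {p : ZX n} (hp : ∀ i, p.degreeOf i ≤ D) :
    HasGrowth p ((D + 1 : ℕ) ^ n * mvNorm p) D := by
  intro x
  have hw : 0 ≤ coordWeight x ^ D := pow_nonneg (zero_le_one.trans (one_le_coordWeight x)) D
  rw [MvPolynomial.eval_eq']
  push_cast
  calc |∑ s ∈ p.support, ((p.coeff s : ℤ) : ℝ) * ∏ i, (x i : ℝ) ^ s i|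
      ≤ ∑ s ∈ p.support, |((p.coeff s : ℤ) : ℝ) * ∏ i, (x i : ℝ) ^ s i| :=
        Finset.abs_sum_le_sum_abs _ _
    _ ≤ ∑ _ ∈ p.support, (mvNorm p : ℝ) * coordWeight x ^ D := by
        refine Finset.sum_le_sum fun _ hs => ?_
        rw [abs_mul]
        gcongr
        · exact abs_coeff_le_mvNorm p _
        · exact abs_prod_pow_le_coordWeight_pow x fun i =>
            (MvPolynomial.monomial_le_degreeOf i hs).trans (hp i)
    _ = (p.support.card : ℝ) * (mvNorm p * coordWeight x ^ D) := by
        rw [Finset.sum_const, nsmul_eq_mul]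
    _ ≤ ((D : ℝ) + 1) ^ n * (mvNorm p * coordWeight x ^ D) := by
        gcongr
        exact_mod_cast card_support_le_pow_of_degreeOf_le hp
    _ = _ := by ring

variable (F : (ZX n)[X])

lemma mvNorm_coeff_le_polyNorm (k : ℕ) : mvNorm (F.coeff k) ≤ polyNorm F := by
  by_cases hk : k ∈ F.support
  · exact Finset.le_sup (f := fun k => mvNorm (F.coeff k)) hk
  · simp [notMem_support_iff.mp hk, mvNorm]

lemma totalDegree_coeff_le_totalDeg (k : ℕ) : (F.coeff k).totalDegree ≤ totalDeg F := by
  by_cases hk : k ∈ F.support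
  · exact (Nat.le_add_left _ k).trans
      (Finset.le_sup (f := fun k => k + (F.coeff k).totalDegree) hk)
  · simp [notMem_support_iff.mp hk]

lemma natDegree_le_totalDeg : F.natDegree ≤ totalDeg F := by
  rcases eq_or_ne F 0 with rfl | hF
  · simp
  · exact (Nat.le_add_right _ _).trans
      (Finset.le_sup (f := fun k => k + (F.coeff k).totalDegree)
        (natDegree_mem_support_of_nonzero hF))

variable {F}

lemma one_le_polyNorm (hF : F.Monic) : 1 ≤ polyNorm F := by
  have hle := (abs_coeff_le_mvNorm (F.coeff F.natDegree) 0).trans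
    (Nat.cast_le.mpr (mvNorm_coeff_le_polyNorm F _))
  rw [hF.coeff_natDegree, MvPolynomial.coeff_zero_one, Int.cast_one, abs_one] at hle
  exact_mod_cast hle

lemma isMonicOfGrowth_of_monic (hF : F.Monic) {H : ℝ}
    (hH : ((totalDeg F + 1 : ℕ) : ℝ) ^ n * polyNorm F ≤ H) :
    IsMonicOfGrowth F (totalDeg F) H where
  monic := hF
  natDegree_le := natDegree_le_totalDeg F
  growth k x := by
    have hw : 0 ≤ coordWeight x := zero_le_one.trans (one_le_coordWeight x)
    refine (hasGrowth_of_degreeOf_le (fun i => (MvPolynomial.degreeOf_le_totalDegree _ i).trans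
      (totalDegree_coeff_le_totalDeg F k)) x).trans ?_
    gcongr
    refine le_trans ?_ hH
    gcongr
    exact mvNorm_coeff_le_polyNorm F k

lemma NFB_le {B M : ℝ}
    (h : ∀ S ⊆ intBox n ⌊B⌋₊, (∀ x ∈ S, ∃ y, (F.map (MvPolynomial.eval x)).eval y = 0) →
      (S.card : ℝ) ≤ M) : (NFB F B : ℝ) ≤ M := by
  set Z : Set (Fin n → ℤ) := {x | (∀ i, |(x i : ℝ)| ≤ B) ∧
    ∃ y : ℤ, (F.map (MvPolynomial.eval x)).eval y = 0}
  have hsub : Z ⊆ intBox n ⌊B⌋₊ := fun x hx => mem_intBox.mpr fun j => by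
    rw [Int.abs_eq_natAbs]
    refine Int.ofNat_le.mpr (Nat.le_floor ?_)
    rw [Nat.cast_natAbs, Int.cast_abs]
    exact hx.1 j
  have hfin : Z.Finite := (intBox n ⌊B⌋₊).finite_toSet.subset hsub
  rw [NFB, Set.ncard_eq_toFinset_card Z hfin]
  exact h _ (fun x hx => hsub (hfin.mem_toFinset.mp hx)) fun x hx => (hfin.mem_toFinset.mp hx).2

end height

lemma log_mul_mul_le {K x y : ℝ} (hK : 1 ≤ K) (hx : 3 ≤ x) (hy : 3 ≤ y) :
    Real.log (K * (x * y)) ≤ (Real.log K + 2) * (Real.log x * Real.log y) := by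
  have hlogK : 0 ≤ Real.log K := Real.log_nonneg hK
  have hlogx := one_le_log hx
  have hlogy := one_le_log hy
  have hprod : 1 ≤ Real.log x * Real.log y := one_le_mul_of_one_le_of_one_le hlogx hlogy
  rw [Real.log_mul (by positivity) (by positivity), Real.log_mul (by positivity) (by positivity)]
  calc Real.log K + (Real.log x + Real.log y)
      ≤ Real.log K * (Real.log x * Real.log y) +
          (Real.log x * Real.log y + Real.log x * Real.log y) := by
        gcongr
        · exact le_mul_of_one_le_right hlogK hprod
        · exact le_mul_of_one_le_right (by linarith) hlogy
        · exact le_mul_of_one_le_left (by linarith) hlogx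
    _ = _ := by ring

theorem statement4_general (m D : ℕ) : ∃ C : ℝ, 0 < C ∧ ∀ F : (ZX (m + 1))[X],
    F.Monic → Irreducible F → GenuineExtOfQ (toQ F) → ¬ StronglyGenuineExtOfQ (toQ F) →
      totalDeg F = D → ∀ B : ℝ, 1 ≤ B →
        (NFB F B : ℝ) ≤
          C * Real.log ((polyNorm F : ℝ) + 2) ^ 4 * B ^ m * Real.log (B + 2) ^ 4 := by
  obtain ⟨c, hc, hcount⟩ := exists_card_le_of_genuine m D
  set K : ℝ := (D + 1 : ℕ) ^ (m + 1)
  have hK : 1 ≤ K := one_le_pow₀ (by simp)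
  have hlogK : 0 ≤ Real.log K := Real.log_nonneg hK
  refine ⟨(c + 1) * (Real.log K + 2) ^ 4, by positivity, ?_⟩
  intro F hF hirr hgen hngen hD B hB
  have hP : (3 : ℝ) ≤ polyNorm F + 2 := by
    exact_mod_cast Nat.add_le_add_right (one_le_polyNorm hF) 2
  have hB₂ : 3 ≤ B + 2 := by linarith
  have hH : K * polyNorm F ≤ K * ((polyNorm F + 2) * (B + 2)) := by
    gcongr
    nlinarith
  have hBH : B + 2 ≤ K * ((polyNorm F + 2) * (B + 2)) :=
    (le_mul_of_one_le_left (by linarith) (by linarith)).trans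
      (le_mul_of_one_le_left (by positivity) hK)
  have hfloor : (⌊B⌋₊ : ℝ) ≤ B := Nat.floor_le (by linarith)
  have hlog := log_mul_mul_le hK hP hB₂
  have hlog₀ : 0 ≤ Real.log (K * ((polyNorm F + 2) * (B + 2))) := Real.log_nonneg (by linarith)
  have : 0 ≤ Real.log ((polyNorm F : ℝ) + 2) := Real.log_nonneg (by linarith)
  have : 0 ≤ Real.log (B + 2) := Real.log_nonneg (by linarith)
  refine NFB_le fun S hS hroot => ?_
  calc (S.card : ℝ) ≤ c * Real.log (K * ((polyNorm F + 2) * (B + 2))) ^ 4 * ⌊B⌋₊ ^ m :=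
        hcount F _ (by linarith) (hD ▸ isMonicOfGrowth_of_monic hF (by rw [hD]; exact hH)) hirr hgen
          hngen _ (Nat.le_floor (by simpa using hB)) (by linarith) S hS hroot
    _ ≤ (c + 1) * ((Real.log K + 2) *
          (Real.log ((polyNorm F : ℝ) + 2) * Real.log (B + 2))) ^ 4 * B ^ m := by
        gcongr
        linarith
    _ = _ := by ring

theorem statement4 (n : ℕ) (hn : 2 ≤ n) :
    ∃ e : ℕ, 1 ≤ e ∧ ∀ D : ℕ, ∃ C : ℝ, 0 < C ∧
      ∀ F : Polynomial (MvPolynomial (Fin n) ℤ),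
        F.Monic → 2 ≤ F.natDegree → IsGenuinePoly F → ¬ IsStronglyGenuinePoly F →
        totalDeg F = D →
        ∀ B : ℝ, 1 ≤ B →
          (NFB F B : ℝ) ≤
            C * Real.log ((polyNorm F : ℝ) + 2) ^ e * B ^ (n - 1) *
              Real.log (B + 2) ^ (2 * e) := by
  obtain ⟨m, rfl⟩ : ∃ m, n = m + 1 := ⟨n - 1, by lia⟩
  refine ⟨4, by norm_num, fun D => ?_⟩
  obtain ⟨C, hC, hcount⟩ := statement4_general m D
  refine ⟨C, hC, fun F hF _ ⟨habs, hgen⟩ hngen hD B hB => ?_⟩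
  have : 0 ≤ Real.log ((polyNorm F : ℝ) + 2) := Real.log_nonneg (by linarith)
  refine (hcount F hF (hF.irreducible_of_irreducible_map _ F habs) hgen
    (fun h => hngen ⟨habs, h⟩) hD B hB).trans ?_
  rw [Nat.add_sub_cancel]
  gcongr
  · exact one_le_log (by linarith)
  · norm_num
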